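/- arXiv:1602.01630 — 2 statements merged into one kernel-verified Lean document; each statement's English description precedes it below -/
import Mathlib

section
/- For every integer n ≥ 2, the set Γₙ of real algebraic integers of degree n, together with the function N(α) = H(α)^n, forms a regular system: there exist constants c₅ > 0 and c₁₅ > 0, depending only on n, such that for every interval I ⊆ [-1/2, 1/2] of positive length and every T > c₁₅·|I|^{-n}, there exist t elements γ₁, …, γ_t ∈ Γₙ ∩ I satisfying: (1) H(γᵢ)^n ≤ T for all 1 ≤ i ≤ t; (2) |γᵢ - γⱼ| > T^{-1} for all 1 ≤ i < j ≤ t; and (3) t > c₅·T·|I|. -/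
open Polynomial

section Helpers

open MeasureTheory

/-- Product formula for the absolute value of a real polynomial. -/
lemma abs_eval_eq_prod (p : ℝ[X]) (x : ℝ) :
    |p.eval x| = |p.leadingCoeff| *
      (((p.map (algebraMap ℝ ℂ)).roots.map (fun r => ‖(x : ℂ) - r‖)).prod) := by
  have hs := IsAlgClosed.splits (p.map (algebraMap ℝ ℂ))
  have h1 := hs.eval_eq_prod_roots (x : ℂ)
  have h2 : (p.map (algebraMap ℝ ℂ)).eval (x : ℂ) = ((p.eval x : ℝ) : ℂ) := by
    have := Polynomial.eval_map_algebraMap (B := ℂ) p (x : ℂ)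
    rw [this]
    exact Polynomial.aeval_algebraMap_apply_eq_algebraMap_eval (A := ℂ) x p
  rw [h2] at h1
  have h3 := congrArg norm h1
  rw [Complex.norm_real, Real.norm_eq_abs, norm_mul] at h3
  rw [h3]
  congr 1
  · rw [Polynomial.leadingCoeff_map]; simp
  · have h4 := Multiset.prod_hom ((p.map (algebraMap ℝ ℂ)).roots.map (fun r => (x : ℂ) - r))
      (normHom : ℂ →*₀ ℝ)
    rw [Multiset.map_map] at h4
    exact h4.symm

lemma card_roots_le (p : ℝ[X]) :
    Multiset.card (p.map (algebraMap ℝ ℂ)).roots ≤ p.natDegree :=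
  (Polynomial.card_roots' _).trans (Polynomial.natDegree_map_le)

/-- Outside a small set, `x` is far from all complex roots. -/
lemma far_from_roots (p : ℝ[X]) (δ : ℝ) (hδ : 0 ≤ δ) :
    ∃ B : Set ℝ, volume B ≤ ENNReal.ofReal (2 * δ * p.natDegree) ∧
      ∀ x, x ∉ B → ∀ r ∈ (p.map (algebraMap ℝ ℂ)).roots, δ ≤ ‖(x : ℂ) - r‖ := by
  classical
  set R := (p.map (algebraMap ℝ ℂ)).roots with hR
  refine ⟨⋃ r ∈ R.toFinset, Set.Icc (r.re - δ) (r.re + δ), ?_, ?_⟩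
  · refine (measure_biUnion_finset_le _ _).trans ?_
    simp only [Real.volume_Icc]
    have : ∀ r ∈ R.toFinset, ENNReal.ofReal (r.re + δ - (r.re - δ)) = ENNReal.ofReal (2 * δ) := by
      intro r _; congr 1; ring
    rw [Finset.sum_congr rfl this, Finset.sum_const, nsmul_eq_mul]
    have hc : R.toFinset.card ≤ p.natDegree := (Multiset.toFinset_card_le R).trans (card_roots_le p)
    rw [ENNReal.ofReal_mul (p := 2 * δ) (by positivity), mul_comm, ENNReal.ofReal_natCast]
    gcongr
  · intro x hx r hr
    by_contra h
    push Not at h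
    apply hx
    simp only [Set.mem_iUnion, Multiset.mem_toFinset]
    refine ⟨r, hr, ?_⟩
    have h1 := (Complex.abs_re_le_norm ((x : ℂ) - r)).trans h.le
    rw [Complex.sub_re, Complex.ofReal_re, abs_le] at h1
    constructor <;> linarith [h1.1, h1.2]

lemma poly_good (p : ℝ[X]) (D : ℕ) (hD : p.natDegree ≤ D) (η : ℝ) (hη : 0 < η)
    (a b : ℝ) (hab : a < b) (y : ℝ) (hy : y ∈ Set.Icc a b) (hpy : 1 ≤ |p.eval y|) :
    volume {x | x ∈ Set.Icc a b ∧ |p.eval x| < ((1 + 1 / η) ^ D)⁻¹} ≤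
      ENNReal.ofReal (2 * D * η * (b - a)) := by
  obtain ⟨B, hB, hB2⟩ := far_from_roots p (η * (b - a)) (by nlinarith)
  refine (measure_mono (t := B) ?_).trans (hB.trans ?_)
  · rintro x ⟨hx, hlt⟩
    by_contra hxB
    have hfar := hB2 x hxB
    have h1 : |p.eval y| ≤ (1 + 1 / η) ^ D * |p.eval x| := by
      rw [abs_eval_eq_prod p y, abs_eval_eq_prod p x]
      have h2 : (((p.map (algebraMap ℝ ℂ)).roots.map (fun r => ‖(y : ℂ) - r‖)).prod) ≤
          (((p.map (algebraMap ℝ ℂ)).roots.map (fun r => (1 + 1 / η) * ‖(x : ℂ) - r‖)).prod) := by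
        apply Multiset.prod_map_le_prod_map₀
        · intro r _; positivity
        · intro r hr
          have h3 := hfar r hr
          have h4 : ‖(y : ℂ) - r‖ ≤ ‖(y : ℂ) - x‖ + ‖(x : ℂ) - r‖ := norm_sub_le_norm_sub_add_norm_sub _ _ _
          have h5 : ‖(y : ℂ) - x‖ ≤ b - a := by
            rw [← Complex.ofReal_sub, Complex.norm_real, Real.norm_eq_abs, abs_le]
            constructor <;> linarith [hx.1, hx.2, hy.1, hy.2]
          have h6 : b - a ≤ 1 / η * ‖(x : ℂ) - r‖ := by
            rw [one_div, ← div_eq_inv_mul, le_div_iff₀ hη]; linarith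
          nlinarith
      rw [Multiset.prod_map_mul, Multiset.map_const', Multiset.prod_replicate] at h2
      have h7 : (1 + 1 / η) ^ (Multiset.card (p.map (algebraMap ℝ ℂ)).roots) ≤ (1 + 1 / η) ^ D := by
        apply pow_le_pow_right₀
        · have : 0 < 1 / η := by positivity
          linarith
        · exact (card_roots_le p).trans hD
      have h8 : 0 ≤ (((p.map (algebraMap ℝ ℂ)).roots.map (fun r => ‖(x : ℂ) - r‖)).prod) := by
        apply Multiset.prod_nonneg
        intro z hz
        rw [Multiset.mem_map] at hz
        obtain ⟨r, _, rfl⟩ := hz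
        positivity
      calc _ ≤ |p.leadingCoeff| * ((1 + 1 / η) ^ D * (((p.map (algebraMap ℝ ℂ)).roots.map (fun r => ‖(x : ℂ) - r‖)).prod)) := by
            gcongr
            exact h2.trans (by gcongr)
        _ = _ := by ring
    have hpos : 0 < (1 + 1 / η) ^ D := by positivity
    have h9 : (1 + 1 / η) ^ D * |p.eval x| < (1 + 1 / η) ^ D * ((1 + 1 / η) ^ D)⁻¹ :=
      mul_lt_mul_of_pos_left hlt hpos
    rw [mul_inv_cancel₀ hpos.ne'] at h9
    linarith
  · apply ENNReal.ofReal_le_ofReal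
    have : (p.natDegree : ℝ) ≤ D := by exact_mod_cast hD
    have h0 : 0 < η * (b - a) := by
      have : 0 < b - a := by linarith
      positivity
    nlinarith

lemma poly_large (p : ℝ[X]) (hp : 1 ≤ |p.leadingCoeff|) (δ a b : ℝ) (hδ : 0 < δ)
    (hab : 2 * δ * p.natDegree < b - a) :
    ∃ x ∈ Set.Icc a b, δ ^ p.natDegree ≤ |p.eval x| := by
  obtain ⟨B, hB, hB2⟩ := far_from_roots p δ hδ.le
  have : ¬ (Set.Icc a b ⊆ B) := by
    intro h
    have h1 := (measure_mono (μ := volume) h).trans hB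
    rw [Real.volume_Icc, ENNReal.ofReal_le_ofReal_iff (by positivity)] at h1
    linarith
  obtain ⟨x, hx, hxB⟩ := Set.not_subset.1 this
  refine ⟨x, hx, ?_⟩
  rw [abs_eval_eq_prod]
  have hcard : Multiset.card (p.map (algebraMap ℝ ℂ)).roots = p.natDegree := by
    rw [← (IsAlgClosed.splits (p.map (algebraMap ℝ ℂ))).natDegree_eq_card_roots]
    exact Polynomial.natDegree_map _
  have h2 : (((p.map (algebraMap ℝ ℂ)).roots.map (fun _ => δ)).prod) ≤
      (((p.map (algebraMap ℝ ℂ)).roots.map (fun r => ‖(x : ℂ) - r‖)).prod) := by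
    apply Multiset.prod_map_le_prod_map₀
    · intro r _; exact hδ.le
    · intro r hr; exact hB2 x hxB r hr
  rw [Multiset.map_const', Multiset.prod_replicate, hcard] at h2
  have : 0 < δ ^ p.natDegree := by positivity
  nlinarith

/-- Among finitely many intervals one can select a subfamily with the same union and overlap at
most two; consequence for measures. -/
lemma cover_two {ι : Type*} (t : Finset ι) (l r : ι → ℝ) (a b κ : ℝ) (hκ : 0 ≤ κ)
    (E : Set ℝ) (hl : ∀ i ∈ t, a ≤ l i) (hr : ∀ i ∈ t, r i ≤ b) (hlr : ∀ i ∈ t, l i < r i)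
    (hab : a ≤ b)
    (hE : ∀ i ∈ t, volume (E ∩ Set.Ioo (l i) (r i)) ≤ ENNReal.ofReal (κ * (r i - l i))) :
    volume (E ∩ ⋃ i ∈ t, Set.Ioo (l i) (r i)) ≤ ENNReal.ofReal (2 * κ * (b - a)) := by
  classical
  induction t using Finset.strongInduction with
  | H t ih =>
  by_cases hred : ∃ k ∈ t, Set.Ioo (l k) (r k) ⊆ ⋃ i ∈ t.erase k, Set.Ioo (l i) (r i)
  · obtain ⟨k, hk, hsub⟩ := hred
    have heq : (⋃ i ∈ t, Set.Ioo (l i) (r i)) = ⋃ i ∈ t.erase k, Set.Ioo (l i) (r i) := by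
      apply Set.Subset.antisymm
      · intro x hx
        simp only [Set.mem_iUnion] at hx
        obtain ⟨i, hi, hx⟩ := hx
        by_cases hik : i = k
        · subst hik; exact hsub hx
        · simp only [Set.mem_iUnion]
          exact ⟨i, Finset.mem_erase.2 ⟨hik, hi⟩, hx⟩
      · exact Set.biUnion_subset_biUnion_left (fun i hi => Finset.mem_of_mem_erase hi)
    rw [heq]
    have hm : ∀ i ∈ t.erase k, i ∈ t := fun i hi => Finset.mem_of_mem_erase hi
    exact ih _ (Finset.erase_ssubset hk) (fun i hi => hl i (hm i hi)) (fun i hi => hr i (hm i hi))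
      (fun i hi => hlr i (hm i hi)) (fun i hi => hE i (hm i hi))
  · push Not at hred
    -- overlap at most two
    have hov : ∀ x, (t.filter (fun i => x ∈ Set.Ioo (l i) (r i))).card ≤ 2 := by
      intro x
      by_contra hc
      push Not at hc
      set u := t.filter (fun i => x ∈ Set.Ioo (l i) (r i)) with hu
      have hne : u.Nonempty := Finset.card_pos.1 (by omega)
      obtain ⟨p, hp, hpmin⟩ := Finset.exists_min_image u l hne
      obtain ⟨q, hq, hqmax⟩ := Finset.exists_max_image u r hne
      have : ∃ k ∈ u, k ≠ p ∧ k ≠ q := by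
        by_contra hcon
        push Not at hcon
        have hsub : u ⊆ {p, q} := by
          intro k hk
          by_cases h : k = p
          · simp [h]
          · simp [hcon k hk h]
        have := (Finset.card_le_card hsub).trans Finset.card_le_two
        omega
      obtain ⟨k, hk, hkp, hkq⟩ := this
      have hkt : k ∈ t := (Finset.mem_filter.1 hk).1
      apply hred k hkt
      intro y hy
      simp only [Set.mem_iUnion]
      have hpx := (Finset.mem_filter.1 hp)
      have hqx := (Finset.mem_filter.1 hq)
      have h1 := hpmin k hk
      have h2 := hqmax k hk
      rcases le_or_gt y x with hyx | hyx
      · exact ⟨p, Finset.mem_erase.2 ⟨hkp.symm, hpx.1⟩, lt_of_le_of_lt h1 hy.1,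
          lt_of_le_of_lt hyx hpx.2.2⟩
      · exact ⟨q, Finset.mem_erase.2 ⟨hkq.symm, hqx.1⟩, hqx.2.1.trans hyx,
          lt_of_lt_of_le hy.2 h2⟩
    have hsum : ∑ i ∈ t, volume (Set.Ioo (l i) (r i)) ≤ 2 * ENNReal.ofReal (b - a) := by
      have h1 : ∑ i ∈ t, volume (Set.Ioo (l i) (r i)) =
          ∫⁻ x, ∑ i ∈ t, (Set.Ioo (l i) (r i)).indicator 1 x := by
        rw [lintegral_finsetSum]
        · apply Finset.sum_congr rfl
          intro i _
          rw [lintegral_indicator_one measurableSet_Ioo]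
        · intro i _
          exact (measurable_const.indicator measurableSet_Ioo)
      rw [h1]
      calc _ ≤ ∫⁻ x, (Set.Icc a b).indicator (fun _ => 2) x := by
            apply lintegral_mono
            intro x
            by_cases hx : x ∈ Set.Icc a b
            · simp only [Set.indicator_of_mem hx]
              simp only [Set.indicator_apply, Pi.one_apply]
              rw [Finset.sum_boole]
              exact_mod_cast hov x
            · simp only [Set.indicator_of_notMem hx]
              rw [nonpos_iff_eq_zero]
              apply Finset.sum_eq_zero
              intro i hi
              apply Set.indicator_of_notMem
              intro hxi
              exact hx ⟨(hl i hi).trans hxi.1.le, hxi.2.le.trans (hr i hi)⟩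
        _ = _ := by
            rw [lintegral_indicator_const measurableSet_Icc, Real.volume_Icc]
    calc volume (E ∩ ⋃ i ∈ t, Set.Ioo (l i) (r i)) 
        ≤ volume (⋃ i ∈ t, (E ∩ Set.Ioo (l i) (r i))) := by
          apply measure_mono
          rw [Set.inter_iUnion₂]
      _ ≤ ∑ i ∈ t, volume (E ∩ Set.Ioo (l i) (r i)) := measure_biUnion_finset_le _ _
      _ ≤ ∑ i ∈ t, ENNReal.ofReal κ * volume (Set.Ioo (l i) (r i)) := by
          apply Finset.sum_le_sum
          intro i hi
          rw [Real.volume_Ioo, ← ENNReal.ofReal_mul hκ]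
          exact hE i hi
      _ = ENNReal.ofReal κ * ∑ i ∈ t, volume (Set.Ioo (l i) (r i)) := by rw [Finset.mul_sum]
      _ ≤ ENNReal.ofReal κ * (2 * ENNReal.ofReal (b - a)) := by gcongr
      _ = _ := by
          rw [ENNReal.ofReal_mul (by positivity), ENNReal.ofReal_mul (by norm_num)]
          simp only [ENNReal.ofReal_ofNat]
          ring

/-- Covering lemma, arbitrary families. -/
lemma cover_arb (a b κ : ℝ) (hκ : 0 ≤ κ) (hab : a ≤ b)
    (E : Set ℝ) (hE0 : E ⊆ Set.Icc a b)
    (h : ∀ x ∈ E, x ∈ Set.Ioo a b → ∃ l r : ℝ, a ≤ l ∧ r ≤ b ∧ l < x ∧ x < r ∧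
      volume (E ∩ Set.Ioo l r) ≤ ENNReal.ofReal (κ * (r - l))) :
    volume E ≤ ENNReal.ofReal (2 * κ * (b - a)) := by
  classical
  set E' := E ∩ Set.Ioo a b with hE'
  have hEE' : volume E ≤ volume E' := by
    have : E ⊆ E' ∪ {a, b} := by
      intro x hx
      have h1 := hE0 hx
      by_cases hxa : x = a
      · right; simp [hxa]
      by_cases hxb : x = b
      · right; simp [hxb]
      left
      exact ⟨hx, lt_of_le_of_ne h1.1 (Ne.symm hxa), lt_of_le_of_ne h1.2 hxb⟩
    refine (measure_mono this).trans ((measure_union_le _ _).trans ?_)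
    rw [(Set.toFinite ({a, b} : Set ℝ)).measure_zero, add_zero]
  refine hEE'.trans ?_
  choose! l r h1 h2 h3 h4 h5 using h
  obtain ⟨c, hcs, hc, hcov⟩ := TopologicalSpace.countable_cover_nhdsWithin (s := E')
    (f := fun x => Set.Ioo (l x) (r x)) (by
      intro x hx
      exact mem_nhdsWithin_of_mem_nhds (Ioo_mem_nhds (h3 x hx.1 hx.2) (h4 x hx.1 hx.2)))
  haveI := hc.to_subtype
  have hcov2 : E' ⊆ ⋃ (t : Finset c), (E ∩ ⋃ i ∈ t, Set.Ioo (l i) (r i)) := by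
    intro x hx
    have := hcov hx
    simp only [Set.mem_iUnion] at this
    obtain ⟨i, hi, hxi⟩ := this
    simp only [Set.mem_iUnion, Set.mem_inter_iff]
    exact ⟨{⟨i, hi⟩}, hx.1, ⟨i, hi⟩, by simp, hxi⟩
  refine (measure_mono hcov2).trans ?_
  rw [Directed.measure_iUnion]
  · apply iSup_le
    intro t
    exact cover_two t (fun i => l i) (fun i => r i) a b κ hκ E
      (fun i _ => h1 i (hcs i.2).1 (hcs i.2).2) (fun i _ => h2 i (hcs i.2).1 (hcs i.2).2)
      (fun i _ => (h3 i (hcs i.2).1 (hcs i.2).2).trans (h4 i (hcs i.2).1 (hcs i.2).2)) hab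
      (fun i _ => h5 i (hcs i.2).1 (hcs i.2).2)
  · apply Monotone.directed_le
    intro s t hst
    apply Set.inter_subset_inter_right
    exact Set.biUnion_subset_biUnion_left hst

lemma component_left (f : ℝ → ℝ) (hf : Continuous f) (a x : ℝ) (hax : a < x) (hfx : f x < 1) :
    ∃ l, a ≤ l ∧ l < x ∧ (∀ y, l < y → y ≤ x → f y < 1) ∧ (a < l → 1 ≤ f l) := by
  by_cases hne : ({y | y ∈ Set.Icc a x ∧ 1 ≤ f y} : Set ℝ).Nonempty
  · have hc : IsCompact ({y | y ∈ Set.Icc a x ∧ 1 ≤ f y} : Set ℝ) :=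
      isCompact_Icc.inter_right (isClosed_le continuous_const hf)
    have hm := hc.sSup_mem hne
    set l := sSup ({y | y ∈ Set.Icc a x ∧ 1 ≤ f y} : Set ℝ) with hl
    refine ⟨l, hm.1.1, lt_of_le_of_ne hm.1.2 ?_, ?_, fun _ => hm.2⟩
    · intro h
      have := hm.2
      rw [h] at this
      linarith
    · intro y hy hyx
      by_contra hcon
      push Not at hcon
      have : y ≤ l := le_csSup hc.bddAbove ⟨⟨hm.1.1.trans hy.le, hyx⟩, hcon⟩
      linarith
  · refine ⟨a, le_rfl, hax, ?_, fun h => absurd h (lt_irrefl _)⟩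
    intro y hy hyx
    by_contra hcon
    push Not at hcon
    exact hne ⟨y, ⟨hy.le, hyx⟩, hcon⟩

lemma component_right (f : ℝ → ℝ) (hf : Continuous f) (b x : ℝ) (hax : x < b) (hfx : f x < 1) :
    ∃ r, r ≤ b ∧ x < r ∧ (∀ y, y < r → x ≤ y → f y < 1) ∧ (r < b → 1 ≤ f r) := by
  obtain ⟨l, h1, h2, h3, h4⟩ := component_left (fun y => f (-y)) (hf.comp continuous_neg) (-b) (-x)
    (by linarith) (by simpa using hfx)
  refine ⟨-l, by linarith, by linarith, ?_, ?_⟩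
  · intro y hy hxy
    have := h3 (-y) (by linarith) (by linarith)
    simpa using this
  · intro h
    exact h4 (by linarith)

section KM

variable {σ : Type*} [PartialOrder σ]

/-- Comparability with all elements of a finite set. -/
def CompAll (F : Finset σ) (s : σ) : Prop := ∀ t ∈ F, s ≤ t ∨ t ≤ s

/-- Protected points. -/
def Prot (ψ : σ → ℝ → ℝ) (ε : ℝ) (F : Finset σ) (x : ℝ) : Prop :=
  ∃ G : Finset σ, F ⊆ G ∧ (∀ s ∈ G, CompAll G s) ∧
    (∀ s ∈ G, s ∉ F → ε ≤ ψ s x ∧ ψ s x ≤ 1) ∧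
    ∀ s, s ∉ G → CompAll G s → 1 ≤ ψ s x

lemma chain_card (d : σ → ℕ) (hd : StrictMono d) (m : ℕ) (hdm : ∀ s, d s ≤ m)
    (F : Finset σ) (hF : ∀ s ∈ F, CompAll F s) : F.card ≤ m + 1 := by
  have : F.card ≤ (Finset.range (m + 1)).card := by
    apply Finset.card_le_card_of_injOn d
    · intro s _
      simpa using Nat.lt_succ_of_le (hdm s)
    · intro s hs t ht hst
      rcases hF s hs t ht with h | h
      · rcases h.lt_or_eq with h | h
        · exact absurd hst (hd h).ne
        · exact h
      · rcases h.lt_or_eq with h | h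
        · exact absurd hst (hd h).ne'
        · exact h.symm
  simpa using this

lemma km_abstract [Finite σ] (ψ : σ → ℝ → ℝ) (hψ : ∀ s, Continuous (ψ s))
    (d : σ → ℕ) (hd : StrictMono d) (m : ℕ) (hdm : ∀ s, d s ≤ m)
    (ε η : ℝ) (hη : 0 ≤ η)
    (hgood : ∀ s a b, a < b → (∃ y ∈ Set.Icc a b, 1 ≤ ψ s y) →
      volume {x | x ∈ Set.Icc a b ∧ ψ s x < ε} ≤ ENNReal.ofReal (η * (b - a)))
    (j : ℕ) : ∀ (F : Finset σ), F.card + j = m + 1 → (∀ s ∈ F, CompAll F s) →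
      ∀ a b, a < b → (∀ s, s ∉ F → CompAll F s → ∃ y ∈ Set.Icc a b, 1 ≤ ψ s y) →
      volume {x | x ∈ Set.Icc a b ∧ ¬ Prot ψ ε F x} ≤ ENNReal.ofReal (3 ^ j * j * η * (b - a)) := by
  classical
  induction j with
  | zero =>
    intro F hcard hF a b hab _
    have : {x | x ∈ Set.Icc a b ∧ ¬ Prot ψ ε F x} = ∅ := by
      apply Set.eq_empty_of_forall_notMem
      rintro x ⟨_, hx⟩
      apply hx
      refine ⟨F, subset_rfl, hF, fun s hs hs' => absurd hs hs', ?_⟩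
      intro s hs hcomp
      exfalso
      have := chain_card d hd m hdm (insert s F) (by
        intro u hu t ht
        rw [Finset.mem_insert] at hu ht
        rcases hu with rfl | hu <;> rcases ht with rfl | ht
        · left; exact le_rfl
        · exact hcomp t ht
        · exact (hcomp u hu).symm
        · exact hF u hu t ht)
      rw [Finset.card_insert_of_notMem hs] at this
      omega
    rw [this]; simp
  | succ j ih =>
    intro F hcard hF a b hab hsup
    set K : ℝ := 3 ^ j * j * η + η with hK
    have hKn : 0 ≤ K := by positivity
    have hmain : volume {x | x ∈ Set.Icc a b ∧ ¬ Prot ψ ε F x} ≤ ENNReal.ofReal (2 * K * (b - a)) := by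
      apply cover_arb a b K hKn hab.le _ (fun x hx => hx.1)
      rintro x ⟨hxab, hx⟩ hxI
      -- the set of small elements
      have hchoose : ∀ s, ψ s x < 1 → ∃ l r, a ≤ l ∧ l < x ∧ r ≤ b ∧ x < r ∧
          (∀ y ∈ Set.Ioo l r, ψ s y < 1) ∧ (a < l → 1 ≤ ψ s l) ∧ (r < b → 1 ≤ ψ s r) := by
        intro s hs
        obtain ⟨l, h1, h2, h3, h4⟩ := component_left (ψ s) (hψ s) a x hxI.1 hs
        obtain ⟨r, g1, g2, g3, g4⟩ := component_right (ψ s) (hψ s) b x hxI.2 hs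
        refine ⟨l, r, h1, h2, g1, g2, ?_, h4, g4⟩
        intro y hy
        rcases le_total y x with h | h
        · exact h3 y hy.1 h
        · exact g3 y hy.2 h
      choose! l r h1 h2 g1 g2 hlt h4 g4 using hchoose
      have hfin : ({s | s ∉ F ∧ CompAll F s ∧ ψ s x < 1} : Set σ).Finite := Set.toFinite _
      have hne : ({s | s ∉ F ∧ CompAll F s ∧ ψ s x < 1} : Set σ).Nonempty := by
        by_contra hcon
        apply hx
        refine ⟨F, subset_rfl, hF, fun s hs hs' => absurd hs hs', ?_⟩
        intro s hs hcomp
        by_contra hlt1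
        push Not at hlt1
        exact hcon ⟨s, hs, hcomp, hlt1⟩
      obtain ⟨s, ⟨hsF, hsC, hsx⟩, hmax⟩ := Set.exists_max_image _ (fun s => r s - l s) hfin hne
      refine ⟨l s, r s, h1 s hsx, g1 s hsx, h2 s hsx, g2 s hsx, ?_⟩
      have hls : l s < r s := (h2 s hsx).trans (g2 s hsx)
      have hle1 : ∀ y ∈ Set.Ioo (l s) (r s), ψ s y ≤ 1 := fun y hy => (hlt s hsx y hy).le
      -- s attains 1 on the closed interval
      have hs1 : ∃ y ∈ Set.Icc (l s) (r s), 1 ≤ ψ s y := by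
        obtain ⟨y, hy, hy1⟩ := hsup s hsF hsC
        by_cases hyl : y < l s
        · exact ⟨l s, ⟨le_rfl, hls.le⟩, h4 s hsx (lt_of_le_of_lt hy.1 hyl)⟩
        by_cases hyr : r s < y
        · exact ⟨r s, ⟨hls.le, le_rfl⟩, g4 s hsx (lt_of_lt_of_le hyr hy.2)⟩
        exact ⟨y, ⟨not_lt.1 hyl, not_lt.1 hyr⟩, hy1⟩
      have hchain : ∀ u ∈ insert s F, CompAll (insert s F) u := by
        intro u hu t ht
        rw [Finset.mem_insert] at hu ht
        rcases hu with rfl | hu <;> rcases ht with rfl | ht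
        · left; exact le_rfl
        · exact hsC t ht
        · exact (hsC u hu).symm
        · exact hF u hu t ht
      have hind := ih (insert s F) (by rw [Finset.card_insert_of_notMem hsF]; omega) hchain
        (l s) (r s) hls (by
          intro t ht htC
          by_contra hcon
          push Not at hcon
          have htF : t ∉ F := fun h => ht (Finset.mem_insert_of_mem h)
          have htC' : CompAll F t := fun u hu => htC u (Finset.mem_insert_of_mem hu)
          have htx : ψ t x < 1 := hcon x ⟨(h2 s hsx).le, (g2 s hsx).le⟩
          have hm := hmax t ⟨htF, htC', htx⟩
          have hl_le : l t ≤ l s := by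
            by_contra h
            push Not at h
            have := h4 t htx (lt_of_le_of_lt (h1 s hsx) h)
            have := hcon (l t) ⟨h.le, ((h2 t htx).trans (g2 s hsx)).le⟩
            linarith
          have hr_le : r s ≤ r t := by
            by_contra h
            push Not at h
            have := g4 t htx (lt_of_lt_of_le h (g1 s hsx))
            have := hcon (r t) ⟨((h2 s hsx).trans (g2 t htx)).le, h.le⟩
            linarith
          have e1 : l t = l s := by linarith
          have e2 : r t = r s := by linarith
          have e3 : l s = a := by
            by_contra h
            have h' := lt_of_le_of_ne (h1 s hsx) (Ne.symm h)
            have := h4 t htx (by rw [e1]; exact h')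
            have := hcon (l s) ⟨le_rfl, hls.le⟩
            rw [e1] at *
            linarith
          have e4 : r s = b := by
            by_contra h
            have h' := lt_of_le_of_ne (g1 s hsx) h
            have := g4 t htx (by rw [e2]; exact h')
            have := hcon (r s) ⟨hls.le, le_rfl⟩
            rw [e2] at *
            linarith
          obtain ⟨y, hy, hy1⟩ := hsup t htF htC'
          have := hcon y (by rw [e3, e4]; exact hy)
          linarith)
      have hg := hgood s (l s) (r s) hls hs1
      have hsub : {x | x ∈ Set.Icc a b ∧ ¬ Prot ψ ε F x} ∩ Set.Ioo (l s) (r s) ⊆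
          {x | x ∈ Set.Icc (l s) (r s) ∧ ¬ Prot ψ ε (insert s F) x} ∪
          {x | x ∈ Set.Icc (l s) (r s) ∧ ψ s x < ε} := by
        rintro y ⟨⟨_, hy⟩, hyI⟩
        by_cases hsmall : ψ s y < ε
        · right; exact ⟨⟨hyI.1.le, hyI.2.le⟩, hsmall⟩
        left
        refine ⟨⟨hyI.1.le, hyI.2.le⟩, ?_⟩
        rintro ⟨G, hFG, hGc, hG1, hG2⟩
        apply hy
        refine ⟨G, (Finset.subset_insert _ _).trans hFG, hGc, ?_, hG2⟩
        intro u hu huF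
        by_cases hus : u = s
        · subst hus
          exact ⟨not_lt.1 hsmall, hle1 y hyI⟩
        · exact hG1 u hu (by
            rw [Finset.mem_insert]
            push Not
            exact ⟨hus, huF⟩)
      refine (measure_mono hsub).trans ((measure_union_le _ _).trans ?_)
      refine (add_le_add hind hg).trans ?_
      rw [← ENNReal.ofReal_add]
      · apply ENNReal.ofReal_le_ofReal
        rw [hK]; ring_nf; exact le_rfl
      · have : 0 < r s - l s := by linarith
        positivity
      · have : 0 < r s - l s := by linarith
        positivity
    refine hmain.trans (ENNReal.ofReal_le_ofReal ?_)
    apply mul_le_mul_of_nonneg_right _ (by linarith)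
    rw [hK]
    push_cast
    have h3 : (1 : ℝ) ≤ 3 ^ j := one_le_pow₀ (by norm_num)
    have hj : (0 : ℝ) ≤ j := by positivity
    have h5 : (0:ℝ) ≤ 3 ^ j * j * η := by positivity
    have h6 : η ≤ 3 ^ j * η := by nlinarith
    rw [pow_succ]
    nlinarith

end KM

/-- The (unimodular) matrix encoding the value at `x` and the coefficients, rescaled. -/
noncomputable def LM (N : ℕ) (Q x : ℝ) : Matrix (Fin (N + 1)) (Fin (N + 1)) ℝ :=
  Matrix.of fun i j => if i = 0 then Q ^ N * x ^ (j : ℕ) else if i = j then 1 / Q else 0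

/-- Cast of an integer vector to a real vector. -/
def castv {N : ℕ} (v : Fin (N + 1) → ℤ) : Fin (N + 1) → ℝ := fun i => (v i : ℝ)

/-- All maximal minors of a tuple of vectors. -/
noncomputable def minorsV {N k : ℕ} (w : Fin k → Fin (N + 1) → ℝ) : (Fin k → Fin (N + 1)) → ℝ :=
  fun c => Matrix.det (Matrix.of fun i j => w i (c j))

/-- Size of the tuple seen at `x`. -/
noncomputable def psi {N k : ℕ} (Q : ℝ) (w : Fin k → Fin (N + 1) → ℝ) (x : ℝ) : ℝ :=
  ‖minorsV (fun i => (LM N Q x).mulVec (w i))‖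

lemma LM_zero (N : ℕ) (Q x : ℝ) (v : Fin (N + 1) → ℝ) :
    (LM N Q x).mulVec v 0 = Q ^ N * ∑ j : Fin (N + 1), x ^ (j : ℕ) * v j := by
  simp [LM, Matrix.mulVec, dotProduct, Finset.mul_sum, mul_assoc]

lemma LM_ne (N : ℕ) (Q x : ℝ) (v : Fin (N + 1) → ℝ) (i : Fin (N + 1)) (hi : i ≠ 0) :
    (LM N Q x).mulVec v i = 1 / Q * v i := by
  simp [LM, Matrix.mulVec, dotProduct, hi]

lemma minors_lin {N k : ℕ} (A : Matrix (Fin k) (Fin k) ℝ) (w w' : Fin k → Fin (N + 1) → ℝ)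
    (h : ∀ i, w' i = ∑ j, A i j • w j) : minorsV w' = A.det • minorsV w := by
  funext c
  simp only [minorsV, Pi.smul_apply, smul_eq_mul]
  rw [← Matrix.det_mul]
  congr 1
  ext i j
  simp [Matrix.mul_apply, h]

lemma psi_lin {N k : ℕ} (Q x : ℝ) (A : Matrix (Fin k) (Fin k) ℝ) (w w' : Fin k → Fin (N + 1) → ℝ)
    (h : ∀ i, w' i = ∑ j, A i j • w j) : psi Q w' x = |A.det| * psi Q w x := by
  unfold psi
  rw [minors_lin A (fun i => (LM N Q x).mulVec (w i)), norm_smul, Real.norm_eq_abs]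
  intro i
  rw [h i, Matrix.mulVec_sum]
  simp [Matrix.mulVec_smul]

lemma minors_cons {N k : ℕ} (v : Fin (N + 1) → ℝ) (w : Fin k → Fin (N + 1) → ℝ) :
    ‖minorsV (Fin.cons v w : Fin (k + 1) → Fin (N + 1) → ℝ)‖ ≤ (k + 1) * ‖v‖ * ‖minorsV w‖ := by
  rw [pi_norm_le_iff_of_nonneg (by positivity)]
  intro c
  rw [minorsV, Matrix.det_succ_row_zero]
  refine (norm_sum_le _ _).trans ?_
  have : ∀ j ∈ (Finset.univ : Finset (Fin (k + 1))), ‖(-1 : ℝ) ^ (j : ℕ) *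
      (Matrix.of fun i j => (Fin.cons v w : Fin (k + 1) → Fin (N + 1) → ℝ) i (c j)) 0 j *
      ((Matrix.of fun i j => (Fin.cons v w : Fin (k + 1) → Fin (N + 1) → ℝ) i (c j)).submatrix
        Fin.succ j.succAbove).det‖ ≤ ‖v‖ * ‖minorsV w‖ := by
    intro j _
    rw [norm_mul, norm_mul]
    have h1 : ‖(-1 : ℝ) ^ (j : ℕ)‖ = 1 := by simp
    rw [h1, one_mul]
    apply mul_le_mul _ _ (norm_nonneg _) (norm_nonneg _)
    · simpa using norm_le_pi_norm v (c j)
    · have := norm_le_pi_norm (minorsV w) (fun i => c (j.succAbove i))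
      refine le_trans (le_of_eq ?_) this
      congr 1
  refine (Finset.sum_le_sum this).trans ?_
  simp
  apply le_of_eq; ring

lemma psi_cons {N k : ℕ} (Q x : ℝ) (v : Fin (N + 1) → ℝ) (w : Fin k → Fin (N + 1) → ℝ) :
    psi Q (Fin.cons v w : Fin (k + 1) → Fin (N + 1) → ℝ) x ≤
      (k + 1) * ‖(LM N Q x).mulVec v‖ * psi Q w x := by
  have := minors_cons ((LM N Q x).mulVec v) (fun i => (LM N Q x).mulVec (w i))
  unfold psi
  refine le_trans (le_of_eq ?_) this
  congr 2
  funext i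
  refine Fin.cases ?_ (fun i => ?_) i <;> simp

lemma exists_minor_ne {N k : ℕ} (w : Fin k → Fin (N + 1) → ℝ) (hw : LinearIndependent ℝ w) :
    ∃ c, minorsV w c ≠ 0 := by
  set M : Matrix (Fin k) (Fin (N + 1)) ℝ := Matrix.of w with hM
  have h1 : M.rank = k := by
    have := LinearIndependent.rank_matrix (M := M) hw
    simpa using this
  rw [Matrix.rank_eq_finrank_span_cols] at h1
  have hex := Submodule.exists_fun_fin_finrank_span_eq ℝ (Set.range M.col)
  rw [h1] at hex
  obtain ⟨f, hf1, hf2, hf3⟩ := hex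
  choose c hc using hf1
  refine ⟨c, ?_⟩
  have h2 : LinearIndependent ℝ (Matrix.of fun i j => w i (c j)).col := by
    convert! hf3 using 1
    funext j
    rw [← hc j]
    rfl
  rw [Matrix.linearIndependent_cols_iff_isUnit, Matrix.isUnit_iff_isUnit_det] at h2
  exact h2.ne_zero

/-- Polynomial entry. -/
noncomputable def entryPoly {N : ℕ} (Q : ℝ) (v : Fin (N + 1) → ℝ) (i : Fin (N + 1)) : ℝ[X] :=
  if i = 0 then ∑ j : Fin (N + 1), C (Q ^ N * v j) * X ^ (j : ℕ) else C (1 / Q * v i)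

lemma eval_entryPoly {N : ℕ} (Q x : ℝ) (v : Fin (N + 1) → ℝ) (i : Fin (N + 1)) :
    (entryPoly Q v i).eval x = (LM N Q x).mulVec v i := by
  by_cases hi : i = 0
  · subst hi
    rw [LM_zero]
    simp only [entryPoly, if_true, eval_finsetSum, eval_mul, eval_C, eval_pow, eval_X]
    rw [Finset.mul_sum]
    apply Finset.sum_congr rfl
    intro j _; ring
  · rw [LM_ne _ _ _ _ _ hi]
    simp [entryPoly, hi]

lemma natDegree_entryPoly {N : ℕ} (Q : ℝ) (v : Fin (N + 1) → ℝ) (i : Fin (N + 1)) :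
    (entryPoly Q v i).natDegree ≤ N := by
  by_cases hi : i = 0
  · simp only [entryPoly, hi, if_true]
    apply natDegree_sum_le_of_forall_le
    intro j _
    exact (natDegree_C_mul_X_pow_le _ _).trans (Nat.lt_succ_iff.1 j.2)
  · rw [entryPoly, if_neg hi, natDegree_C]
    exact Nat.zero_le _

lemma minor_poly {N k : ℕ} (hk : k ≤ N + 1) (Q : ℝ) (w : Fin k → Fin (N + 1) → ℝ)
    (c : Fin k → Fin (N + 1)) :
    ∃ p : ℝ[X], p.natDegree ≤ (N + 1) * N ∧
      ∀ x, minorsV (fun i => (LM N Q x).mulVec (w i)) c = p.eval x := by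
  refine ⟨Matrix.det (Matrix.of fun i j => entryPoly Q (w i) (c j)), ?_, ?_⟩
  · rw [Matrix.det_apply]
    apply natDegree_sum_le_of_forall_le
    intro s _
    refine (natDegree_smul_le _ _).trans ?_
    refine (natDegree_prod_le _ _).trans ?_
    refine (Finset.sum_le_sum (fun i _ => natDegree_entryPoly Q _ _)).trans ?_
    simp only [Finset.sum_const, Finset.card_univ, Fintype.card_fin, smul_eq_mul]
    gcongr
  · intro x
    have := RingHom.map_det (evalRingHom x) (Matrix.of fun i j => entryPoly Q (w i) (c j))
    rw [coe_evalRingHom] at this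
    rw [this, minorsV]
    congr 1
    ext i j
    simp [eval_entryPoly]

lemma psi_continuous {N k : ℕ} (hk : k ≤ N + 1) (Q : ℝ) (w : Fin k → Fin (N + 1) → ℝ) :
    Continuous (psi Q w) := by
  unfold psi
  apply Continuous.norm
  apply continuous_pi
  intro c
  obtain ⟨p, _, hp⟩ := minor_poly hk Q w c
  simp_rw [hp]
  exact p.continuous

lemma psi_good {N k : ℕ} (hk : k ≤ N + 1) (Q : ℝ) (w : Fin k → Fin (N + 1) → ℝ)
    (η : ℝ) (hη : 0 < η) (a b : ℝ) (hab : a < b) (h : ∃ y ∈ Set.Icc a b, 1 ≤ psi Q w y) :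
    volume {x | x ∈ Set.Icc a b ∧ psi Q w x < ((1 + 1 / η) ^ ((N + 1) * N))⁻¹} ≤
      ENNReal.ofReal (2 * ((N + 1) * N : ℕ) * η * (b - a)) := by
  obtain ⟨y, hy, hy1⟩ := h
  have : ∃ c, 1 ≤ |minorsV (fun i => (LM N Q y).mulVec (w i)) c| := by
    by_contra hcon
    push Not at hcon
    have : psi Q w y < 1 := by
      unfold psi
      rw [pi_norm_lt_iff (by norm_num)]
      exact hcon
    linarith
  obtain ⟨c, hc⟩ := this
  obtain ⟨p, hp1, hp2⟩ := minor_poly hk Q w c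
  rw [hp2] at hc
  refine le_trans (measure_mono ?_) (poly_good p _ hp1 η hη a b hab y hy hc)
  rintro x ⟨hx, hlt⟩
  refine ⟨hx, lt_of_le_of_lt ?_ hlt⟩
  rw [← hp2]
  exact norm_le_pi_norm (minorsV (fun i => (LM N Q x).mulVec (w i))) c

/-- Lower bound for the supremum of `psi` on an interval. -/
lemma psi_sup {N k : ℕ} (Q : ℝ) (hQ : 1 ≤ Q) (a b : ℝ)
    (hab : 4 * (N + 1 : ℝ) ≤ Q * (b - a)) (w : Fin k → Fin (N + 1) → ℤ)
    (hw : LinearIndependent ℝ (fun i => castv (w i))) :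
    ∃ y ∈ Set.Icc a b, 1 ≤ psi Q (fun i => castv (w i)) y := by
  classical
  have hQ0 : 0 < Q := by linarith
  have hba : 0 < b - a := by
    by_contra h
    push Not at h
    have : Q * (b - a) ≤ 0 := mul_nonpos_of_nonneg_of_nonpos hQ0.le h
    have : (0:ℝ) < 4 * (N + 1) := by positivity
    linarith
  rcases Nat.eq_zero_or_pos k with hk0 | hkpos
  · subst hk0
    refine ⟨a, ⟨le_rfl, by linarith⟩, ?_⟩
    unfold psi
    refine le_trans ?_ (norm_le_pi_norm _ (fun i => (i.elim0 : Fin (N + 1))))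
    simp [minorsV]
  obtain ⟨c0, hc0⟩ := exists_minor_ne _ hw
  set W : Fin k → Fin (N + 1) → ℝ := fun i => castv (w i) with hW
  obtain ⟨c, hc, hmax⟩ := Set.exists_max_image {c | minorsV W c ≠ 0}
    (fun c => ∑ j, ((c j : Fin (N + 1)) : ℕ)) (Set.toFinite _) ⟨c0, hc0⟩
  have hcinj : Function.Injective c := by
    intro i j hij
    by_contra hne
    apply hc
    unfold minorsV
    apply Matrix.det_zero_of_column_eq hne
    intro l
    simp [hij]
  have : Nonempty (Fin k) := ⟨⟨0, hkpos⟩⟩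
  obtain ⟨j0, -, hj0⟩ := Finset.exists_min_image (Finset.univ : Finset (Fin k)) c ⟨⟨0, hkpos⟩, Finset.mem_univ _⟩
  set f : ℝ[X] := ∑ t : Fin (N + 1), C (minorsV W (Function.update c j0 t)) * X ^ (t : ℕ) with hf
  have hcoef : ∀ t : Fin (N + 1), f.coeff t = minorsV W (Function.update c j0 t) := by
    intro t
    rw [hf, finsetSum_coeff, Finset.sum_eq_single t]
    · simp
    · intro s _ hst
      rw [coeff_C_mul, coeff_X_pow, if_neg, mul_zero]
      intro h; exact hst (Fin.ext h.symm)
    · simp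
  have hzero : ∀ t : Fin (N + 1), c j0 < t → minorsV W (Function.update c j0 t) = 0 := by
    intro t ht
    by_contra hne
    have h1 := hmax _ hne
    rw [← Finset.add_sum_erase _ _ (Finset.mem_univ j0), ← Finset.add_sum_erase Finset.univ (fun j => ((c j : Fin (N + 1)) : ℕ)) (Finset.mem_univ j0)] at h1
    have h2 : ∑ x ∈ Finset.univ.erase j0, ((Function.update c j0 t x : Fin (N + 1)) : ℕ) =
        ∑ x ∈ Finset.univ.erase j0, ((c x : Fin (N + 1)) : ℕ) := by
      apply Finset.sum_congr rfl
      intro j hj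
      rw [Function.update_of_ne (Finset.ne_of_mem_erase hj)]
    rw [h2, Function.update_self] at h1
    have : (c j0 : ℕ) < t := ht
    omega
  have hlead : f.coeff (c j0) = minorsV W c := by
    rw [hcoef, Function.update_eq_self]
  have hdeg : f.natDegree = c j0 := by
    apply natDegree_eq_of_le_of_coeff_ne_zero
    · rw [natDegree_le_iff_coeff_eq_zero]
      intro s hs
      by_cases hsN : s < N + 1
      · have := hcoef ⟨s, hsN⟩
        simp only at this
        rw [this]
        exact hzero _ hs
      · rw [hf, finsetSum_coeff]
        apply Finset.sum_eq_zero
        intro t _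
        rw [coeff_C_mul, coeff_X_pow, if_neg, mul_zero]
        have := t.2
        omega
    · rw [hlead]; exact hc
  have hlead : 1 ≤ |f.leadingCoeff| := by
    rw [leadingCoeff, hdeg, hlead]
    have h1 : minorsV W c = ((Matrix.det (Matrix.of fun i j => w i (c j)) : ℤ) : ℝ) := by
      have := RingHom.map_det (Int.castRingHom ℝ) (Matrix.of fun i j => w i (c j))
      rw [eq_intCast] at this
      rw [this, minorsV]
      congr 1
    have hc' : minorsV W c ≠ 0 := hc
    rw [h1] at hc' ⊢
    have h2 : Matrix.det (Matrix.of fun i j => w i (c j)) ≠ 0 := by exact_mod_cast hc'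
    exact_mod_cast Int.one_le_abs h2
  have hi0 : (c j0 : ℕ) + k ≤ N + 1 := by
    have h1 : (Finset.univ.image c).card = k := by
      rw [Finset.card_image_of_injective _ hcinj]; simp
    have h2 : Finset.univ.image c ⊆ Finset.Ici (c j0) := by
      intro t ht
      rw [Finset.mem_image] at ht
      obtain ⟨j, _, rfl⟩ := ht
      exact Finset.mem_Ici.2 (hj0 j (Finset.mem_univ _))
    have h3 := Finset.card_le_card h2
    rw [h1, Fin.card_Ici] at h3
    have := (c j0).2
    omega
  -- the determinant formula
  have hdet : ∀ x, minorsV (fun i => (LM N Q x).mulVec (W i)) (Function.update c j0 0) =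
      Q ^ (N + 1 - k) * f.eval x := by
    intro x
    let col : Fin (N + 1) → (Fin k → ℝ) := fun t i => W i t
    let u' : Fin k → (Fin k → ℝ) := Function.update (fun j => col (c j)) j0 (∑ t : Fin (N + 1), x ^ (t : ℕ) • col t)
    let aa : Fin k → ℝ := fun j => if j = j0 then Q ^ N else 1 / Q
    have e1 : minorsV (fun i => (LM N Q x).mulVec (W i)) (Function.update c j0 0) =
        Matrix.detRowAlternating (fun j => aa j • u' j) := by
      rw [minorsV, ← Matrix.det_transpose]
      change Matrix.det _ = Matrix.det _
      congr 1
      ext j i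
      simp only [Matrix.transpose_apply, Matrix.of_apply, Pi.smul_apply, smul_eq_mul]
      by_cases hj : j = j0
      · subst hj
        simp only [Function.update_self, aa, u', if_true]
        rw [LM_zero]
        simp [col]
      · have hne : c j ≠ 0 := by
          intro h
          have h1 := hj0 j (Finset.mem_univ _)
          rw [h] at h1
          have h2 : c j0 = 0 := le_antisymm h1 (Fin.zero_le _)
          exact hj (hcinj (h.trans h2.symm))
        simp only [Function.update_of_ne hj, aa, u', if_neg hj]
        rw [LM_ne _ _ _ _ _ hne]
    have e2 : Matrix.detRowAlternating (fun j => aa j • u' j) = (∏ j, aa j) • Matrix.detRowAlternating u' :=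
      MultilinearMap.map_smul_univ (Matrix.detRowAlternating (R := ℝ) (n := Fin k)).toMultilinearMap aa u'
    have e3 : Matrix.detRowAlternating u' = ∑ t : Fin (N + 1), Matrix.detRowAlternating (Function.update (fun j => col (c j)) j0 (x ^ (t : ℕ) • col t)) :=
      MultilinearMap.map_update_sum (Matrix.detRowAlternating (R := ℝ) (n := Fin k)).toMultilinearMap Finset.univ j0 _ _
    have e4 : ∀ t : Fin (N + 1), Matrix.detRowAlternating (Function.update (fun j => col (c j)) j0 (x ^ (t : ℕ) • col t)) = x ^ (t : ℕ) * minorsV W (Function.update c j0 t) := by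
      intro t
      have := MultilinearMap.map_update_smul (Matrix.detRowAlternating (R := ℝ) (n := Fin k)).toMultilinearMap (fun j => col (c j)) j0 (x ^ (t : ℕ)) (col t)
      refine this.trans ?_
      rw [smul_eq_mul]
      congr 1
      rw [minorsV, ← Matrix.det_transpose]
      change Matrix.det _ = Matrix.det _
      congr 1
      ext j i
      simp only [Matrix.transpose_apply, Matrix.of_apply]
      by_cases hj : j = j0
      · subst hj; simp [col]
      · simp [Function.update_of_ne hj, col]
    have e5 : ∏ j, aa j = Q ^ (N + 1 - k) := by
      rw [← Finset.mul_prod_erase _ _ (Finset.mem_univ j0)]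
      have : ∏ j ∈ Finset.univ.erase j0, aa j = (1 / Q) ^ (k - 1) := by
        rw [Finset.prod_congr rfl (g := fun _ => 1 / Q)]
        · simp [Finset.card_erase_of_mem]
        · intro j hj
          simp [aa, Finset.ne_of_mem_erase hj]
      rw [this]
      simp only [aa, if_true]
      rw [one_div, inv_pow, ← div_eq_mul_inv, div_eq_iff (by positivity), ← pow_add]
      congr 1
      omega
    rw [e1, e2, e5, e3, smul_eq_mul, hf, eval_finsetSum]
    congr 1
    apply Finset.sum_congr rfl
    intro t _
    rw [e4, eval_mul, eval_C, eval_pow, eval_X, mul_comm]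
  set δ : ℝ := 1 / Q with hδ
  have hδ0 : 0 < δ := by positivity
  obtain ⟨y, hy, hy1⟩ := poly_large f hlead δ a b hδ0 (by
    rw [hdeg, hδ]
    have h1 : (((c j0 : Fin (N + 1)) : ℕ) : ℝ) ≤ N := by
      exact_mod_cast Nat.lt_succ_iff.1 (c j0).2
    have h2 : 4 * (N + 1 : ℝ) / Q ≤ b - a := by
      rw [div_le_iff₀ hQ0]; linarith
    refine lt_of_lt_of_le ?_ h2
    rw [lt_div_iff₀ hQ0]
    have : 2 * (1 / Q) * (((c j0 : Fin (N + 1)) : ℕ) : ℝ) * Q = 2 * (((c j0 : Fin (N + 1)) : ℕ) : ℝ) := by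
      field_simp
    rw [this]
    have hN : (0:ℝ) ≤ N := by positivity
    linarith)
  refine ⟨y, hy, ?_⟩
  unfold psi
  refine le_trans ?_ (norm_le_pi_norm _ (Function.update c j0 0))
  rw [hdet, Real.norm_eq_abs, abs_mul, abs_of_pos (by positivity)]
  rw [hdeg] at hy1
  have h1 : (1 : ℝ) = Q ^ (c j0 : ℕ) * δ ^ (c j0 : ℕ) := by
    rw [← mul_pow, hδ]; field_simp; simp
  rw [h1]
  apply mul_le_mul _ hy1 (by positivity) (by positivity)
  apply pow_le_pow_right₀ hQ
  omega

/-- Admissible integer tuples in a real subspace. -/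
def Adm {N k : ℕ} (W : Submodule ℝ (Fin (N + 1) → ℝ)) (w : Fin k → Fin (N + 1) → ℤ) : Prop :=
  (∀ i, castv (w i) ∈ W) ∧ LinearIndependent ℝ (fun i => castv (w i))

lemma exists_adm {N : ℕ} (A : Set (Fin (N + 1) → ℤ)) (W : Submodule ℝ (Fin (N + 1) → ℝ))
    (hW : W = Submodule.span ℝ (castv '' A)) :
    ∃ w : Fin (Module.finrank ℝ W) → Fin (N + 1) → ℤ, Adm W w := by
  subst hW
  obtain ⟨f, hf1, _, hf3⟩ := Submodule.exists_fun_fin_finrank_span_eq ℝ (castv '' A)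
  choose w hw1 hw2 using hf1
  refine ⟨w, fun i => Submodule.subset_span ⟨w i, hw1 i, rfl⟩, ?_⟩
  convert! hf3 using 1
  funext i
  exact hw2 i

lemma minorsV_castv {N k : ℕ} (w : Fin k → Fin (N + 1) → ℤ) (c : Fin k → Fin (N + 1)) :
    minorsV (fun i => castv (w i)) c = ((Matrix.det (Matrix.of fun i j => w i (c j)) : ℤ) : ℝ) := by
  have := RingHom.map_det (Int.castRingHom ℝ) (Matrix.of fun i j => w i (c j))
  rw [eq_intCast] at this
  rw [this, minorsV]
  congr 1

lemma exists_min_adm {N : ℕ} (A : Set (Fin (N + 1) → ℤ)) (W : Submodule ℝ (Fin (N + 1) → ℝ))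
    (hW : W = Submodule.span ℝ (castv '' A)) :
    ∃ w : Fin (Module.finrank ℝ W) → Fin (N + 1) → ℤ, Adm W w ∧
      ∀ (k : ℕ) (_ : k = Module.finrank ℝ W) (w' : Fin k → Fin (N + 1) → ℤ), Adm W w' →
        ∀ Q x, psi Q (fun i => castv (w i)) x ≤ psi Q (fun i => castv (w' i)) x := by
  classical
  let size : (Fin (Module.finrank ℝ W) → Fin (N + 1) → ℤ) → ℕ := fun w =>
    ∑ c : Fin (Module.finrank ℝ W) → Fin (N + 1), (Matrix.det (Matrix.of fun i j => w i (c j))).natAbs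
  have hsize : ∀ w, (size w : ℝ) = ∑ c, |minorsV (fun i => castv (w i)) c| := by
    intro w
    simp only [size, Nat.cast_sum]
    apply Finset.sum_congr rfl
    intro c _
    rw [minorsV_castv, Nat.cast_natAbs, Int.cast_abs]
  obtain ⟨w, hw, hmin⟩ := WellFounded.has_min (measure size).wf
    {w : Fin (Module.finrank ℝ W) → Fin (N + 1) → ℤ | Adm W w} (exists_adm A W hW)
  refine ⟨w, hw, ?_⟩
  rintro k rfl w' hw' Q x
  have hle : size w ≤ size w' := not_lt.1 (hmin w' hw')
  have hspan : Submodule.span ℝ (Set.range (fun i => castv (w i))) = W := by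
    apply Submodule.eq_of_le_of_finrank_eq
    · rw [Submodule.span_le]
      rintro _ ⟨i, rfl⟩
      exact hw.1 i
    · rw [finrank_span_eq_card hw.2]
      simp
  have hA : ∀ i, ∃ c : Fin (Module.finrank ℝ W) → ℝ, ∑ j, c j • castv (w j) = castv (w' i) := by
    intro i
    have : castv (w' i) ∈ Submodule.span ℝ (Set.range (fun i => castv (w i))) := by
      rw [hspan]; exact hw'.1 i
    exact (Submodule.mem_span_range_iff_exists_fun ℝ).1 this
  choose B hB using hA
  have h1 := minors_lin (Matrix.of B) (fun i => castv (w i)) (fun i => castv (w' i))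
    (fun i => (hB i).symm)
  have h2 := psi_lin Q x (Matrix.of B) (fun i => castv (w i)) (fun i => castv (w' i))
    (fun i => (hB i).symm)
  have h3 : (size w' : ℝ) = |(Matrix.of B).det| * size w := by
    rw [hsize, hsize, Finset.mul_sum, h1]
    apply Finset.sum_congr rfl
    intro c _
    rw [Pi.smul_apply, smul_eq_mul, abs_mul]
  have h4 : (0 : ℝ) < size w := by
    rw [hsize]
    obtain ⟨c, hc⟩ := exists_minor_ne _ hw.2
    exact Finset.sum_pos' (fun c _ => abs_nonneg _) ⟨c, Finset.mem_univ _, abs_pos.2 hc⟩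
  have h5 : (size w : ℝ) ≤ size w' := by exact_mod_cast hle
  have h6 : 1 ≤ |(Matrix.of B).det| := by
    by_contra hcon
    push Not at hcon
    nlinarith
  rw [h2]
  have : 0 ≤ psi Q (fun i => castv (w i)) x := norm_nonneg _
  nlinarith

/-- Quantitative nondivergence. -/
lemma nondiv (N : ℕ) : ∃ ε > (0 : ℝ), ∀ Q a b : ℝ, 1 ≤ Q → 4 * (N + 1 : ℝ) ≤ Q * (b - a) → a < b →
    Set.Icc a b ⊆ Set.Icc (-(1/2)) (1/2) →
    volume {x | x ∈ Set.Icc a b ∧ ∃ v : Fin (N + 1) → ℤ, v ≠ 0 ∧ ‖(LM N Q x).mulVec (castv v)‖ < ε} ≤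
      ENNReal.ofReal ((b - a) / 2) := by
  classical
  -- constants
  obtain ⟨η, hη0, hη⟩ : ∃ η : ℝ, 0 < η ∧
      3 ^ (N + 2) * ((N + 2 : ℕ) : ℝ) * (2 * ((N + 1) * N : ℕ) * η) ≤ 1 / 2 := by
    set Z : ℝ := 3 ^ (N + 2) * ((N + 2 : ℕ) : ℝ) * (2 * ((N + 1) * N : ℕ)) with hZ
    have hZ0 : 0 ≤ Z := by positivity
    refine ⟨1 / (2 * (Z + 1)), by positivity, ?_⟩
    have : 3 ^ (N + 2) * ((N + 2 : ℕ) : ℝ) * (2 * ((N + 1) * N : ℕ) * (1 / (2 * (Z + 1)))) =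
        Z / (2 * (Z + 1)) := by rw [hZ]; ring
    rw [this, div_le_div_iff₀ (by positivity) (by norm_num)]
    linarith
  set ε0 : ℝ := ((1 + 1 / η) ^ ((N + 1) * N))⁻¹ with hε0
  have hε0pos : 0 < ε0 := by positivity
  have hε01 : ε0 ≤ 1 := by
    rw [hε0]
    apply inv_le_one_of_one_le₀
    apply one_le_pow₀
    have : 0 < 1 / η := by positivity
    linarith
  refine ⟨ε0 / (N + 1), by positivity, ?_⟩
  intro Q a b hQ hQab hab hI
  have hQ0 : 0 < Q := by linarith
  set B : ℤ := ⌈1 + (N + 1) * Q⌉ with hB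
  set Xs : Set (Fin (N + 1) → ℤ) := Set.Icc (fun _ => -B) (fun _ => B) with hXs
  have hXfin : Xs.Finite := Set.finite_Icc _ _
  have hXFin : Finite Xs := hXfin
  let σ := {W : Submodule ℝ (Fin (N + 1) → ℝ) // W ∈ Set.range
    (fun A : Set Xs => Submodule.span ℝ (castv '' (Subtype.val '' A)))}
  have hσfin : Finite σ := Set.finite_range _
  have hspan : ∀ s : σ, ∃ A : Set Xs, s.1 = Submodule.span ℝ (castv '' (Subtype.val '' A)) := by
    rintro ⟨_, A, rfl⟩
    exact ⟨A, rfl⟩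
  have hmin : ∀ s : σ, ∃ w : Fin (Module.finrank ℝ s.1) → Fin (N + 1) → ℤ, Adm s.1 w ∧
      ∀ (k : ℕ) (_ : k = Module.finrank ℝ s.1) (w' : Fin k → Fin (N + 1) → ℤ), Adm s.1 w' →
        ∀ Q x, psi Q (fun i => castv (w i)) x ≤ psi Q (fun i => castv (w' i)) x := by
    intro s
    obtain ⟨A, hA⟩ := hspan s
    exact exists_min_adm _ s.1 hA
  choose w hwA hwmin using hmin
  have hrk : ∀ s : σ, Module.finrank ℝ s.1 ≤ N + 1 := by
    intro s
    simpa using Submodule.finrank_le s.1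
  let ψ : σ → ℝ → ℝ := fun s => psi Q (fun i => castv (w s i))
  have hkm := km_abstract ψ (fun s => psi_continuous (hrk s) Q _)
    (fun s => Module.finrank ℝ s.1) (fun s t hst => Submodule.finrank_lt_finrank_of_lt hst)
    (N + 1) hrk ε0 (2 * ((N + 1) * N : ℕ) * η) (by positivity)
    (fun s a b hab h => psi_good (hrk s) Q _ η hη0 a b hab h)
    (N + 2) ∅ (by simp) (by simp) a b hab
    (fun s _ _ => psi_sup Q hQ a b hQab (w s) (hwA s).2)
  refine le_trans (measure_mono ?_) (hkm.trans (ENNReal.ofReal_le_ofReal ?_))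
  swap
  · have : 0 < b - a := by linarith
    nlinarith
  rintro x ⟨hx, v, hv0, hv⟩
  refine ⟨hx, ?_⟩
  rintro ⟨G, -, hGc, hG1, hG2⟩
  -- v is in the box
  have hx2 := hI hx
  have hxabs : |x| ≤ 1 := by
    rw [abs_le]; constructor <;> linarith [hx2.1, hx2.2]
  have hN1 : (1 : ℝ) ≤ N + 1 := by
    have : (0:ℝ) ≤ N := by positivity
    linarith
  have hv1 : ‖(LM N Q x).mulVec (castv v)‖ ≤ 1 := by
    refine hv.le.trans ?_
    rw [div_le_one (by positivity)]
    linarith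
  have hvi : ∀ i, i ≠ 0 → |(v i : ℝ)| ≤ Q := by
    intro i hi
    have h1 := (norm_le_pi_norm _ i).trans hv1
    rw [LM_ne _ _ _ _ _ hi, Real.norm_eq_abs, abs_mul, abs_of_pos (by positivity)] at h1
    rw [one_div, ← div_eq_inv_mul, div_le_one hQ0] at h1
    exact h1
  have hv00 : |(v 0 : ℝ)| ≤ 1 + N * Q := by
    have h1 := (norm_le_pi_norm _ 0).trans hv1
    rw [LM_zero, Real.norm_eq_abs, abs_mul, abs_of_pos (by positivity)] at h1
    have hQN : 1 ≤ Q ^ N := one_le_pow₀ hQ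
    have h2 : |∑ j : Fin (N + 1), x ^ (j : ℕ) * castv v j| ≤ 1 := by
      have := abs_nonneg (∑ j : Fin (N + 1), x ^ (j : ℕ) * castv v j)
      nlinarith
    rw [Fin.sum_univ_succ] at h2
    simp only [Fin.val_zero, pow_zero, one_mul] at h2
    have h3 : |∑ i : Fin N, x ^ ((i.succ : Fin (N + 1)) : ℕ) * castv v i.succ| ≤ N * Q := by
      refine (Finset.abs_sum_le_sum_abs _ _).trans ?_
      have : ∀ i ∈ (Finset.univ : Finset (Fin N)), |x ^ ((i.succ : Fin (N + 1)) : ℕ) * castv v i.succ| ≤ Q := by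
        intro i _
        rw [abs_mul, abs_pow]
        have h4 := hvi i.succ (Fin.succ_ne_zero i)
        have h5 : |x| ^ ((i.succ : Fin (N + 1)) : ℕ) ≤ 1 := pow_le_one₀ (abs_nonneg _) hxabs
        have h6 : |castv v i.succ| ≤ Q := h4
        have h7 := abs_nonneg (castv v i.succ)
        nlinarith [pow_nonneg (abs_nonneg x) ((i.succ : Fin (N + 1)) : ℕ)]
      refine (Finset.sum_le_sum this).trans ?_
      simp
    have h8 : (v 0 : ℝ) = (castv v 0 + ∑ i : Fin N, x ^ ((i.succ : Fin (N + 1)) : ℕ) * castv v i.succ)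
      - ∑ i : Fin N, x ^ ((i.succ : Fin (N + 1)) : ℕ) * castv v i.succ := by simp [castv]
    rw [h8]
    refine (abs_sub _ _).trans ?_
    linarith
  have hvB : ∀ i, |v i| ≤ B := by
    intro i
    have h1 : |(v i : ℝ)| ≤ 1 + (N + 1) * Q := by
      by_cases hi : i = 0
      · subst hi
        linarith
      · have := hvi i hi
        have : (0:ℝ) ≤ N * Q := by positivity
        linarith
    have h2 := h1.trans (Int.le_ceil (1 + ((N:ℝ) + 1) * Q))
    rw [← hB] at h2
    exact_mod_cast h2
  have hvX : v ∈ Xs := ⟨fun i => (abs_le.1 (hvB i)).1, fun i => (abs_le.1 (hvB i)).2⟩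
  have hcv0 : castv v ≠ 0 := by
    intro h
    apply hv0
    funext i
    have := congrFun h i
    simpa [castv] using this
  -- largest element of G not containing v
  let bot : σ := ⟨⊥, ∅, by simp⟩
  have hbot : ∀ s : σ, bot ≤ s := fun s => (bot_le : (⊥ : Submodule ℝ (Fin (N + 1) → ℝ)) ≤ s.1)
  let G' : Finset σ := (insert bot G).filter (fun s => castv v ∉ s.1)
  have hG'ne : G'.Nonempty := ⟨bot, by simp [G', bot, hcv0]⟩
  obtain ⟨W, hWG', hWmax⟩ := Finset.exists_max_image G' (fun s => Module.finrank ℝ s.1) hG'ne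
  have hWmem : W ∈ insert bot G := (Finset.mem_filter.1 hWG').1
  have hvW : castv v ∉ W.1 := (Finset.mem_filter.1 hWG').2
  have hWcomp : ∀ t ∈ G, W ≤ t ∨ t ≤ W := by
    intro t ht
    rcases Finset.mem_insert.1 hWmem with h | h
    · left; rw [h]; exact hbot t
    · exact hGc W h t ht
  have hψW : ψ W x ≤ 1 := by
    rcases Finset.mem_insert.1 hWmem with h | h
    · have hfr : Module.finrank ℝ W.1 = 0 := by rw [h]; simp [bot]
      have : IsEmpty (Fin (Module.finrank ℝ W.1)) := by rw [hfr]; infer_instance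
      simp only [ψ, psi]
      rw [pi_norm_le_iff_of_nonneg (by norm_num)]
      intro c
      rw [minorsV, Matrix.det_isEmpty]
      simp
    · exact (hG1 W h (by simp)).2
  -- the new subspace
  obtain ⟨A, hA⟩ := hspan W
  let W' : σ := ⟨Submodule.span ℝ {castv v} ⊔ W.1, insert ⟨v, hvX⟩ A, by
    simp only [Set.image_insert_eq]
    rw [Submodule.span_insert, hA]⟩
  have hvW' : castv v ∈ W'.1 := Submodule.mem_sup_left (Submodule.mem_span_singleton_self _)
  have hWW' : W ≤ W' := (le_sup_right : W.1 ≤ Submodule.span ℝ {castv v} ⊔ W.1)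
  have hW'comp : CompAll G W' := by
    intro t ht
    by_cases hvt : castv v ∈ t.1
    · left
      have hWt : W ≤ t := by
        rcases hWcomp t ht with h | h
        · exact h
        · exact absurd (h hvt) hvW
      exact (sup_le ((Submodule.span_singleton_le_iff_mem _ _).2 hvt) hWt :
        Submodule.span ℝ {castv v} ⊔ W.1 ≤ t.1)
    · right
      have htG' : t ∈ G' := Finset.mem_filter.2 ⟨Finset.mem_insert_of_mem ht, hvt⟩
      have h1 := hWmax t htG'
      rcases hWcomp t ht with h | h
      · have h2 : W.1 = t.1 := Submodule.eq_of_le_of_finrank_le h h1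
        rw [← Subtype.ext h2]
        exact hWW'
      · exact h.trans hWW'
  have hψW' : ε0 ≤ ψ W' x := by
    by_cases h : W' ∈ G
    · exact (hG1 W' h (by simp)).1
    · exact hε01.trans (hG2 W' h hW'comp)
  -- upper bound for the new psi
  set k := Module.finrank ℝ W.1 with hk
  have hli : LinearIndependent ℝ (Fin.cons (castv v) (fun i => castv (w W i)) : Fin (k + 1) → Fin (N + 1) → ℝ) := by
    rw [linearIndependent_finCons]
    refine ⟨(hwA W).2, ?_⟩
    intro h
    apply hvW
    refine (Submodule.span_le.2 ?_) h
    rintro _ ⟨i, rfl⟩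
    exact (hwA W).1 i
  have hcons : (fun i => castv ((Fin.cons v (w W) : Fin (k + 1) → Fin (N + 1) → ℤ) i)) =
      (Fin.cons (castv v) (fun i => castv (w W i)) : Fin (k + 1) → Fin (N + 1) → ℝ) := by
    funext i
    refine Fin.cases ?_ (fun i => ?_) i <;> simp
  have hadm : Adm W'.1 (Fin.cons v (w W) : Fin (k + 1) → Fin (N + 1) → ℤ) := by
    refine ⟨?_, by rw [hcons]; exact hli⟩
    intro i
    refine Fin.cases ?_ (fun i => ?_) i
    · simpa using hvW'
    · simpa using hWW' ((hwA W).1 i)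
  have hfr : k + 1 = Module.finrank ℝ W'.1 := by
    apply le_antisymm
    · exact Submodule.finrank_lt_finrank_of_lt (lt_of_le_of_ne hWW' (fun h => hvW (by
        have : W.1 = W'.1 := h
        rw [this]; exact hvW')))
    · refine (Submodule.finrank_add_le_finrank_add_finrank _ _).trans ?_
      rw [finrank_span_singleton hcv0, add_comm]
  have hup := hwmin W' (k + 1) hfr _ hadm Q x
  rw [hcons] at hup
  have hup2 := hup.trans (psi_cons Q x (castv v) (fun i => castv (w W i)))
  have hkN : (k : ℝ) + 1 ≤ N + 1 := by
    have := hrk W'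
    rw [← hfr] at this
    exact_mod_cast this
  have hfinal : ε0 ≤ (k + 1) * ‖(LM N Q x).mulVec (castv v)‖ := by
    have h1 : ψ W' x ≤ (k + 1) * ‖(LM N Q x).mulVec (castv v)‖ * ψ W x := hup2
    have h2 : 0 ≤ (k + 1) * ‖(LM N Q x).mulVec (castv v)‖ := by positivity
    nlinarith
  have h9 : (k + 1) * ‖(LM N Q x).mulVec (castv v)‖ ≤ (N + 1) * ‖(LM N Q x).mulVec (castv v)‖ := by
    gcongr
  rw [lt_div_iff₀ (by positivity)] at hv
  linarith

lemma LM_det (N : ℕ) (Q x : ℝ) (hQ : 1 ≤ Q) : (LM N Q x).det = 1 := by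
  have hup : (LM N Q x).IsUpperTriangular := by
    intro i j hij
    have hij' : j < i := hij
    have hi : i ≠ 0 := by
      rintro rfl
      exact absurd hij' (Fin.not_lt_zero j)
    simp [LM, hi, hij'.ne']
  rw [Matrix.det_of_isUpperTriangular hup, Fin.prod_univ_succ]
  have hQ0 : Q ≠ 0 := by positivity
  simp [LM]
  field_simp

lemma covering_gen (N : ℕ) (ε : ℝ) (hε : 0 < ε) (M : ℕ) (hM : 1 < (M : ℝ) * ε ^ (N + 1))
    (A : Matrix (Fin (N + 1)) (Fin (N + 1)) ℝ) (hA : A.det = 1)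
    (hmin : ∀ v : Fin (N + 1) → ℤ, v ≠ 0 → ε ≤ ‖A.mulVec (castv v)‖) (τ : Fin (N + 1) → ℝ) :
    ∃ v : Fin (N + 1) → ℤ, ‖A.mulVec (τ - castv v)‖ ≤ M * ε := by
  set Λ : Set (Fin (N + 1) → ℝ) := Set.range (fun v : Fin (N + 1) → ℤ => A.mulVec (castv v)) with hΛ
  have hΛne : Λ.Nonempty := Set.range_nonempty _
  by_cases hlt : Metric.infDist (A.mulVec τ) Λ < M * ε
  · obtain ⟨z, ⟨v, rfl⟩, hz⟩ := (Metric.infDist_lt_iff hΛne).1 hlt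
    refine ⟨v, ?_⟩
    rw [Matrix.mulVec_sub, ← dist_eq_norm]
    exact hz.le
  exfalso
  push Not at hlt
  have hsub : ∀ v w : Fin (N + 1) → ℤ, castv (v - w) = castv v - castv w := by
    intro v w; funext i; simp [castv]
  have hex : ∀ j : Fin M, ∃ s : ℝ, Metric.infDist (A.mulVec (s • τ)) Λ = (j : ℕ) * ε := by
    intro j
    have hc : Continuous (fun s : ℝ => Metric.infDist (A.mulVec (s • τ)) Λ) := by
      refine (Metric.continuous_infDist_pt Λ).comp ?_
      simp only [Matrix.mulVec_smul]
      fun_prop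
    have h0 : Metric.infDist (A.mulVec ((0 : ℝ) • τ)) Λ = 0 := by
      apply Metric.infDist_zero_of_mem
      refine ⟨0, ?_⟩
      have hz : castv (0 : Fin (N + 1) → ℤ) = 0 := by funext i; simp [castv]
      simp [hz]
    have h1 : Metric.infDist (A.mulVec ((1 : ℝ) • τ)) Λ = Metric.infDist (A.mulVec τ) Λ := by
      rw [one_smul]
    have := intermediate_value_Icc (zero_le_one : (0 : ℝ) ≤ 1) hc.continuousOn
    have hj : ((j : ℕ) : ℝ) ≤ M := by exact_mod_cast j.2.le
    obtain ⟨s, _, hs⟩ := this (show ((j : ℕ) : ℝ) * ε ∈ _ from ⟨by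
      rw [h0]; positivity, by
      rw [h1]; exact (mul_le_mul_of_nonneg_right hj hε.le).trans hlt⟩)
    exact ⟨s, hs⟩
  choose s hs using hex
  -- key
  have key : ∀ i j : Fin M, ∀ v : Fin (N + 1) → ℤ,
      ‖A.mulVec (s i • τ - s j • τ + castv v)‖ < ε → i = j ∧ v = 0 := by
    intro i j v hv
    have hij : i = j := by
      have hg : ∀ z : Fin (N + 1) → ℝ, Metric.infDist (z - A.mulVec (castv v)) Λ ≤
          Metric.infDist z Λ := by
        intro z
        refine (Metric.le_infDist hΛne).2 ?_
        rintro _ ⟨w, rfl⟩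
        have : A.mulVec (castv (w - v)) ∈ Λ := ⟨_, rfl⟩
        refine (Metric.infDist_le_dist_of_mem this).trans (le_of_eq ?_)
        rw [hsub, Matrix.mulVec_sub, dist_eq_norm, dist_eq_norm]
        congr 1; abel
      have hg' : ∀ z : Fin (N + 1) → ℝ, Metric.infDist (z + A.mulVec (castv v)) Λ ≤
          Metric.infDist z Λ := by
        intro z
        refine (Metric.le_infDist hΛne).2 ?_
        rintro _ ⟨w, rfl⟩
        have : A.mulVec (castv (w - (-v))) ∈ Λ := ⟨_, rfl⟩
        refine (Metric.infDist_le_dist_of_mem this).trans (le_of_eq ?_)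
        have hneg : castv (-v) = - castv v := by funext i; simp [castv]
        rw [hsub, hneg, Matrix.mulVec_sub, Matrix.mulVec_neg, dist_eq_norm, dist_eq_norm]
        congr 1; abel
      have e1 : Metric.infDist (A.mulVec (s j • τ) - A.mulVec (castv v)) Λ = (j : ℕ) * ε := by
        rw [← hs j]
        refine le_antisymm (hg _) ?_
        have := hg' (A.mulVec (s j • τ) - A.mulVec (castv v))
        rwa [sub_add_cancel] at this
      have hd : dist (A.mulVec (s i • τ)) (A.mulVec (s j • τ) - A.mulVec (castv v)) < ε := by
        rw [dist_eq_norm]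
        have he : A.mulVec (s i • τ) - (A.mulVec (s j • τ) - A.mulVec (castv v)) =
            A.mulVec (s i • τ - s j • τ + castv v) := by
          rw [Matrix.mulVec_add, Matrix.mulVec_sub]; abel
        rw [he]; exact hv
      have a1 := Metric.infDist_le_infDist_add_dist (s := Λ) (x := A.mulVec (s i • τ))
        (y := A.mulVec (s j • τ) - A.mulVec (castv v))
      have a2 := Metric.infDist_le_infDist_add_dist (s := Λ) (y := A.mulVec (s i • τ))
        (x := A.mulVec (s j • τ) - A.mulVec (castv v))
      rw [dist_comm] at a2
      rw [e1, hs i] at a1 a2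
      have b1 : ((i : ℕ) : ℝ) < (j : ℕ) + 1 := by nlinarith
      have b2 : ((j : ℕ) : ℝ) < (i : ℕ) + 1 := by nlinarith
      have c1 : (i : ℕ) < (j : ℕ) + 1 := by exact_mod_cast b1
      have c2 : (j : ℕ) < (i : ℕ) + 1 := by exact_mod_cast b2
      exact Fin.ext (by omega)
    refine ⟨hij, ?_⟩
    by_contra hv0
    subst hij
    have := hmin v hv0
    rw [sub_self, zero_add] at hv
    linarith
  set B : Fin M → Set (Fin (N + 1) → ℝ) := fun j =>
    (Matrix.toLin' A) ⁻¹' (Metric.ball (A.mulVec (s j • τ)) (ε / 2)) with hB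
  have hBmeas : ∀ j, MeasurableSet (B j) := fun j =>
    (Metric.isOpen_ball.preimage (LinearMap.continuous_of_finiteDimensional _)).measurableSet
  have hBvol : ∀ j, volume (B j) = ENNReal.ofReal (ε ^ (N + 1)) := by
    intro j
    rw [hB, Measure.addHaar_preimage_linearMap _ (by rw [LinearMap.det_toLin', hA]; norm_num),
      LinearMap.det_toLin', hA, Real.volume_pi_ball _ (by positivity)]
    simp
    congr 1; ring
  have hmemB : ∀ j y, y ∈ B j ↔ ‖A.mulVec (y - s j • τ)‖ < ε / 2 := by
    intro j y
    simp only [hB, Set.mem_preimage, Metric.mem_ball, dist_eq_norm, Matrix.toLin'_apply,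
      Matrix.mulVec_sub]
  have hclose : ∀ i j y z, y ∈ B i → z ∈ B j → ∀ v : Fin (N + 1) → ℤ, z = y + castv v →
      i = j ∧ v = 0 := by
    intro i j y z hy hz v hv
    refine key i j v ?_
    rw [hmemB] at hy hz
    have : A.mulVec (s i • τ - s j • τ + castv v) =
        A.mulVec (z - s j • τ) - A.mulVec (y - s i • τ) := by
      rw [← Matrix.mulVec_sub]; congr 1; rw [hv]; abel
    rw [this]
    exact (norm_sub_le _ _).trans_lt (by linarith)
  have hzero : castv (0 : Fin (N + 1) → ℤ) = 0 := by funext i; simp [castv]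
  have hvolU : volume (⋃ j, B j) = ENNReal.ofReal (M * ε ^ (N + 1)) := by
    rw [measure_iUnion _ hBmeas]
    · simp only [hBvol]
      rw [tsum_fintype]
      simp only [Finset.sum_const, Finset.card_univ, Fintype.card_fin, nsmul_eq_mul]
      rw [ENNReal.ofReal_mul (by positivity), ENNReal.ofReal_natCast]
    · intro i j hij
      refine Set.disjoint_left.2 fun y hy hy' => hij ?_
      exact (hclose i j y y hy hy' 0 (by rw [hzero, add_zero])).1
  have fund := ZSpan.isAddFundamentalDomain' (Pi.basisFun ℝ (Fin (N + 1))) volume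
  have hvolF : volume (ZSpan.fundamentalDomain (Pi.basisFun ℝ (Fin (N + 1)))) = 1 := by
    rw [ZSpan.fundamentalDomain_pi_basisFun, Real.volume_pi_Ico]
    simp
  have hcount : Countable
      (Submodule.span ℤ (Set.range (Pi.basisFun ℝ (Fin (N + 1))))).toAddSubgroup :=
    inferInstanceAs (Countable (Submodule.span ℤ (Set.range (Pi.basisFun ℝ (Fin (N + 1))))))
  obtain ⟨p, q, hpq, hdis⟩ := exists_pair_mem_lattice_not_disjoint_vadd fund
    (s := ⋃ j, B j) (MeasurableSet.iUnion hBmeas).nullMeasurableSet (by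
      rw [hvolF, hvolU, ENNReal.one_lt_ofReal]; exact hM)
  obtain ⟨_, ⟨y, hy, rfl⟩, z, hz, hyz⟩ := Set.not_disjoint_iff.1 hdis
  obtain ⟨i, hy⟩ := Set.mem_iUnion.1 hy
  obtain ⟨j, hz⟩ := Set.mem_iUnion.1 hz
  have hcoord : ∀ p : (Submodule.span ℤ (Set.range (Pi.basisFun ℝ (Fin (N + 1))))).toAddSubgroup,
      ∃ v : Fin (N + 1) → ℤ, castv v = (p : Fin (N + 1) → ℝ) := by
    intro p
    have := (Module.Basis.mem_span_iff_repr_mem ℤ (Pi.basisFun ℝ (Fin (N + 1))) _).1 p.2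
    choose v hv using this
    refine ⟨v, ?_⟩
    funext i
    simpa [castv] using hv i
  obtain ⟨vp, hvp⟩ := hcoord p
  obtain ⟨vq, hvq⟩ := hcoord q
  have hyz' : (q : Fin (N + 1) → ℝ) + z = p + y := hyz
  have := (hclose i j y z hy hz (vp - vq) (by
    rw [hsub, hvp, hvq]
    have : z = (q : Fin (N + 1) → ℝ) + z - q := by abel
    rw [this, hyz']; abel)).2
  apply hpq
  apply Subtype.ext
  rw [← hvp, ← hvq, sub_eq_zero.1 this]

lemma covering (N : ℕ) (ε : ℝ) (hε : 0 < ε) : ∃ R > (0 : ℝ), ∀ Q x : ℝ, 1 ≤ Q →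
    (∀ v : Fin (N + 1) → ℤ, v ≠ 0 → ε ≤ ‖(LM N Q x).mulVec (castv v)‖) →
    ∀ τ : Fin (N + 1) → ℝ, ∃ v : Fin (N + 1) → ℤ, ‖(LM N Q x).mulVec (τ - castv v)‖ ≤ R := by
  obtain ⟨M, hM⟩ := exists_nat_gt (1 / ε ^ (N + 1))
  have hp : 0 < ε ^ (N + 1) := by positivity
  have hM' : 1 < (M : ℝ) * ε ^ (N + 1) := by
    rwa [div_lt_iff₀ hp] at hM
  have hM0 : (0 : ℝ) < M := lt_trans (by positivity) hM
  refine ⟨M * ε, by positivity, fun Q x hQ h τ => ?_⟩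
  exact covering_gen N ε hε M hM' _ (LM_det N Q x hQ) h τ

/-- The Eisenstein polynomial attached to an integer vector. -/
noncomputable def Ppol (N : ℕ) (v : Fin (N + 1) → ℤ) : ℤ[X] :=
  X ^ (N + 1) + ∑ j : Fin (N + 1), C ((if j = 0 then 2 else 0) + 4 * v j) * X ^ (j : ℕ)

lemma Ppol_deg (N : ℕ) (v : Fin (N + 1) → ℤ) :
    (∑ j : Fin (N + 1), C ((if j = 0 then 2 else 0) + 4 * v j) * X ^ (j : ℕ) : ℤ[X]).degree
      < ((N + 1 : ℕ) : WithBot ℕ) := by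
  refine (degree_sum_le _ _).trans_lt ?_
  rw [Finset.sup_lt_iff (WithBot.bot_lt_coe _)]
  intro j _
  refine (degree_C_mul_X_pow_le _ _).trans_lt ?_
  exact_mod_cast j.2

lemma Ppol_monic (N : ℕ) (v : Fin (N + 1) → ℤ) : (Ppol N v).Monic :=
  monic_X_pow_add (Ppol_deg N v)

lemma Ppol_natDegree (N : ℕ) (v : Fin (N + 1) → ℤ) : (Ppol N v).natDegree = N + 1 := by
  apply natDegree_eq_of_degree_eq_some
  rw [Ppol, degree_add_eq_left_of_degree_lt, degree_X_pow]
  rw [degree_X_pow]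
  exact Ppol_deg N v

lemma Ppol_coeff (N : ℕ) (v : Fin (N + 1) → ℤ) (j : Fin (N + 1)) :
    (Ppol N v).coeff j = (if j = 0 then 2 else 0) + 4 * v j := by
  have h : (j : ℕ) ≠ N + 1 := j.2.ne
  rw [Ppol, coeff_add, coeff_X_pow, if_neg h, zero_add, finsetSum_coeff,
    Finset.sum_eq_single j]
  · rw [coeff_C_mul_X_pow, if_pos rfl]
  · intro i _ hij
    rw [coeff_C_mul_X_pow, if_neg]
    intro h'
    exact hij (Fin.ext h'.symm)
  · simp

lemma Ppol_irr (N : ℕ) (v : Fin (N + 1) → ℤ) :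
    Irreducible ((Ppol N v).map (algebraMap ℤ ℚ)) := by
  rw [← (Ppol_monic N v).irreducible_iff_irreducible_map_fraction_map]
  have hp : (Ideal.span {(2 : ℤ)}).IsPrime := by
    rw [Ideal.span_singleton_prime (by norm_num)]
    exact Int.prime_two
  refine irreducible_of_eisenstein_criterion hp ?_ ?_ ?_ ?_ (Ppol_monic N v).isPrimitive
  · rw [(Ppol_monic N v).leadingCoeff, Ideal.mem_span_singleton]
    norm_num
  · intro m hm
    rw [degree_eq_natDegree (Ppol_monic N v).ne_zero, Ppol_natDegree] at hm
    have hm' : m < N + 1 := by exact_mod_cast hm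
    have := Ppol_coeff N v ⟨m, hm'⟩
    simp only at this
    rw [this, Ideal.mem_span_singleton]
    split_ifs <;> omega
  · rw [degree_eq_natDegree (Ppol_monic N v).ne_zero, Ppol_natDegree]
    exact_mod_cast Nat.succ_pos N
  · have := Ppol_coeff N v 0
    simp only [Fin.val_zero, if_true] at this
    rw [this, Ideal.span_singleton_pow, Ideal.mem_span_singleton]
    omega

lemma Ppol_aeval (N : ℕ) (v : Fin (N + 1) → ℤ) (t : ℝ) :
    aeval t (Ppol N v) = t ^ (N + 1) + 2 + 4 * ∑ j : Fin (N + 1), (v j : ℝ) * t ^ (j : ℕ) := by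
  simp only [Ppol, map_add, map_sum, map_mul, map_pow, aeval_X, aeval_C]
  simp only [algebraMap_int_eq, eq_intCast, Int.cast_add, Int.cast_mul, add_mul,
    Finset.sum_add_distrib, Finset.mul_sum]
  have : ∑ x : Fin (N + 1), (((if x = 0 then 2 else 0 : ℤ)) : ℝ) * t ^ (x : ℕ) = 2 := by
    rw [Finset.sum_eq_single 0] <;> simp +contextual
  rw [this]
  push_cast
  simp only [mul_assoc, add_assoc]

set_option maxHeartbeats 1000000 in
lemma poly_at (K : ℕ) (R : ℝ) (hR : 0 < R) : ∃ Ch ≥ (1 : ℝ), ∀ Q x : ℝ, 1 ≤ Q → |x| ≤ 1 / 2 →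
    2 * R ≤ Q ^ (K + 2) →
    (∀ τ : Fin (K + 2) → ℝ, ∃ v : Fin (K + 2) → ℤ,
      ‖(LM (K + 1) Q x).mulVec (τ - castv v)‖ ≤ R) →
    ∃ γ : ℝ, |γ - x| ≤ R / Q ^ (K + 2) ∧ ∃ P : ℤ[X], P.Monic ∧ P.natDegree = K + 2 ∧
      Irreducible (P.map (algebraMap ℤ ℚ)) ∧ aeval γ P = 0 ∧ ∀ j, (|P.coeff j| : ℝ) ≤ Ch * Q := by
  set k : ℝ := (K : ℝ) + 2 with hk
  have hk2 : 2 ≤ k := by rw [hk]; have : (0 : ℝ) ≤ K := Nat.cast_nonneg K; linarith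
  set M : ℝ := 1 + k + k ^ 2 * R with hM
  have hM0 : 0 < M := by positivity
  refine ⟨3 + 4 * (M + 1 + k * R), ?_, ?_⟩
  · have : 0 < k * R := by positivity
    linarith
  intro Q x hQ hx hRQ hcov
  have hQ0 : 0 < Q := by linarith
  set A : ℝ := (-x ^ (K + 2) - 2) / 4 - M * Q * x with hA
  set τ : Fin (K + 2) → ℝ := Pi.single 0 A + Pi.single 1 (M * Q) with hτ
  obtain ⟨v, hv⟩ := hcov τ
  set e : Fin (K + 2) → ℝ := τ - castv v with he
  have hve : ∀ j, (v j : ℝ) = τ j - e j := by intro j; simp [he, castv]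
  have hτsum : ∀ f : Fin (K + 2) → ℝ, ∑ j, τ j * f j = A * f 0 + M * Q * f 1 := by
    intro f
    simp [hτ, Pi.single_apply, add_mul, Finset.sum_add_distrib]
  have he0 : |∑ j : Fin (K + 2), e j * x ^ (j : ℕ)| ≤ R / Q ^ (K + 1) := by
    have h1 := (norm_le_pi_norm _ 0).trans hv
    rw [LM_zero, Real.norm_eq_abs, abs_mul, abs_of_nonneg (by positivity : 0 ≤ Q ^ (K + 1))] at h1
    rw [le_div_iff₀ (by positivity), mul_comm]
    simpa only [mul_comm] using h1
  have he1 : ∀ i, i ≠ 0 → |e i| ≤ R * Q := by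
    intro i hi
    have h1 := (norm_le_pi_norm _ i).trans hv
    rw [LM_ne _ _ _ _ _ hi, Real.norm_eq_abs, abs_mul, abs_of_nonneg (by positivity : 0 ≤ 1 / Q),
      one_div, inv_mul_le_iff₀ hQ0] at h1
    linarith
  set p : ℝ → ℝ := fun t => t ^ (K + 2) + 2 + 4 * ∑ j : Fin (K + 2), (v j : ℝ) * t ^ (j : ℕ) with hp
  have hpx : |p x| ≤ 4 * R / Q ^ (K + 1) := by
    have : p x = -(4 * ∑ j : Fin (K + 2), e j * x ^ (j : ℕ)) := by
      simp only [hp, hve, sub_mul, Finset.sum_sub_distrib]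
      rw [hτsum (fun j => x ^ (j : ℕ))]
      simp [hA]
      ring
    rw [this, abs_neg, abs_mul, mul_div_assoc]
    norm_num
    exact he0
  have hpd : ∀ t, HasDerivAt p (((K + 2 : ℕ) : ℝ) * t ^ (K + 1) +
      4 * ∑ j : Fin (K + 2), (v j : ℝ) * (((j : ℕ) : ℝ) * t ^ ((j : ℕ) - 1))) t := by
    intro t
    have h1 := (hasDerivAt_pow (K + 2) t).add_const 2
    have h2 : HasDerivAt (fun t : ℝ => ∑ j : Fin (K + 2), (v j : ℝ) * t ^ (j : ℕ))
        (∑ j : Fin (K + 2), (v j : ℝ) * (((j : ℕ) : ℝ) * t ^ ((j : ℕ) - 1))) t :=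
      HasDerivAt.fun_sum fun j _ => (hasDerivAt_pow (j : ℕ) t).const_mul _
    exact h1.add (h2.const_mul 4)
  have hpow : ∀ t : ℝ, |t| ≤ 1 → ∀ m : ℕ, |t ^ m| ≤ 1 := by
    intro t ht m
    rw [abs_pow]; exact pow_le_one₀ (abs_nonneg t) ht
  have hpd' : ∀ t, |t| ≤ 1 → 4 * Q ≤ deriv p t := by
    intro t ht
    rw [(hpd t).deriv]
    simp only [hve, sub_mul, Finset.sum_sub_distrib]
    rw [hτsum (fun j => ((j : ℕ) : ℝ) * t ^ ((j : ℕ) - 1))]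
    simp only [Fin.val_zero, Fin.val_one, Nat.cast_zero, Nat.cast_one, zero_mul, mul_zero, zero_add,
      Nat.sub_self, pow_zero, mul_one]
    have b1 : |∑ j : Fin (K + 2), e j * (((j : ℕ) : ℝ) * t ^ ((j : ℕ) - 1))| ≤ k ^ 2 * R * Q := by
      have : ∀ j ∈ Finset.univ, |e j * (((j : ℕ) : ℝ) * t ^ ((j : ℕ) - 1))| ≤ k * R * Q := by
        intro j _
        by_cases hj : j = 0
        · subst hj; simp; positivity
        · rw [abs_mul, abs_mul, Nat.abs_cast]
          have h1 := he1 j hj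
          have h2 := hpow t ht ((j : ℕ) - 1)
          have h3 : ((j : ℕ) : ℝ) ≤ k := by
            have : ((j : ℕ) : ℝ) ≤ ((K + 2 : ℕ) : ℝ) := by exact_mod_cast j.2.le
            rw [hk]; push_cast at this; exact this
          calc |e j| * (((j : ℕ) : ℝ) * |t ^ ((j : ℕ) - 1)|) ≤ (R * Q) * (k * 1) := by gcongr
            _ = k * R * Q := by ring
      refine (Finset.abs_sum_le_sum_abs _ _).trans ((Finset.sum_le_sum this).trans (le_of_eq ?_))
      simp [hk]
      ring
    have b2 : |((K + 2 : ℕ) : ℝ) * t ^ (K + 1)| ≤ k * Q := by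
      rw [abs_mul, Nat.abs_cast]
      have := hpow t ht (K + 1)
      have hkk : ((K + 2 : ℕ) : ℝ) = k := by rw [hk]; push_cast; ring
      rw [hkk]
      gcongr
      linarith
    have b1' := (abs_le.1 b1).2
    have b2' := (abs_le.1 b2).1
    have b3 : M * Q = Q + k * Q + k ^ 2 * R * Q := by rw [hM]; ring
    have b4 : 0 ≤ k * Q := by positivity
    rw [b3]
    linarith
  have hdiff : Differentiable ℝ p := fun t => (hpd t).differentiableAt
  have hmvt : ∀ y ∈ Set.Icc (-1 : ℝ) 1, ∀ z ∈ Set.Icc (-1 : ℝ) 1, y ≤ z →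
      4 * Q * (z - y) ≤ p z - p y := by
    intro y hy z hz hyz
    refine (convex_Icc (-1 : ℝ) 1).mul_sub_le_image_sub_of_le_deriv hdiff.continuous.continuousOn
      hdiff.differentiableOn ?_ y hy z hz hyz
    intro t ht
    have ht2 : t ∈ Set.Icc (-1 : ℝ) 1 := interior_subset ht
    exact hpd' t (abs_le.2 ht2)
  set δ : ℝ := R / Q ^ (K + 2) with hδ
  have hδ0 : 0 < δ := by positivity
  have hδ1 : δ ≤ 1 / 2 := by
    rw [hδ, div_le_iff₀ (by positivity)]; linarith
  have hδQ : 4 * Q * δ = 4 * R / Q ^ (K + 1) := by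
    rw [hδ, pow_succ Q (K + 1)]; field_simp
  have hx' := abs_le.1 hx
  have hpx' := abs_le.1 hpx
  have hup : 0 ≤ p (x + δ) := by
    have := hmvt x ⟨by linarith, by linarith⟩ (x + δ) ⟨by linarith, by linarith⟩ (by linarith)
    have h2 : 4 * Q * (x + δ - x) = 4 * Q * δ := by ring
    linarith
  have hlo : p (x - δ) ≤ 0 := by
    have := hmvt (x - δ) ⟨by linarith, by linarith⟩ x ⟨by linarith, by linarith⟩ (by linarith)
    have h2 : 4 * Q * (x - (x - δ)) = 4 * Q * δ := by ring
    linarith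
  obtain ⟨γ, hγ, hpγ⟩ := intermediate_value_Icc (by linarith : x - δ ≤ x + δ)
    hdiff.continuous.continuousOn (show (0 : ℝ) ∈ _ from ⟨hlo, hup⟩)
  refine ⟨γ, abs_le.2 ⟨by linarith [hγ.1], by linarith [hγ.2]⟩, Ppol (K + 1) v, Ppol_monic _ _,
    Ppol_natDegree _ _, Ppol_irr _ _, ?_, ?_⟩
  · rw [Ppol_aeval]; exact hpγ
  have hxp := hpow x (by linarith)
  have hvb : ∀ j, |(v j : ℝ)| ≤ (M + 1 + k * R) * Q := by
    intro j
    by_cases hj : j = 0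
    · subst hj
      have h0 := he0
      rw [Fin.sum_univ_succ] at h0
      simp only [Fin.val_zero, pow_zero, mul_one] at h0
      have hs : |∑ i : Fin (K + 1), e i.succ * x ^ ((i.succ : Fin (K + 2)) : ℕ)| ≤ (k - 1) * R * Q := by
        have : ∀ i ∈ Finset.univ, |e (Fin.succ i) * x ^ ((i.succ : Fin (K + 2)) : ℕ)| ≤ R * Q := by
          intro i _
          rw [abs_mul]
          have h1 := he1 i.succ (Fin.succ_ne_zero i)
          have h2 := hxp ((i.succ : Fin (K + 2)) : ℕ)
          calc _ ≤ (R * Q) * 1 := by gcongr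
            _ = R * Q := by ring
        refine (Finset.abs_sum_le_sum_abs _ _).trans ((Finset.sum_le_sum this).trans (le_of_eq ?_))
        simp [hk]
        ring
      have hRQ1 : R / Q ^ (K + 1) ≤ R * Q := by
        rw [div_le_iff₀ (by positivity)]
        have : 1 ≤ Q ^ (K + 1) := one_le_pow₀ hQ
        have h3 : 1 ≤ Q * Q ^ (K + 1) := by nlinarith
        nlinarith
      have hτ0 : τ 0 = A := by simp [hτ]
      have hx2 := hxp (K + 2)
      have hAb : |A| ≤ (M + 1) * Q := by
        rw [hA, abs_le]
        have hh := abs_le.1 hx2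
        have hmq : 0 < M * Q := by positivity
        have hm1 : M * Q * x ≤ M * Q * 1 := by gcongr; linarith
        have hm2 : M * Q * (-1) ≤ M * Q * x := by gcongr; linarith
        constructor <;> linarith
      rw [hve, hτ0]
      rw [abs_le] at h0 hs hAb ⊢
      constructor <;> linarith
    · have h1 := he1 j hj
      have h2 : |τ j| ≤ M * Q := by
        simp only [hτ, Pi.add_apply, Pi.single_apply, if_neg hj, zero_add]
        split_ifs
        · rw [abs_of_nonneg (by positivity)]
        · simp; positivity
      rw [hve]
      refine (abs_sub _ _).trans ?_
      have : R * Q ≤ k * R * Q := by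
        have : 0 < R * Q := by positivity
        nlinarith
      nlinarith
  intro j
  have hpos : 0 ≤ M + 1 + k * R := by positivity
  have hnn : 0 ≤ (M + 1 + k * R) * Q := by positivity
  rcases lt_trichotomy j (K + 2) with hj | hj | hj
  · have h1 := Ppol_coeff (K + 1) v ⟨j, hj⟩
    simp only at h1
    rw [h1]
    have h2 := abs_le.1 (hvb ⟨j, hj⟩)
    push_cast
    rw [abs_le]
    split_ifs <;> constructor <;> push_cast <;> nlinarith
  · have h1 := (Ppol_monic (K + 1) v).coeff_natDegree
    rw [Ppol_natDegree] at h1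
    subst hj
    rw [h1]
    push_cast
    rw [abs_one]
    nlinarith
  · rw [coeff_eq_zero_of_natDegree_lt (by rw [Ppol_natDegree]; exact hj)]
    simp
    positivity

lemma exists_separated (G : Set ℝ) (ρ : ℝ) (hρ : 0 < ρ) (m : ℕ)
    (hm : ENNReal.ofReal (m * (2 * ρ)) ≤ volume G) :
    ∃ F : Finset ℝ, F.card = m ∧ (∀ x ∈ F, x ∈ G) ∧
      ∀ x ∈ F, ∀ y ∈ F, x ≠ y → ρ < |x - y| := by
  induction m with
  | zero => exact ⟨∅, by simp, by simp, by simp⟩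
  | succ m ih =>
    have hlt : ENNReal.ofReal (m * (2 * ρ)) < volume G := by
      refine lt_of_lt_of_le ?_ hm
      rw [ENNReal.ofReal_lt_ofReal_iff (by positivity)]
      push_cast
      nlinarith
    obtain ⟨F, hc, hG, hs⟩ := ih hlt.le
    have hvol : volume (⋃ x ∈ F, Metric.closedBall x ρ) ≤ ENNReal.ofReal (m * (2 * ρ)) := by
      refine (measure_biUnion_finset_le _ _).trans (le_of_eq ?_)
      simp only [Real.volume_closedBall, Finset.sum_const, hc, nsmul_eq_mul]
      rw [ENNReal.ofReal_mul (p := (m : ℝ)) (by positivity), ENNReal.ofReal_natCast]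
    have hnot : ¬ G ⊆ ⋃ x ∈ F, Metric.closedBall x ρ := fun h =>
      absurd ((measure_mono h).trans hvol) (not_le.2 hlt)
    obtain ⟨y, hy, hy'⟩ := Set.not_subset.1 hnot
    simp only [Set.mem_iUnion, Metric.mem_closedBall, Real.dist_eq, not_exists, not_le] at hy'
    have hyF : y ∉ F := fun h => by
      have := hy' y h
      rw [sub_self, abs_zero] at this
      linarith
    refine ⟨insert y F, by rw [Finset.card_insert_of_notMem hyF, hc], ?_, ?_⟩
    · intro x hx
      rcases Finset.mem_insert.1 hx with rfl | hx
      · exact hy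
      · exact hG x hx
    · intro x hx z hz hxz
      rcases Finset.mem_insert.1 hx with hx1 | hx1 <;>
        rcases Finset.mem_insert.1 hz with hz1 | hz1
      · exact absurd (hx1.trans hz1.symm) hxz
      · rw [hx1]; exact hy' z hz1
      · rw [abs_sub_comm, hz1]; exact hy' x hx1
      · exact hs x hx1 z hz1 hxz

lemma main_aux (K : ℕ) :
    ∃ c₅ > (0 : ℝ), ∃ c₁₅ > (0 : ℝ),
      ∀ a b : ℝ, a < b → Set.Icc a b ⊆ Set.Icc (-(1/2) : ℝ) (1/2) →
        ∀ T : ℝ, c₁₅ * ((b - a) ^ (K + 2))⁻¹ < T →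
          ∃ S : Finset ℝ,
            (∀ γ ∈ S, γ ∈ Set.Icc a b ∧
              ∃ P : ℤ[X], P.Monic ∧ P.natDegree = K + 2 ∧
                Irreducible (P.map (algebraMap ℤ ℚ)) ∧
                Polynomial.aeval γ P = 0 ∧
                ∀ j, (|P.coeff j| : ℝ) ^ (K + 2) ≤ T) ∧
            (∀ γ₁ ∈ S, ∀ γ₂ ∈ S, γ₁ ≠ γ₂ → T⁻¹ < |γ₁ - γ₂|) ∧
            c₅ * T * (b - a) < (S.card : ℝ) := by
  obtain ⟨ε, hε, hnd⟩ := nondiv (K + 1)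
  obtain ⟨R, hR, hcov⟩ := covering (K + 1) ε hε
  obtain ⟨Ch, hCh, hpoly⟩ := poly_at K R hR
  have hCh0 : 0 < Ch := by linarith
  set k : ℝ := 2 * R + 2 with hk
  have hk0 : 0 < k := by positivity
  set B : ℝ := 1 + 8 * ((K : ℝ) + 2) + 4 * R + 16 * k with hB
  have hB0 : 0 < B := by positivity
  refine ⟨1 / (16 * k * Ch ^ (K + 2)), by positivity, (Ch * B) ^ (K + 2), by positivity, ?_⟩
  intro a b hab hsub T hT
  have hba : 0 < b - a := by linarith
  have ha := hsub (Set.left_mem_Icc.2 hab.le)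
  have hb := hsub (Set.right_mem_Icc.2 hab.le)
  have hba1 : b - a ≤ 1 := by linarith [ha.1, hb.2]
  have hT0 : 0 < T := lt_trans (by positivity) hT
  obtain ⟨r, hr0, hrT⟩ : ∃ r : ℝ, 0 ≤ r ∧ r ^ (K + 2) = T :=
    ⟨T ^ (((K + 2 : ℕ) : ℝ)⁻¹), by positivity, Real.rpow_inv_natCast_pow hT0.le (by omega)⟩
  set Q : ℝ := r / Ch with hQdef
  have hChQ : Ch * Q = r := by rw [hQdef]; field_simp
  have hTQ : T = Ch ^ (K + 2) * Q ^ (K + 2) := by rw [← mul_pow, hChQ, hrT]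
  have hQ0' : 0 ≤ Q := by positivity
  have hQba : B < Q * (b - a) := by
    have h1 : (Ch * B / (b - a)) ^ (K + 2) < r ^ (K + 2) := by
      rw [hrT, div_pow, div_eq_mul_inv]; exact hT
    have h2 := lt_of_pow_lt_pow_left₀ _ hr0 h1
    rw [← hChQ, mul_div_assoc] at h2
    have h3 := lt_of_mul_lt_mul_left h2 hCh0.le
    rwa [div_lt_iff₀ hba] at h3
  have hK0 : (0 : ℝ) ≤ K := Nat.cast_nonneg K
  have hQB : B < Q := by nlinarith
  have hQ1 : 1 ≤ Q := by linarith
  have hQ0 : 0 < Q := by linarith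
  have hQn : Q ≤ Q ^ (K + 2) := le_self_pow₀ hQ1 (by omega)
  have hQn0 : 0 < Q ^ (K + 2) := by positivity
  have hQnba : B < Q ^ (K + 2) * (b - a) :=
    hQba.trans_le (mul_le_mul_of_nonneg_right hQn hba.le)
  set a' : ℝ := a + (b - a) / 4 with ha'
  set b' : ℝ := b - (b - a) / 4 with hb'
  have hab' : a' < b' := by linarith
  have hbad := hnd Q a' b' hQ1 (by push_cast; nlinarith) hab' (by
    refine (Set.Icc_subset_Icc ?_ ?_).trans hsub <;> linarith)
  set bad := {x | x ∈ Set.Icc a' b' ∧ ∃ v : Fin (K + 1 + 1) → ℤ, v ≠ 0 ∧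
    ‖(LM (K + 1) Q x).mulVec (castv v)‖ < ε} with hbaddef
  set G : Set ℝ := Set.Icc a' b' \ bad with hG
  have hGvol : ENNReal.ofReal ((b - a) / 4) ≤ volume G := by
    have h1 : volume (Set.Icc a' b') ≤ volume G + volume bad := by
      refine (measure_mono ?_).trans (measure_union_le _ _)
      intro y hy
      by_cases h : y ∈ bad
      · exact Or.inr h
      · exact Or.inl ⟨hy, h⟩
    rw [Real.volume_Icc] at h1
    have h2 := h1.trans (add_le_add le_rfl hbad)
    have h3 : ENNReal.ofReal (b' - a') =
        ENNReal.ofReal ((b - a) / 4) + ENNReal.ofReal ((b' - a') / 2) := by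
      rw [← ENNReal.ofReal_add (by linarith) (by linarith)]
      congr 1
      rw [ha', hb']; ring
    rw [h3] at h2
    exact (ENNReal.add_le_add_iff_right ENNReal.ofReal_ne_top).1 h2
  set ρ : ℝ := k / Q ^ (K + 2) with hρ
  have hρ0 : 0 < ρ := by positivity
  set Z : ℝ := Q ^ (K + 2) * (b - a) / (16 * k) with hZ
  have hZ1 : 1 ≤ Z := by
    rw [hZ, le_div_iff₀ (by positivity)]
    linarith
  have hm1 : ((⌊2 * Z⌋₊ : ℕ) : ℝ) ≤ 2 * Z := Nat.floor_le (by linarith)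
  have hm2 : 2 * Z < ((⌊2 * Z⌋₊ : ℕ) : ℝ) + 1 := Nat.lt_floor_add_one _
  obtain ⟨F, hFc, hFG, hFs⟩ := exists_separated G ρ hρ0 ⌊2 * Z⌋₊ (by
    refine (ENNReal.ofReal_le_ofReal ?_).trans hGvol
    calc _ ≤ 2 * Z * (2 * ρ) := by gcongr
      _ = (b - a) / 4 := by rw [hZ, hρ]; field_simp; ring)
  have hroot : ∀ x : ℝ, ∃ γ : ℝ, x ∈ G → |γ - x| ≤ R / Q ^ (K + 2) ∧ ∃ P : ℤ[X], P.Monic ∧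
      P.natDegree = K + 2 ∧ Irreducible (P.map (algebraMap ℤ ℚ)) ∧ aeval γ P = 0 ∧
      ∀ j, (|P.coeff j| : ℝ) ≤ Ch * Q := by
    intro x
    by_cases hx : x ∈ G
    · have hxI : x ∈ Set.Icc a' b' := hx.1
      have hx1 : |x| ≤ 1 / 2 := by
        rw [abs_le]; constructor <;> linarith [hxI.1, hxI.2, ha.1, hb.2]
      obtain ⟨γ, hγ⟩ := hpoly Q x hQ1 hx1 (by linarith) (hcov Q x hQ1 (by
        intro v hv
        by_contra hlt
        exact hx.2 ⟨hxI, v, hv, not_le.1 hlt⟩))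
      exact ⟨γ, fun _ => hγ⟩
    · exact ⟨0, fun h => absurd h hx⟩
  choose γ hγ using hroot
  have hsep : ∀ x ∈ F, ∀ y ∈ F, x ≠ y → T⁻¹ < |γ x - γ y| := by
    intro x hx y hy hxy
    have h1 := (hγ x (hFG x hx)).1
    have h2 := (hγ y (hFG y hy)).1
    have h3 := hFs x hx y hy hxy
    have h4 : |x - y| ≤ |γ x - x| + |γ y - y| + |γ x - γ y| := by
      have e : x - y = -(γ x - x) + (γ y - y) + (γ x - γ y) := by ring
      calc |x - y| = |-(γ x - x) + (γ y - y) + (γ x - γ y)| := by rw [← e]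
        _ ≤ _ := by
          refine (abs_add_le _ _).trans ?_
          gcongr
          refine (abs_add_le _ _).trans ?_
          rw [abs_neg]
    have h5 : ρ = R / Q ^ (K + 2) + R / Q ^ (K + 2) + 2 * (1 / Q ^ (K + 2)) := by
      rw [hρ, hk]; ring
    have h6 : T⁻¹ ≤ 1 / Q ^ (K + 2) := by
      rw [← one_div]
      apply one_div_le_one_div_of_le hQn0
      rw [hTQ]
      have : 1 ≤ Ch ^ (K + 2) := one_le_pow₀ hCh
      nlinarith
    have h7 : 0 < 1 / Q ^ (K + 2) := by positivity
    linarith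
  have hinj : Set.InjOn γ F := by
    intro x hx y hy hxy
    by_contra hne
    have := hsep x hx y hy hne
    rw [hxy, sub_self, abs_zero] at this
    exact absurd this (not_lt.2 (inv_nonneg.2 hT0.le))
  refine ⟨F.image γ, ?_, ?_, ?_⟩
  · intro g hg
    obtain ⟨x, hx, rfl⟩ := Finset.mem_image.1 hg
    obtain ⟨h1, P, hP1, hP2, hP3, hP4, hP5⟩ := hγ x (hFG x hx)
    refine ⟨?_, P, hP1, hP2, hP3, hP4, ?_⟩
    · have hxI : x ∈ Set.Icc a' b' := (hFG x hx).1
      have h2 : R / Q ^ (K + 2) ≤ (b - a) / 4 := by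
        rw [div_le_iff₀ hQn0]; linarith
      have h3 := abs_le.1 h1
      constructor <;> linarith [hxI.1, hxI.2, h3.1, h3.2]
    · intro j
      rw [← hrT, ← hChQ]
      exact pow_le_pow_left₀ (abs_nonneg _) (hP5 j) _
  · intro g hg g' hg' hne
    obtain ⟨x, hx, rfl⟩ := Finset.mem_image.1 hg
    obtain ⟨y, hy, rfl⟩ := Finset.mem_image.1 hg'
    exact hsep x hx y hy (fun h => hne (by rw [h]))
  · rw [Finset.card_image_of_injOn hinj, hFc]
    have : 1 / (16 * k * Ch ^ (K + 2)) * T * (b - a) = Z := by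
      rw [hTQ, hZ]; field_simp
    rw [this]
    linarith

end Helpers

/-- The set of real algebraic integers of degree `n`, with `N(α) = H(α)ⁿ`, forms a
regular system on subintervals of `[-1/2, 1/2]`: there are constants `c₅, c₁₅ > 0`
(depending only on `n`) such that for every interval `I = [a,b] ⊆ [-1/2, 1/2]` of
positive length and every `T > c₁₅·|I|⁻ⁿ` there are points `γ ∈ I`, each a real
algebraic integer of degree `n` with `H(γ)ⁿ ≤ T`, pairwise at distance `> T⁻¹`,
and numbering more than `c₅·T·|I|`. -/
theorem algebraic_integers_form_regular_system (n : ℕ) (hn : 2 ≤ n) :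
    ∃ c₅ > (0 : ℝ), ∃ c₁₅ > (0 : ℝ),
      ∀ a b : ℝ, a < b → Set.Icc a b ⊆ Set.Icc (-(1/2) : ℝ) (1/2) →
        ∀ T : ℝ, c₁₅ * ((b - a) ^ n)⁻¹ < T →
          ∃ S : Finset ℝ,
            (∀ γ ∈ S, γ ∈ Set.Icc a b ∧
              ∃ P : ℤ[X], P.Monic ∧ P.natDegree = n ∧
                Irreducible (P.map (algebraMap ℤ ℚ)) ∧
                Polynomial.aeval γ P = 0 ∧
                ∀ j, (|P.coeff j| : ℝ) ^ n ≤ T) ∧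
            (∀ γ₁ ∈ S, ∀ γ₂ ∈ S, γ₁ ≠ γ₂ → T⁻¹ < |γ₁ - γ₂|) ∧
            c₅ * T * (b - a) < (S.card : ℝ) := by
  obtain ⟨K, rfl⟩ : ∃ K, n = K + 2 := ⟨n - 2, by omega⟩
  exact main_aux K
end

section
/- Let n ≥ 1 and set δ₀ = 2^{-n-8}·n^{-2}. There exist a constant c₁₃ = c₁₃(n) > 0 and Q₀ = Q₀(n) such that for every integer Q > Q₀ and every interval I ⊆ [-1/2, 1/2] with |I| > c₁₃·Q^{-1}, the Lebesgue measure of the set ℒₙ of points x ∈ I for which there exists a nonzero polynomial P ∈ ℤ[t] with deg P ≤ n and H(P) ≤ Q satisfying |P(x)| < Q^{-n} and |P'(x)| < δ₀·Q, is less than |I|/4. -/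
open Polynomial

namespace SmallPoly
open MeasureTheory Set

/-- Bisection covering lemma on bisected intervals. -/
lemma bisect_cover (E : Set ℝ) (p : ℝ → ℝ → Prop) (K : ℝ) (hK : 0 ≤ K)
    (h1 : ∀ a b a' b' : ℝ, a < b → ¬ p a b → b' - a' = (b - a) / 2 → a ≤ a' → b' ≤ b →
      p a' b' → volume (E ∩ Icc a' b') ≤ ENNReal.ofReal (K * (b' - a')))
    (h2 : ∀ x ∈ E, ∃ r > 0, ∀ a b : ℝ, x ∈ Icc a b → b - a < r → p a b)
    (a b : ℝ) (hab : a < b) (hp : ¬ p a b) :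
    volume (E ∩ Icc a b) ≤ ENNReal.ofReal (K * (b - a)) := by
  set Er : ℝ → Set ℝ := fun r => {x ∈ E | ∀ a b : ℝ, x ∈ Icc a b → b - a < r → p a b} with hEr
  have key : ∀ r > 0, ∀ k : ℕ, ∀ a b : ℝ, a < b → ¬ p a b → b - a < 2 ^ k * r →
      volume (Er r ∩ Icc a b) ≤ ENNReal.ofReal (K * (b - a)) := by
    intro r hr k
    induction k with
    | zero =>
      intro a b hab hp hlt
      have : Er r ∩ Icc a b = ∅ := by
        ext x
        simp only [mem_inter_iff, mem_empty_iff_false, iff_false, not_and]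
        intro hx hxI
        exact hp (hx.2 a b hxI (by simpa using hlt))
      rw [this]; simp
    | succ k ih =>
      intro a b hab hp hlt
      have hlt' : (b - a) / 2 < 2 ^ k * r := by rw [pow_succ] at hlt; linarith
      have half : ∀ a' b' : ℝ, b' - a' = (b - a) / 2 → a ≤ a' → b' ≤ b →
          volume (Er r ∩ Icc a' b') ≤ ENNReal.ofReal (K * (b' - a')) := by
        intro a' b' h h' h''
        by_cases hp' : p a' b'
        · refine le_trans (measure_mono ?_) (h1 a b a' b' hab hp h h' h'' hp')
          exact inter_subset_inter_left _ (fun x hx => hx.1)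
        · exact ih a' b' (by linarith) hp' (by linarith)
      have hl := half a ((a + b) / 2) (by ring) le_rfl (by linarith)
      have hr' := half ((a + b) / 2) b (by ring) (by linarith) le_rfl
      calc volume (Er r ∩ Icc a b)
          ≤ volume ((Er r ∩ Icc a ((a + b) / 2)) ∪ (Er r ∩ Icc ((a + b) / 2) b)) := by
            apply measure_mono
            rintro x ⟨hx, hx1, hx2⟩
            rcases le_total x ((a + b) / 2) with h | h
            · exact Or.inl ⟨hx, hx1, h⟩
            · exact Or.inr ⟨hx, h, hx2⟩
        _ ≤ _ := measure_union_le _ _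
        _ ≤ ENNReal.ofReal (K * ((a + b) / 2 - a)) + ENNReal.ofReal (K * (b - (a + b) / 2)) :=
            add_le_add hl hr'
        _ = _ := by
            rw [← ENNReal.ofReal_add]
            · congr 1; ring
            · apply mul_nonneg hK; linarith
            · apply mul_nonneg hK; linarith
  have hU : E ∩ Icc a b = ⋃ j : ℕ, (Er (1 / ((j : ℝ) + 1)) ∩ Icc a b) := by
    ext x
    simp only [mem_inter_iff, mem_iUnion]
    constructor
    · rintro ⟨hx, hxI⟩
      obtain ⟨r, hr, h⟩ := h2 x hx
      obtain ⟨j, hj⟩ := exists_nat_one_div_lt hr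
      exact ⟨j, ⟨hx, fun a b hx hlt => h a b hx (hlt.trans hj)⟩, hxI⟩
    · rintro ⟨j, hx, hxI⟩
      exact ⟨hx.1, hxI⟩
  have hmono : Monotone (fun j : ℕ => Er (1 / ((j : ℝ) + 1)) ∩ Icc a b) := by
    intro i j hij
    apply inter_subset_inter_left
    intro x hx
    refine ⟨hx.1, fun a b hxI hlt => hx.2 a b hxI (hlt.trans_le ?_)⟩
    apply one_div_le_one_div_of_le (by positivity)
    have : (i : ℝ) ≤ j := by exact_mod_cast hij
    linarith
  rw [hU, hmono.measure_iUnion]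
  apply iSup_le
  intro j
  have hr : (0 : ℝ) < 1 / ((j : ℝ) + 1) := by positivity
  obtain ⟨k, hk⟩ := pow_unbounded_of_one_lt ((b - a) / (1 / ((j : ℝ) + 1))) (one_lt_two)
  exact key _ hr k a b hab hp (by rwa [div_lt_iff₀ hr] at hk)

/-- Subdivision lemma. -/
lemma subdivide (E : Set ℝ) (K l : ℝ) (hK : 0 ≤ K) (hl : 0 < l) (A B : ℝ)
    (h1 : ∀ a b : ℝ, A ≤ a → b ≤ B → l ≤ b - a → b - a ≤ 2 * l →
      volume (E ∩ Icc a b) ≤ ENNReal.ofReal (K * (b - a)))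
    (hab : l ≤ B - A) :
    volume (E ∩ Icc A B) ≤ ENNReal.ofReal (K * (B - A)) := by
  have key : ∀ k : ℕ, ∀ a b : ℝ, A ≤ a → b ≤ B → l ≤ b - a → b - a ≤ 2 ^ (k + 1) * l →
      volume (E ∩ Icc a b) ≤ ENNReal.ofReal (K * (b - a)) := by
    intro k
    induction k with
    | zero => intro a b h h' h'' h3; exact h1 a b h h' h'' (by simpa using h3)
    | succ k ih =>
      intro a b hA hB hlb hub
      by_cases h2 : b - a ≤ 2 * l
      · exact h1 a b hA hB hlb h2
      push Not at h2
      have hlt' : (b - a) / 2 ≤ 2 ^ (k + 1) * l := by rw [pow_succ] at hub; linarith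
      have hl := ih a ((a + b) / 2) hA (by linarith) (by linarith) (by linarith)
      have hr' := ih ((a + b) / 2) b (by linarith) hB (by linarith) (by linarith)
      calc volume (E ∩ Icc a b)
          ≤ volume ((E ∩ Icc a ((a + b) / 2)) ∪ (E ∩ Icc ((a + b) / 2) b)) := by
            apply measure_mono
            rintro x ⟨hx, hx1, hx2⟩
            rcases le_total x ((a + b) / 2) with h | h
            · exact Or.inl ⟨hx, hx1, h⟩
            · exact Or.inr ⟨hx, h, hx2⟩
        _ ≤ _ := measure_union_le _ _
        _ ≤ ENNReal.ofReal (K * ((a + b) / 2 - a)) + ENNReal.ofReal (K * (b - (a + b) / 2)) :=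
            add_le_add hl hr'
        _ = _ := by
            rw [← ENNReal.ofReal_add]
            · congr 1; ring
            · apply mul_nonneg hK; linarith
            · apply mul_nonneg hK; linarith
  obtain ⟨k, hk⟩ := pow_unbounded_of_one_lt ((B - A) / l) (one_lt_two (α := ℝ))
  refine key k A B le_rfl le_rfl hab ?_
  rw [div_lt_iff₀ hl] at hk
  rw [pow_succ]
  nlinarith

/-- Elements outside the chain `F` comparable with all of `F`. -/
def Comp {S : Type*} [PartialOrder S] (F : Finset S) : Set S :=
  {W | W ∉ F ∧ ∀ Z ∈ F, W ≤ Z ∨ Z ≤ W}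

/-- `x` is marked by a chain extending `F`. -/
def Marked {S : Type*} [PartialOrder S] (ψ : S → ℝ → ℝ) (ε : ℝ) (F : Finset S) (x : ℝ) : Prop :=
  ∃ F' : Finset S, F ⊆ F' ∧ IsChain (· ≤ ·) (F' : Set S) ∧
    (∀ W ∈ F', W ∉ F → ε ≤ ψ W x ∧ ψ W x ≤ 1) ∧ ∀ W ∈ Comp F', ε ≤ ψ W x

/-- Uniform sublevel set estimate. -/
def GoodFam {S : Type*} (s : ℝ → ℝ) (ψ : S → ℝ → ℝ) : Prop :=
  (∀ W, Continuous (ψ W)) ∧ ∀ η > 0, ∀ W, ∀ a b ρ : ℝ, a < b → 0 < ρ →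
    (∃ y ∈ Icc a b, ρ ≤ ψ W y) →
    volume {x | x ∈ Icc a b ∧ ψ W x < s η * ρ} ≤ ENNReal.ofReal (η * (b - a))

lemma comp_insert {S : Type*} [PartialOrder S] [DecidableEq S] (F : Finset S) (W : S) :
    Comp (insert W F) ⊆ Comp F := by
  intro Z hZ
  exact ⟨fun h => hZ.1 (Finset.mem_insert_of_mem h), fun Y hY => hZ.2 Y (Finset.mem_insert_of_mem hY)⟩

lemma chain_insert {S : Type*} [PartialOrder S] [DecidableEq S] (F : Finset S) (W : S)
    (hF : IsChain (· ≤ ·) (F : Set S)) (hW : W ∈ Comp F) :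
    IsChain (· ≤ ·) ((insert W F : Finset S) : Set S) := by
  rw [Finset.coe_insert]
  exact hF.insert (fun b hb _ => hW.2 b hb)

/-- Quantitative nondivergence (Kleinbock and Margulis), abstract form. -/
lemma nondiv {S : Type*} [PartialOrder S] (s : ℝ → ℝ) (hs : ∀ η > 0, 0 < s η ∧ s η ≤ 1) (N : ℕ)
    (hN : ∀ F : Finset S, IsChain (· ≤ ·) (F : Set S) → F.card ≤ N) (m : ℕ) :
    ∀ θ > 0, ∀ ρ > 0, ρ ≤ 1 → ∃ ε > 0, ε ≤ ρ ∧ ∀ ψ : S → ℝ → ℝ, GoodFam s ψ → ∀ F : Finset S,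
      IsChain (· ≤ ·) (F : Set S) → N ≤ F.card + m → ∀ a b : ℝ, a < b →
      (∀ W ∈ Comp F, ∃ y ∈ Icc a b, ρ ≤ ψ W y) →
      volume ({x | ¬ Marked ψ ε F x} ∩ Icc a b) ≤ ENNReal.ofReal (θ * (b - a)) := by
  classical
  induction m with
  | zero =>
    intro θ hθ ρ hρ hρ1
    refine ⟨ρ, hρ, le_rfl, ?_⟩
    intro ψ hψ F hF hc a b hab hsup
    have : {x | ¬ Marked ψ ρ F x} ∩ Icc a b = ∅ := by
      ext x
      simp only [mem_inter_iff, mem_ofPred_eq, mem_empty_iff_false, iff_false, not_and]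
      intro h
      exfalso
      apply h
      refine ⟨F, Finset.Subset.refl _, hF, fun W h h' => absurd h h', ?_⟩
      intro W hW
      exfalso
      have := hN _ (chain_insert F W hF hW)
      rw [Finset.card_insert_of_notMem hW.1] at this
      omega
    rw [this]; simp
  | succ m ih =>
    intro θ hθ ρ hρ hρ1
    obtain ⟨hκ, hκ1⟩ := hs (1/3) (by norm_num)
    set κ := s (1/3) with hκdef
    have hκρ : 0 < κ * ρ := mul_pos hκ hρ
    have hκρ1 : κ * ρ ≤ ρ := by nlinarith
    obtain ⟨ε₁, hε₁, hε₁ρ, H⟩ := ih (θ/2) (by linarith) (κ * ρ) hκρ (by linarith)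
    obtain ⟨hs2, hs21⟩ := hs (θ/2) (by linarith)
    set ε := min ε₁ (s (θ/2) * (κ * ρ)) with hε
    have hεpos : 0 < ε := lt_min hε₁ (mul_pos hs2 hκρ)
    have hερ : ε ≤ ρ := (min_le_left _ _).trans (hε₁ρ.trans hκρ1)
    refine ⟨ε, hεpos, hερ, ?_⟩
    intro ψ hψ F hF hc a b hab hsup
    apply bisect_cover _ (fun a b => ∃ W ∈ Comp F, ∀ y ∈ Icc a b, ψ W y < ρ) θ hθ.le
    · rintro a b a' b' hab hnp hlen haa hbb ⟨W₀, hW₀, hlt⟩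
      push Not at hnp
      have hab' : a' < b' := by linarith
      have hsup' : ∀ W ∈ Comp F, ∃ y ∈ Icc a' b', κ * ρ ≤ ψ W y := by
        intro W hW
        by_contra hcon
        push Not at hcon
        have h1 := hψ.2 (1/3) (by norm_num) W a b ρ hab hρ (hnp W hW)
        have h2 : volume (Icc a' b') ≤ volume {x | x ∈ Icc a b ∧ ψ W x < s (1/3) * ρ} := by
          apply measure_mono
          intro y hy
          exact ⟨⟨haa.trans hy.1, hy.2.trans hbb⟩, hcon y hy⟩
        have h3 := h2.trans h1
        rw [Real.volume_Icc, ENNReal.ofReal_le_ofReal_iff (by linarith)] at h3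
        linarith
      have hI := H ψ hψ (insert W₀ F) (chain_insert F W₀ hF hW₀)
        (by rw [Finset.card_insert_of_notMem hW₀.1]; omega) a' b' hab'
        (fun W hW => hsup' W (comp_insert F W₀ hW))
      have hS := hψ.2 (θ/2) (by linarith) W₀ a' b' (κ * ρ) hab' hκρ (hsup' W₀ hW₀)
      calc volume ({x | ¬ Marked ψ ε F x} ∩ Icc a' b')
          ≤ volume (({x | ¬ Marked ψ ε₁ (insert W₀ F) x} ∩ Icc a' b') ∪
              {x | x ∈ Icc a' b' ∧ ψ W₀ x < s (θ/2) * (κ * ρ)}) := by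
            apply measure_mono
            rintro x ⟨hx, hxI⟩
            by_contra hcon
            simp only [mem_union, mem_inter_iff, mem_ofPred_eq, not_or, not_and, not_lt] at hcon
            have hM : Marked ψ ε₁ (insert W₀ F) x := by
              by_contra h
              exact hcon.1 h hxI
            have hge := hcon.2 hxI
            apply hx
            obtain ⟨F', hFF, hch, h1, h2⟩ := hM
            refine ⟨F', (Finset.subset_insert _ _).trans hFF, hch, ?_, ?_⟩
            · intro W hW hWF
              by_cases hWW : W = W₀
              · subst hWW
                exact ⟨(min_le_right _ _).trans hge, ((hlt x hxI).le).trans hρ1⟩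
              · have := h1 W hW (by simp [hWW, hWF])
                exact ⟨(min_le_left _ _).trans this.1, this.2⟩
            · intro W hW
              exact (min_le_left _ _).trans (h2 W hW)
        _ ≤ _ := measure_union_le _ _
        _ ≤ _ := add_le_add hI hS
        _ = _ := by
            rw [← ENNReal.ofReal_add]
            · congr 1; ring
            · apply mul_nonneg <;> linarith
            · apply mul_nonneg <;> linarith
    · intro x hx
      have : ∃ W ∈ Comp F, ψ W x < ρ := by
        by_contra hcon
        push Not at hcon
        exact hx ⟨F, Finset.Subset.refl _, hF, fun W h h' => absurd h h',
          fun W hW => hερ.trans (hcon W hW)⟩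
      obtain ⟨W, hW, hlt⟩ := this
      have hev : ∀ᶠ y in nhds x, ψ W y < ρ := (hψ.1 W).continuousAt.eventually_lt_const hlt
      obtain ⟨r, hr, hball⟩ := Metric.eventually_nhds_iff.1 hev
      refine ⟨r, hr, fun a b hxI hlen => ⟨W, hW, fun y hy => hball ?_⟩⟩
      rw [Real.dist_eq, abs_lt]
      constructor <;> linarith [hxI.1, hxI.2, hy.1, hy.2]
    · exact hab
    · push Not
      exact hsup

lemma mprod_le (s : Multiset ℂ) (f g : ℂ → ℝ) (C : ℝ) (hC : 0 ≤ C)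
    (h : ∀ z ∈ s, 0 ≤ f z ∧ 0 ≤ g z ∧ f z ≤ C * g z) :
    0 ≤ (s.map f).prod ∧ 0 ≤ (s.map g).prod ∧
      (s.map f).prod ≤ C ^ (Multiset.card s) * (s.map g).prod := by
  induction s using Multiset.induction_on with
  | empty => simp
  | cons a s ih =>
    obtain ⟨i1, i2, i3⟩ := ih (fun z hz => h z (Multiset.mem_cons_of_mem hz))
    obtain ⟨j1, j2, j3⟩ := h a (Multiset.mem_cons_self a s)
    simp only [Multiset.map_cons, Multiset.prod_cons, Multiset.card_cons]
    refine ⟨mul_nonneg j1 i1, mul_nonneg j2 i2, ?_⟩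
    calc f a * (s.map f).prod ≤ (C * g a) * (C ^ (Multiset.card s) * (s.map g).prod) :=
          mul_le_mul j3 i3 i1 (by positivity)
      _ = _ := by rw [pow_succ]; ring

lemma eval_abs (p : ℝ[X]) (x : ℝ) :
    |p.eval x| = |p.leadingCoeff| *
      (((p.map (algebraMap ℝ ℂ)).roots).map (fun z => ‖(x : ℂ) - z‖)).prod := by
  have h1 := (IsAlgClosed.splits (p.map (algebraMap ℝ ℂ))).eval_eq_prod_roots (x : ℂ)
  have h2 : (p.map (algebraMap ℝ ℂ)).eval (x : ℂ) = ((p.eval x : ℝ) : ℂ) := by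
    have := Polynomial.eval_map_apply (f := algebraMap ℝ ℂ) (p := p) x
    simpa using this
  rw [h2] at h1
  have h3 := congrArg norm h1
  rw [Complex.norm_real, Real.norm_eq_abs] at h3
  rw [h3, norm_mul, Polynomial.leadingCoeff_map]
  congr 1
  · simp
  · rw [← map_multiset_prod_norm]
    simp
where
  map_multiset_prod_norm {s : Multiset ℂ} : (s.map (fun z => ‖z‖)).prod = ‖s.prod‖ := by
    induction s using Multiset.induction_on with
    | empty => simp
    | cons a s ih => simp [ih]

lemma roots_lemma (p : ℝ[X]) (d : ℕ) (hd : p.natDegree ≤ d) (η : ℝ) (hη : 0 < η) (a b : ℝ)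
    (hab : a < b) : ∃ Z : Set ℝ, volume Z ≤ ENNReal.ofReal (2 * d * η * (b - a)) ∧
      ∀ x ∈ Icc a b, x ∉ Z → (∀ y ∈ Icc a b, |p.eval y| ≤ (1 + 1 / η) ^ d * |p.eval x|) ∧
        |p.leadingCoeff| * (η * (b - a)) ^ p.natDegree ≤ |p.eval x| := by
  classical
  set R := (p.map (algebraMap ℝ ℂ)).roots with hR
  have hl : 0 < η * (b - a) := mul_pos hη (by linarith)
  have hcard : Multiset.card R = p.natDegree := by
    rw [hR, ← (IsAlgClosed.splits (p.map (algebraMap ℝ ℂ))).natDegree_eq_card_roots]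
    simp
  refine ⟨⋃ z ∈ R.toFinset, Metric.ball z.re (η * (b - a)), ?_, ?_⟩
  · calc volume (⋃ z ∈ R.toFinset, Metric.ball z.re (η * (b - a)))
        ≤ ∑ z ∈ R.toFinset, volume (Metric.ball z.re (η * (b - a))) :=
          measure_biUnion_finset_le _ _
      _ = (R.toFinset.card : ENNReal) * ENNReal.ofReal (2 * (η * (b - a))) := by
          simp [Real.volume_ball]
      _ ≤ (d : ENNReal) * ENNReal.ofReal (2 * (η * (b - a))) := by
          gcongr
          exact (Multiset.toFinset_card_le R).trans (hcard ▸ hd)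
      _ = _ := by
          rw [← ENNReal.ofReal_natCast, ← ENNReal.ofReal_mul (by positivity)]
          congr 1; ring
  · intro x hx hxZ
    have hdist : ∀ z ∈ R, η * (b - a) ≤ ‖(x : ℂ) - z‖ := by
      intro z hz
      have : ¬ (x ∈ Metric.ball z.re (η * (b - a))) := by
        intro h
        apply hxZ
        simp only [mem_iUnion]
        exact ⟨z, by simpa using hz, h⟩
      rw [Metric.mem_ball, Real.dist_eq, not_lt] at this
      refine this.trans ?_
      have := Complex.abs_re_le_norm ((x : ℂ) - z)
      simpa using this
    constructor
    · intro y hy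
      rw [eval_abs p y, eval_abs p x, ← hR]
      have h1 : (R.map (fun z => ‖(y : ℂ) - z‖)).prod ≤
          (1 + 1 / η) ^ (Multiset.card R) * (R.map (fun z => ‖(x : ℂ) - z‖)).prod := by
        refine (mprod_le R _ _ (1 + 1 / η) (by positivity) ?_).2.2
        intro z hz
        refine ⟨norm_nonneg _, norm_nonneg _, ?_⟩
        have h2 : ‖(y : ℂ) - z‖ ≤ ‖(y : ℂ) - x‖ + ‖(x : ℂ) - z‖ := by
          have := norm_add_le ((y : ℂ) - x) ((x : ℂ) - z)
          simpa using this
        have h3 : ‖(y : ℂ) - x‖ ≤ b - a := by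
          rw [← Complex.ofReal_sub, Complex.norm_real, Real.norm_eq_abs, abs_le]
          constructor <;> linarith [hx.1, hx.2, hy.1, hy.2]
        have h4 : b - a ≤ 1 / η * ‖(x : ℂ) - z‖ := by
          have := hdist z hz
          rw [one_div, inv_mul_eq_div, le_div_iff₀ hη]; linarith
        linarith
      have h0 : 0 ≤ (R.map (fun z => ‖(x : ℂ) - z‖)).prod := by
        apply Multiset.prod_nonneg
        intro r hr
        obtain ⟨z, _, rfl⟩ := Multiset.mem_map.1 hr
        exact norm_nonneg _
      have h5 : (1 + 1 / η) ^ (Multiset.card R) ≤ (1 + 1 / η) ^ d := by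
        apply pow_le_pow_right₀
        · have : 0 < 1 / η := by positivity
          linarith
        · exact hcard ▸ hd
      calc _ ≤ |p.leadingCoeff| * ((1 + 1 / η) ^ d * (R.map (fun z => ‖(x : ℂ) - z‖)).prod) := by
            gcongr
            exact h1.trans (by gcongr)
        _ = _ := by ring
    · rw [eval_abs p x, ← hR]
      gcongr
      have := (mprod_le R (fun _ => η * (b - a)) (fun z => ‖(x : ℂ) - z‖) 1 (by norm_num) ?_).2.2
      · simpa [hcard] using this
      · intro z hz
        exact ⟨hl.le, norm_nonneg _, by simpa using hdist z hz⟩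

/-- There is a point where a polynomial is at least as large as its leading term suggests. -/
lemma exists_large (p : ℝ[X]) (n : ℕ) (hd : p.natDegree ≤ n) (a b : ℝ) (hab : a < b) :
    ∃ x ∈ Icc a b, |p.leadingCoeff| * ((b - a) / (4 * (n + 1))) ^ p.natDegree ≤ |p.eval x| := by
  have hη : (0 : ℝ) < 1 / (4 * (n + 1)) := by positivity
  obtain ⟨Z, hZ, h⟩ := roots_lemma p n hd (1 / (4 * (n + 1))) hη a b hab
  by_contra hcon
  push Not at hcon
  have : Icc a b ⊆ Z := by
    intro x hx
    by_contra hxZ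
    have h1 := (h x hx hxZ).2
    have h2 := hcon x hx
    rw [one_div_mul_eq_div] at h1
    linarith
  have h3 := (measure_mono this).trans hZ
  rw [Real.volume_Icc, ENNReal.ofReal_le_ofReal_iff (by have : 0 < b - a := by linarith
                                                        positivity)] at h3
  have h4 : 2 * (n : ℝ) * (1 / (4 * (n + 1))) ≤ 1 / 2 := by
    rw [mul_one_div, div_le_div_iff₀ (by positivity) (by norm_num)]; linarith
  have h5 : 2 * (n : ℝ) * (1 / (4 * (n + 1))) * (b - a) ≤ 1 / 2 * (b - a) := by
    apply mul_le_mul_of_nonneg_right h4; linarith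
  linarith

/-- The sublevel constant for polynomials of degree at most `d`. -/
noncomputable def sfun (d : ℕ) (η : ℝ) : ℝ := ((1 + 2 * (d + 1) / η) ^ d)⁻¹

lemma sfun_pos (d : ℕ) (η : ℝ) (hη : 0 < η) : 0 < sfun d η ∧ sfun d η ≤ 1 := by
  unfold sfun
  constructor
  · positivity
  · apply inv_le_one_of_one_le₀
    apply one_le_pow₀
    have : 0 < 2 * ((d : ℝ) + 1) / η := by positivity
    linarith

lemma goodFam_of_poly {S : Type*} (d : ℕ) (ψ : S → ℝ → ℝ)
    (h : ∀ W, ∃ (ι : Type) (_ : Fintype ι) (p : ι → ℝ[X]), (∀ i, (p i).natDegree ≤ d) ∧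
      ∀ x, ψ W x = ‖fun i => (p i).eval x‖) : GoodFam (sfun d) ψ := by
  constructor
  · intro W
    obtain ⟨ι, hι, p, hp, hψ⟩ := h W
    have : ψ W = fun x => ‖fun i => (p i).eval x‖ := funext hψ
    rw [this]
    exact (continuous_pi fun i => (p i).continuous).norm
  · rintro η hη W a b ρ hab hρ ⟨y, hy, hyρ⟩
    obtain ⟨ι, hι, p, hp, hψ⟩ := h W
    have hex : ∃ i, ρ ≤ |(p i).eval y| := by
      by_contra hcon
      push Not at hcon
      rw [hψ] at hyρ
      have := (pi_norm_lt_iff hρ (x := fun i => (p i).eval y)).2 hcon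
      linarith
    obtain ⟨i, hi⟩ := hex
    have hη' : (0 : ℝ) < η / (2 * (d + 1)) := by positivity
    obtain ⟨Z, hZ, hh⟩ := roots_lemma (p i) d (hp i) (η / (2 * (d + 1))) hη' a b hab
    refine (measure_mono ?_).trans (hZ.trans ?_)
    · rintro x ⟨hx, hlt⟩
      by_contra hxZ
      have h1 := (hh x hx hxZ).1 y hy
      have h2 : |(p i).eval x| ≤ ψ W x := by
        rw [hψ]
        exact norm_le_pi_norm (fun i => (p i).eval x) i
      have h3 : |(p i).eval x| < sfun d η * ρ := h2.trans_lt hlt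
      unfold sfun at h3
      rw [one_div_div, ] at h1
      rw [inv_mul_eq_div, lt_div_iff₀ (by positivity)] at h3
      linarith
    · apply ENNReal.ofReal_le_ofReal
      apply mul_le_mul_of_nonneg_right _ (by linarith)
      rw [mul_div_assoc', div_le_iff₀ (by positivity)]
      nlinarith

lemma det_expand {R : Type*} [CommRing R] {k n : ℕ} (M : Matrix (Fin k) (Fin n) R)
    (N : Matrix (Fin n) (Fin k) R) :
    (M * N).det = ∑ g : Fin k → Fin n, (∏ l, N (g l) l) * (M.submatrix id g).det := by
  simp only [Matrix.det_apply', Matrix.mul_apply, Finset.prod_univ_sum, Finset.mul_sum,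
    Fintype.piFinset_univ]
  rw [Finset.sum_comm]
  refine Finset.sum_congr rfl fun g _ => Finset.sum_congr rfl fun σ _ => ?_
  rw [Finset.prod_mul_distrib]
  simp only [Matrix.submatrix_apply, id]
  ring

/-- Sup norm of the vector of maximal minors. -/
noncomputable def mm {k n : ℕ} (M : Matrix (Fin k) (Fin n) ℝ) : ℝ :=
  ‖fun f : Fin k → Fin n => (M.submatrix id f).det‖

lemma le_mm {k n : ℕ} (M : Matrix (Fin k) (Fin n) ℝ) (f : Fin k → Fin n) :
    |(M.submatrix id f).det| ≤ mm M :=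
  norm_le_pi_norm (fun f : Fin k → Fin n => (M.submatrix id f).det) f

lemma mm_nonneg {k n : ℕ} (M : Matrix (Fin k) (Fin n) ℝ) : 0 ≤ mm M := norm_nonneg _

lemma mm_mul {k n : ℕ} (T : Matrix (Fin k) (Fin k) ℝ) (M : Matrix (Fin k) (Fin n) ℝ) :
    mm (T * M) = |T.det| * mm M := by
  unfold mm
  have : (fun f : Fin k → Fin n => ((T * M).submatrix id f).det) =
      T.det • (fun f : Fin k → Fin n => (M.submatrix id f).det) := by
    funext f
    rw [Pi.smul_apply, smul_eq_mul, ← Matrix.det_mul]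
    rfl
  rw [this, norm_smul, Real.norm_eq_abs]

/-- Laplace expansion bound. -/
lemma mm_cons {k n : ℕ} (M : Matrix (Fin (k + 1)) (Fin n) ℝ) (B : ℝ)
    (hB : ∀ j, |M 0 j| ≤ B) (hB0 : 0 ≤ B) :
    mm M ≤ (k + 1) * B * mm (M.submatrix Fin.succ id) := by
  unfold mm
  rw [pi_norm_le_iff_of_nonneg (by have := mm_nonneg (M.submatrix Fin.succ id)
                                   unfold mm at this
                                   positivity)]
  intro f
  rw [Real.norm_eq_abs, Matrix.det_succ_row_zero]
  refine (Finset.abs_sum_le_sum_abs _ _).trans ?_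
  have : ∀ j ∈ (Finset.univ : Finset (Fin (k+1))),
      |(-1) ^ (j : ℕ) * (M.submatrix id f) 0 j *
        ((M.submatrix id f).submatrix Fin.succ j.succAbove).det| ≤
        B * mm (M.submatrix Fin.succ id) := by
    intro j _
    rw [abs_mul, abs_mul, abs_pow, abs_neg, abs_one, one_pow, one_mul]
    apply mul_le_mul (hB _) _ (abs_nonneg _) hB0
    exact le_mm (M.submatrix Fin.succ id) (f ∘ j.succAbove)
  refine (Finset.sum_le_sum this).trans ?_
  simp [mm]
  linarith

/-- Rational rows of an integer matrix. -/
def qrows {k n : ℕ} (A : Matrix (Fin k) (Fin n) ℤ) : Fin k → (Fin n → ℚ) :=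
  fun i j => (A i j : ℚ)

/-- `A` is an integral basis matrix for the rational subspace `W`. -/
def Adm {k n : ℕ} (W : Submodule ℚ (Fin n → ℚ)) (A : Matrix (Fin k) (Fin n) ℤ) : Prop :=
  LinearIndependent ℚ (qrows A) ∧ Submodule.span ℚ (range (qrows A)) = W

lemma Adm.finrank {k n : ℕ} {W : Submodule ℚ (Fin n → ℚ)} {A : Matrix (Fin k) (Fin n) ℤ}
    (h : Adm W A) : Module.finrank ℚ W = k := by
  rw [← h.2, finrank_span_eq_card h.1, Fintype.card_fin]

lemma exists_clear {n : ℕ} (v : Fin n → ℚ) : ∃ (u : Fin n → ℤ) (q : ℚ), q ≠ 0 ∧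
    (fun j => (u j : ℚ)) = q • v := by
  refine ⟨fun j => (v j).num * ∏ i ∈ Finset.univ.erase j, ((v i).den : ℤ),
    ∏ i, ((v i).den : ℚ), ?_, ?_⟩
  · rw [Finset.prod_ne_zero_iff]
    intro i _
    exact_mod_cast (v i).den_nz
  · funext j
    rw [Pi.smul_apply, smul_eq_mul, ← Finset.mul_prod_erase _ _ (Finset.mem_univ j)]
    push_cast
    have := Rat.mul_den_eq_num (v j)
    rw [← this]; ring

lemma exists_adm {n : ℕ} (W : Submodule ℚ (Fin n → ℚ)) :
    ∃ (k : ℕ) (A : Matrix (Fin k) (Fin n) ℤ), Adm W A := by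
  set b := Module.finBasis ℚ W with hb
  have h1 : ∀ i, ∃ (u : Fin n → ℤ) (q : ℚˣ), (fun j => (u j : ℚ)) = q • (b i : Fin n → ℚ) := by
    intro i
    obtain ⟨u, q, hq, h⟩ := exists_clear (b i : Fin n → ℚ)
    exact ⟨u, Units.mk0 q hq, h⟩
  choose u q hu using h1
  refine ⟨Module.finrank ℚ W, u, ?_⟩
  have hrow : qrows u = q • (fun i => (b i : Fin n → ℚ)) := by
    funext i
    exact hu i
  have hli : LinearIndependent ℚ (fun i => (b i : Fin n → ℚ)) :=
    b.linearIndependent.map' W.subtype (Submodule.ker_subtype W)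
  have hli2 : LinearIndependent ℚ (qrows u) := by
    rw [hrow]; exact hli.units_smul q
  refine ⟨hli2, ?_⟩
  apply Submodule.eq_of_le_of_finrank_eq
  · rw [Submodule.span_le]
    rintro _ ⟨i, rfl⟩
    rw [hrow]
    exact W.smul_mem _ (b i).2
  · rw [finrank_span_eq_card hli2, Fintype.card_fin]

lemma exists_minor {k n : ℕ} (A : Matrix (Fin k) (Fin n) ℤ) (h : LinearIndependent ℚ (qrows A)) :
    ∃ f : Fin k → Fin n, (A.submatrix id f).det ≠ 0 := by
  by_contra hcon
  push Not at hcon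
  set M : Matrix (Fin k) (Fin n) ℚ := qrows A with hM
  have hinj : LinearMap.ker (M.vecMulLinear) = ⊥ := by
    rw [LinearMap.ker_eq_bot]
    exact Matrix.vecMul_injective_iff.2 h
  obtain ⟨g, hg⟩ := LinearMap.exists_leftInverse_of_injective _ hinj
  set N : Matrix (Fin n) (Fin k) ℚ := fun j l => g (Pi.single j 1) l with hN
  have hMN : M * N = 1 := by
    ext i l
    have h1 : g (M i) = Pi.single i 1 := by
      have := LinearMap.congr_fun hg (Pi.single i 1)
      simp at this
      exact this
    have h2 : M i = ∑ j, M i j • (Pi.single j 1 : Fin n → ℚ) := by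
      exact pi_eq_sum_univ' (M i)
    rw [h2, map_sum] at h1
    have h3 := congrFun h1 l
    rw [Finset.sum_apply] at h3
    simp only [map_smul, Pi.smul_apply, smul_eq_mul] at h3
    rw [Matrix.mul_apply, Matrix.one_apply]
    simp only [hN]
    rw [h3, Pi.single_apply]
    simp [eq_comm]
  have h4 := congrArg Matrix.det hMN
  rw [det_expand, Matrix.det_one] at h4
  have h5 : ∀ f : Fin k → Fin n, (M.submatrix id f).det = 0 := by
    intro f
    have := hcon f
    have h6 : M.submatrix id f = (A.submatrix id f).map (Int.castRingHom ℚ) := by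
      ext i j; rfl
    rw [h6, ← RingHom.mapMatrix_apply, ← RingHom.map_det, this]; simp
  simp [h5] at h4

/-- Integral size of the Plücker vector. -/
def mu {k n : ℕ} (A : Matrix (Fin k) (Fin n) ℤ) : ℕ :=
  ∑ f : Fin k → Fin n, (A.submatrix id f).det.natAbs

lemma mu_pos {k n : ℕ} {W : Submodule ℚ (Fin n → ℚ)} {A : Matrix (Fin k) (Fin n) ℤ}
    (h : Adm W A) : 0 < mu A := by
  obtain ⟨f, hf⟩ := exists_minor A h.1
  unfold mu
  apply Finset.sum_pos' (fun _ _ => Nat.zero_le _)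
  exact ⟨f, Finset.mem_univ _, Int.natAbs_pos.2 hf⟩

lemma exists_min {n : ℕ} (W : Submodule ℚ (Fin n → ℚ)) :
    ∃ (k : ℕ) (A : Matrix (Fin k) (Fin n) ℤ), Adm W A ∧
      ∀ B : Matrix (Fin k) (Fin n) ℤ, Adm W B → mu A ≤ mu B := by
  classical
  obtain ⟨k, A, hA⟩ := exists_adm W
  have hex : ∃ t : ℕ, ∃ B : Matrix (Fin k) (Fin n) ℤ, Adm W B ∧ mu B = t := ⟨_, A, hA, rfl⟩
  obtain ⟨B, hB, hBt⟩ := Nat.find_spec hex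
  exact ⟨k, B, hB, fun C hC => hBt ▸ Nat.find_min' hex ⟨C, hC, rfl⟩⟩

noncomputable def kk {n : ℕ} (W : Submodule ℚ (Fin n → ℚ)) : ℕ := (exists_min W).choose

noncomputable def AA {n : ℕ} (W : Submodule ℚ (Fin n → ℚ)) : Matrix (Fin (kk W)) (Fin n) ℤ :=
  (exists_min W).choose_spec.choose

lemma AA_adm {n : ℕ} (W : Submodule ℚ (Fin n → ℚ)) : Adm W (AA W) :=
  (exists_min W).choose_spec.choose_spec.1

lemma AA_min {n : ℕ} (W : Submodule ℚ (Fin n → ℚ)) (B : Matrix (Fin (kk W)) (Fin n) ℤ)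
    (hB : Adm W B) : mu (AA W) ≤ mu B :=
  (exists_min W).choose_spec.choose_spec.2 B hB

/-- Real version of an integer matrix. -/
def toR {k n : ℕ} (A : Matrix (Fin k) (Fin n) ℤ) : Matrix (Fin k) (Fin n) ℝ :=
  A.map (fun z : ℤ => (z : ℝ))

lemma toR_det {k n : ℕ} (A : Matrix (Fin k) (Fin n) ℤ) (f : Fin k → Fin n) :
    ((toR A).submatrix id f).det = (((A.submatrix id f).det : ℤ) : ℝ) := by
  have h6 : (toR A).submatrix id f = (A.submatrix id f).map (Int.castRingHom ℝ) := by
    ext i j; rfl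
  rw [h6, ← RingHom.mapMatrix_apply, ← RingHom.map_det]; simp

lemma AA_le {n l : ℕ} (W : Submodule ℚ (Fin n → ℚ)) (B : Matrix (Fin l) (Fin n) ℤ)
    (hB : Adm W B) (H : Matrix (Fin n) (Fin n) ℝ) : mm (toR (AA W) * H) ≤ mm (toR B * H) := by
  have hl : l = kk W := by rw [← hB.finrank, ← (AA_adm W).finrank]
  subst hl
  have hmem : ∀ i, ∃ c : Fin (kk W) → ℚ, ∑ j, c j • qrows (AA W) j = qrows B i := by
    intro i
    rw [← Submodule.mem_span_range_iff_exists_fun, (AA_adm W).2]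
    exact hB.2.le (Submodule.subset_span ⟨i, rfl⟩)
  choose T hT using hmem
  set TR : Matrix (Fin (kk W)) (Fin (kk W)) ℝ := fun i j => (T i j : ℝ) with hTR
  have hBT : toR B = TR * toR (AA W) := by
    ext i j
    have := congrFun (hT i) j
    rw [Finset.sum_apply] at this
    simp only [Pi.smul_apply, smul_eq_mul, qrows] at this
    rw [Matrix.mul_apply]
    simp only [toR, Matrix.map_apply, hTR]
    exact_mod_cast this.symm
  have hmuR : ∀ C : Matrix (Fin (kk W)) (Fin n) ℤ, (mu C : ℝ) =
      ∑ f : Fin (kk W) → Fin n, |((toR C).submatrix id f).det| := by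
    intro C
    unfold mu
    push_cast
    refine Finset.sum_congr rfl fun f _ => ?_
    rw [toR_det, Nat.cast_natAbs, Int.cast_abs]
  have hmu : (mu B : ℝ) = |TR.det| * mu (AA W) := by
    rw [hmuR, hmuR, Finset.mul_sum]
    refine Finset.sum_congr rfl fun f _ => ?_
    rw [← abs_mul, ← Matrix.det_mul, hBT]
    rfl
  have h1 : (mu (AA W) : ℝ) ≤ mu B := by exact_mod_cast AA_min W B hB
  have h2 : (0 : ℝ) < mu (AA W) := by exact_mod_cast mu_pos (AA_adm W)
  have h3 : 1 ≤ |TR.det| := by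
    rw [hmu] at h1
    by_contra h
    push Not at h
    nlinarith
  rw [hBT, Matrix.mul_assoc, mm_mul]
  nlinarith [mm_nonneg (toR (AA W) * H)]

/-- Submultiplicativity of covolumes. -/
lemma AA_sup {n : ℕ} (W : Submodule ℚ (Fin n → ℚ)) (v : Fin n → ℤ)
    (hv : (fun j => (v j : ℚ)) ∉ W) (H : Matrix (Fin n) (Fin n) ℝ) (B : ℝ)
    (hB : ∀ j, |∑ i, (v i : ℝ) * H i j| ≤ B) (hB0 : 0 ≤ B) :
    mm (toR (AA (W ⊔ Submodule.span ℚ {fun j => (v j : ℚ)})) * H) ≤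
      (n : ℝ) * B * mm (toR (AA W) * H) := by
  set C : Matrix (Fin (kk W + 1)) (Fin n) ℤ := Fin.cons v (AA W) with hC
  have hq : qrows C = Fin.cons (fun j => (v j : ℚ)) (qrows (AA W)) := by
    funext i
    refine Fin.cases ?_ (fun i => ?_) i
    · rfl
    · rfl
  have hadm : Adm (W ⊔ Submodule.span ℚ {fun j => (v j : ℚ)}) C := by
    constructor
    · rw [hq, linearIndependent_finCons]
      refine ⟨(AA_adm W).1, ?_⟩
      rw [(AA_adm W).2]; exact hv
    · rw [hq, Fin.range_cons, Submodule.span_insert, (AA_adm W).2, sup_comm]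
  refine (AA_le _ C hadm H).trans ?_
  have h1 := mm_cons (toR C * H) B (by
    intro j
    have := hB j
    rw [Matrix.mul_apply]
    exact this) hB0
  have h2 : (toR C * H).submatrix Fin.succ id = toR (AA W) * H := by
    ext i j
    rw [Matrix.submatrix_apply, Matrix.mul_apply, Matrix.mul_apply]
    rfl
  rw [h2] at h1
  refine h1.trans ?_
  have hk : (kk W : ℝ) + 1 ≤ n := by
    have := hadm.1.fintype_card_le_finrank
    simp at this
    exact_mod_cast this
  have := mm_nonneg (toR (AA W) * H)
  gcongr

/-- Coordinates: value, derivative and the remaining coefficients. -/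
noncomputable def Tm (m : ℕ) (x : ℝ) : Matrix (Fin (m + 2)) (Fin (m + 2)) ℝ :=
  fun i j => if j = 0 then x ^ (i : ℕ) else if j = 1 then (i : ℕ) * x ^ ((i : ℕ) - 1)
    else if i = j then 1 else 0

/-- Explicit inverse of `Tm`. -/
noncomputable def Gm (m : ℕ) (x : ℝ) : Matrix (Fin (m + 2)) (Fin (m + 2)) ℝ :=
  fun i j => if j = 0 then (if i = 0 then 1 else if i = 1 then -x else ((i : ℕ) - 1) * x ^ (i : ℕ))
    else if j = 1 then (if i = 0 then 0 else if i = 1 then 1 else -((i : ℕ) * x ^ ((i : ℕ) - 1)))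
    else if i = j then 1 else 0

lemma Tm_mul_Gm (m : ℕ) (x : ℝ) : Tm m x * Gm m x = 1 := by
  ext a j
  rw [Matrix.mul_apply, Fin.sum_univ_succ, Fin.sum_univ_succ]
  have h01 : ∀ i : Fin m, (i.succ.succ : Fin (m + 2)) ≠ 0 := fun i => Fin.succ_ne_zero _
  have h11 : ∀ i : Fin m, (i.succ.succ : Fin (m + 2)) ≠ 1 := by
    intro i h
    have := congrArg Fin.val h
    simp at this
  have hT : ∀ i : Fin m, Tm m x a i.succ.succ = if a = i.succ.succ then 1 else 0 := by
    intro i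
    simp [Tm, h01, h11]
  simp only [hT]
  refine Fin.cases ?_ (fun a => ?_) a
  · refine Fin.cases ?_ (fun j => ?_) j
    · simp [Tm, Gm, (h01 _).symm]
    · refine Fin.cases ?_ (fun j => ?_) j
      · simp [Tm, Gm, (h01 _).symm]
        rw [eq_comm, Matrix.one_apply_ne]
        intro h; have := congrArg Fin.val h; simp at this
      · simp [Tm, Gm, h01, h11, (h01 _).symm, (h11 _).symm]
  · refine Fin.cases ?_ (fun a => ?_) a
    · refine Fin.cases ?_ (fun j => ?_) j
      · simp [Tm, Gm, (h11 _).symm]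
        rw [eq_comm, Matrix.one_apply_ne]
        intro h; have := congrArg Fin.val h; simp at this
      · refine Fin.cases ?_ (fun j => ?_) j
        · simp [Tm, Gm, (h11 _).symm]
        · simp [Tm, Gm, h01, h11, (h01 _).symm, (h11 _).symm]
          rw [eq_comm, Matrix.one_apply_ne]
          intro h; have := congrArg Fin.val h; simp at this
    · have hs : ∀ g : Fin m → ℝ, ∑ i : Fin m, (if a.succ.succ = (i.succ.succ : Fin (m+2)) then (1:ℝ) else 0) * g i
          = g a := by
        intro g
        rw [Finset.sum_eq_single a]
        · simp
        · intro b _ hb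
          rw [if_neg, zero_mul]
          intro h
          apply hb
          exact (Fin.succ_injective _ (Fin.succ_injective _ h)).symm
        · simp
      rw [hs]
      refine Fin.cases ?_ (fun j => ?_) j
      · simp [Tm, Gm, h01, h11]
        ring
      · refine Fin.cases ?_ (fun j => ?_) j
        · simp [Tm, Gm, h01, h11]
          rw [eq_comm, Matrix.one_apply_ne]
          intro h; have := congrArg Fin.val h; simp at this
        · simp [Tm, Gm, h01, h11, (h01 _).symm, (h11 _).symm, Matrix.one_apply]

lemma Gm_bound (m : ℕ) (x : ℝ) (hx : |x| ≤ 1) (i j : Fin (m + 2)) : |Gm m x i j| ≤ m + 1 := by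
  have hm : (0 : ℝ) ≤ m := Nat.cast_nonneg m
  have hi : ((i : ℕ) : ℝ) ≤ m + 1 := by
    have := i.2
    have h : (i : ℕ) ≤ m + 1 := by omega
    exact_mod_cast h
  have hp : ∀ t : ℕ, |x| ^ t ≤ 1 := fun t => pow_le_one₀ (abs_nonneg _) hx
  unfold Gm
  split_ifs with h1 h2 h3 h4 h5 h6 h7
  · simpa using hm
  · rw [abs_neg]; linarith
  · rw [abs_mul, abs_pow]
    have h0 : (1 : ℝ) ≤ (i : ℕ) := by
      have : (i : ℕ) ≠ 0 := fun h => h2 (Fin.ext h)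
      exact_mod_cast Nat.one_le_iff_ne_zero.2 this
    rw [abs_of_nonneg (by linarith)]
    have := hp i
    have h9 : (0 : ℝ) ≤ |x| ^ (i : ℕ) := by positivity
    nlinarith
  · simp; linarith
  · simpa using hm
  · rw [abs_neg, abs_mul, abs_pow, Nat.abs_cast]
    have := hp (i - 1)
    have h9 : (0 : ℝ) ≤ |x| ^ ((i : ℕ) - 1) := by positivity
    have h0 : (0 : ℝ) ≤ (i : ℕ) := Nat.cast_nonneg _
    nlinarith
  · simpa using hm
  · simp; linarith

/-- Weighted coordinates. -/
noncomputable def Hm (m : ℕ) (w : Fin (m + 2) → ℝ) (x : ℝ) :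
    Matrix (Fin (m + 2)) (Fin (m + 2)) ℝ := fun i j => Tm m x i j * w j

lemma sum_update {k n : ℕ} (A : Matrix (Fin k) (Fin n) ℝ) (f : Fin k → Fin n) (l₀ : Fin k)
    (c : Fin n → ℝ) :
    (A * (Matrix.of fun (i : Fin n) (l : Fin k) =>
      if l = l₀ then c i else if i = f l then (1 : ℝ) else 0)).det =
      ∑ i, c i * (A.submatrix id (Function.update f l₀ i)).det := by
  have h1 : ∀ i, (A.submatrix id (Function.update f l₀ i)).det =
      Matrix.cramer (A.submatrix id f) (fun r => A r i) l₀ := by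
    intro i
    rw [Matrix.cramer_apply]
    congr 1
    ext r l
    by_cases h : l = l₀
    · subst h; simp
    · simp [h]
  have h2 : (A * (Matrix.of fun (i : Fin n) (l : Fin k) =>
      if l = l₀ then c i else if i = f l then (1 : ℝ) else 0)).det =
      Matrix.cramer (A.submatrix id f) (∑ i, c i • (fun r => A r i)) l₀ := by
    rw [Matrix.cramer_apply]
    congr 1
    ext r l
    by_cases h : l = l₀
    · subst h
      simp [Matrix.mul_apply, mul_comm]
    · simp [Matrix.mul_apply, h]
  rw [h2, map_sum, Finset.sum_apply]
  refine Finset.sum_congr rfl fun i _ => ?_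
  rw [h1 i, map_smul, Pi.smul_apply, smul_eq_mul]

lemma D_bound {k m : ℕ} (A : Matrix (Fin k) (Fin (m + 2)) ℝ) (f : Fin k → Fin (m + 2))
    (l₀ : Fin k) (w : Fin (m + 2) → ℝ) (hw : ∀ i, 0 < w i) (β : ℝ) (hβ : ∀ i, (w i)⁻¹ ≤ β)
    (x : ℝ) (hx : |x| ≤ 1) :
    |∑ i : Fin (m + 2), x ^ (i : ℕ) * (A.submatrix id (Function.update f l₀ i)).det| ≤
      (m + 2) ^ k * ((w 0)⁻¹ * ((m + 1) * β) ^ (k - 1)) * mm (A * Hm m w x) := by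
  have hβ0 : 0 < β := lt_of_lt_of_le (inv_pos.2 (hw 0)) (hβ 0)
  rw [← sum_update A f l₀ (fun i => x ^ (i : ℕ))]
  set M : Matrix (Fin (m + 2)) (Fin k) ℝ := Matrix.of fun (i : Fin (m + 2)) (l : Fin k) =>
      if l = l₀ then x ^ (i : ℕ) else if i = f l then (1 : ℝ) else 0 with hM
  set N : Matrix (Fin (m + 2)) (Fin k) ℝ := Matrix.of fun (i : Fin (m + 2)) (l : Fin k) =>
      if l = l₀ then (if i = 0 then (w 0)⁻¹ else 0) else (w i)⁻¹ * Gm m x i (f l) with hN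
  have hMN : M = Hm m w x * N := by
    ext a l
    rw [Matrix.mul_apply]
    by_cases h : l = l₀
    · simp only [hM, hN, Matrix.of_apply, h, if_true]
      rw [Finset.sum_eq_single 0]
      · simp [Hm, Tm, (hw 0).ne']
      · intro b _ hb
        simp [hb]
      · simp
    · simp only [hM, hN, Matrix.of_apply, h, if_false]
      have h1 := congrFun (congrFun (Tm_mul_Gm m x) a) (f l)
      rw [Matrix.mul_apply, Matrix.one_apply] at h1
      rw [← h1]
      refine Finset.sum_congr rfl fun i _ => ?_
      simp only [Hm]
      have := (hw i).ne'
      field_simp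
  rw [hMN, ← Matrix.mul_assoc, det_expand]
  refine (Finset.abs_sum_le_sum_abs _ _).trans ?_
  have hterm : ∀ g ∈ (Finset.univ : Finset (Fin k → Fin (m + 2))),
      |(∏ l, N (g l) l) * ((A * Hm m w x).submatrix id g).det| ≤
      ((w 0)⁻¹ * ((m + 1) * β) ^ (k - 1)) * mm (A * Hm m w x) := by
    intro g _
    rw [abs_mul]
    have h0 : 0 ≤ (w 0)⁻¹ := (inv_pos.2 (hw 0)).le
    apply mul_le_mul _ (le_mm _ g) (abs_nonneg _) (by positivity)
    rw [Finset.abs_prod]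
    rw [← Finset.mul_prod_erase _ _ (Finset.mem_univ l₀)]
    apply mul_le_mul _ _ (by positivity) h0
    · simp only [hN, Matrix.of_apply, if_true]
      split_ifs
      · rw [abs_of_nonneg h0]
      · simpa using h0
    · have h3 : ∀ l ∈ Finset.univ.erase l₀, |N (g l) l| ≤ (m + 1) * β := by
        intro l hl
        have hl' : l ≠ l₀ := Finset.ne_of_mem_erase hl
        simp only [hN, Matrix.of_apply, hl', if_false]
        rw [abs_mul, abs_of_pos (inv_pos.2 (hw (g l))), mul_comm]
        apply mul_le_mul (Gm_bound m x hx _ _) (hβ _) (inv_pos.2 (hw _)).le (by positivity)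
      refine (Finset.prod_le_prod (fun _ _ => abs_nonneg _) h3).trans ?_
      rw [Finset.prod_const, Finset.card_erase_of_mem (Finset.mem_univ _), Finset.card_univ,
        Fintype.card_fin]
  refine (Finset.sum_le_sum hterm).trans ?_
  rw [Finset.sum_const, Finset.card_univ, nsmul_eq_mul]
  simp
  apply le_of_eq
  ring

/-- Lower bound for covolumes of proper subspaces. -/
lemma lower_proper {k m : ℕ} (A : Matrix (Fin k) (Fin (m + 2)) ℤ)
    (hA : LinearIndependent ℚ (qrows A)) (hk : 1 ≤ k) (w : Fin (m + 2) → ℝ) (hw : ∀ i, 0 < w i)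
    (β : ℝ) (hβ : ∀ i, (w i)⁻¹ ≤ β) (a b : ℝ) (hab : a < b) (ha : -1 ≤ a) (hb : b ≤ 1)
    (hab1 : b - a ≤ 1) :
    ∃ x ∈ Icc a b, ((b - a) / (4 * (m + 2))) ^ (m + 2 - k) ≤
      (m + 2) ^ k * ((w 0)⁻¹ * ((m + 1) * β) ^ (k - 1)) * mm (toR A * Hm m w x) := by
  classical
  -- choose a nonzero minor with maximal index sum
  obtain ⟨f, hf, hmax⟩ : ∃ f : Fin k → Fin (m + 2), (A.submatrix id f).det ≠ 0 ∧
      ∀ g : Fin k → Fin (m + 2), (A.submatrix id g).det ≠ 0 →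
        ∑ l, (g l : ℕ) ≤ ∑ l, (f l : ℕ) := by
    obtain ⟨f₀, hf₀⟩ := exists_minor A hA
    obtain ⟨f, hf, h⟩ := Finset.exists_max_image
      (Finset.univ.filter fun f : Fin k → Fin (m + 2) => (A.submatrix id f).det ≠ 0)
      (fun f => ∑ l, (f l : ℕ)) ⟨f₀, by simpa using hf₀⟩
    exact ⟨f, by simpa using hf, fun g hg => h g (by simpa using hg)⟩
  have hinj : Function.Injective f := by
    intro l l' hll
    by_contra hne
    exact hf (Matrix.det_zero_of_column_eq hne (fun r => by simp [hll]))
  obtain ⟨l₀, _, hl₀⟩ := Finset.exists_min_image (Finset.univ : Finset (Fin k)) f ⟨⟨0, hk⟩, Finset.mem_univ _⟩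
  have hdeg : (f l₀ : ℕ) ≤ m + 2 - k := by
    have h1 : (Finset.univ.image f) ⊆ Finset.Ici (f l₀) := by
      intro j hj
      obtain ⟨l, _, rfl⟩ := Finset.mem_image.1 hj
      exact Finset.mem_Ici.2 (hl₀ l (Finset.mem_univ _))
    have h2 := Finset.card_le_card h1
    rw [Finset.card_image_of_injective _ hinj, Finset.card_univ, Fintype.card_fin, Fin.card_Ici] at h2
    omega
  set D : ℝ[X] := ∑ i : Fin (m + 2),
    C (((toR A).submatrix id (Function.update f l₀ i)).det) * X ^ (i : ℕ) with hD
  have heval : ∀ x, D.eval x = ∑ i : Fin (m + 2),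
      x ^ (i : ℕ) * ((toR A).submatrix id (Function.update f l₀ i)).det := by
    intro x
    rw [hD, eval_finsetSum]
    refine Finset.sum_congr rfl fun i _ => ?_
    rw [eval_mul, eval_C, eval_pow, eval_X, mul_comm]
  have hzero : ∀ i : Fin (m + 2), f l₀ < i →
      ((toR A).submatrix id (Function.update f l₀ i)).det = 0 := by
    intro i hi
    rw [toR_det]
    by_contra hne
    have hne' : (A.submatrix id (Function.update f l₀ i)).det ≠ 0 := by
      intro h; apply hne; rw [h]; simp
    have h1 := hmax _ hne'
    have h2 : ∑ l, ((Function.update f l₀ i) l : ℕ) > ∑ l, (f l : ℕ) := by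
      apply Finset.sum_lt_sum
      · intro l _
        by_cases h : l = l₀
        · subst h; simp only [Function.update_self]; exact le_of_lt hi
        · simp [h]
      · exact ⟨l₀, Finset.mem_univ _, by simp only [Function.update_self]; exact hi⟩
    omega
  have hcoeff : ∀ t : ℕ, D.coeff t = ∑ i : Fin (m + 2), if t = (i : ℕ) then
      ((toR A).submatrix id (Function.update f l₀ i)).det else 0 := by
    intro t
    rw [hD, finsetSum_coeff]
    refine Finset.sum_congr rfl fun i _ => ?_
    rw [coeff_C_mul, coeff_X_pow]
    split_ifs <;> simp
  have hlead : |D.coeff (f l₀)| ≥ 1 := by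
    rw [hcoeff, Finset.sum_eq_single (f l₀)]
    · rw [if_pos rfl, Function.update_eq_self, toR_det, ← Int.cast_abs]
      exact_mod_cast Int.one_le_abs hf
    · intro i _ hi
      rw [if_neg]
      intro h
      exact hi (Fin.ext h.symm)
    · simp
  have hnd : D.natDegree = (f l₀ : ℕ) := by
    apply natDegree_eq_of_le_of_coeff_ne_zero
    · rw [natDegree_le_iff_coeff_eq_zero]
      intro t ht
      rw [hcoeff]
      apply Finset.sum_eq_zero
      intro i _
      split_ifs with h
      · apply hzero
        rw [Fin.lt_def, ← h]; exact ht
      · rfl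
    · intro h
      rw [h] at hlead
      simp at hlead
      linarith
  have hm0 : (0 : ℝ) ≤ m := Nat.cast_nonneg m
  obtain ⟨x, hx, hxl⟩ := exists_large D (m + 1) (by rw [hnd]; have := (f l₀).2; omega) a b hab
  refine ⟨x, hx, ?_⟩
  have hx1 : |x| ≤ 1 := by rw [abs_le]; constructor <;> linarith [hx.1, hx.2]
  have h1 := D_bound (toR A) f l₀ w hw β hβ x hx1
  rw [← heval] at h1
  refine le_trans ?_ (hxl.trans h1)
  have hq0 : 0 < (b - a) / (4 * ((m : ℝ) + 2)) := by
    apply div_pos <;> linarith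
  have hq1 : (b - a) / (4 * ((m : ℝ) + 2)) ≤ 1 := by
    rw [div_le_one (by linarith)]; linarith
  have h2 : ((b - a) / (4 * ((m : ℝ) + 2))) ^ (m + 2 - k) ≤
      ((b - a) / (4 * ((m : ℝ) + 2))) ^ (f l₀ : ℕ) := pow_le_pow_of_le_one hq0.le hq1 hdeg
  have h3 : 1 ≤ |D.leadingCoeff| := by
    rw [leadingCoeff, hnd]; exact hlead
  rw [hnd]
  push_cast
  have h4 : (m : ℝ) + 1 + 1 = m + 2 := by ring
  rw [h4]
  refine h2.trans ?_
  have : 0 ≤ ((b - a) / (4 * ((m : ℝ) + 2))) ^ (f l₀ : ℕ) := by positivity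
  nlinarith

lemma det_Hm (m : ℕ) (w : Fin (m + 2) → ℝ) (x : ℝ) : (Hm m w x).det = ∏ j, w j := by
  rw [Matrix.det_of_isLowerTriangular]
  · refine Finset.prod_congr rfl fun j _ => ?_
    unfold Hm Tm
    by_cases h0 : j = 0
    · subst h0; simp
    · by_cases h1 : j = 1
      · subst h1; simp
      · simp [h0, h1]
  · intro i j hij
    have hij' : i < j := hij
    unfold Hm Tm
    have h0 : j ≠ 0 := by rintro rfl; exact absurd hij' (Fin.not_lt_zero _)
    have hne : i ≠ j := ne_of_lt hij'
    by_cases h1 : j = 1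
    · subst h1
      have : i = 0 := by
        apply Fin.ext
        have := Fin.lt_def.1 hij'
        simp at this
        simp [this]
      subst this; simp
    · simp [h0, h1, hne]

lemma lower_top {m : ℕ} (A : Matrix (Fin (m + 2)) (Fin (m + 2)) ℤ)
    (hA : LinearIndependent ℚ (qrows A)) (w : Fin (m + 2) → ℝ) (hw : ∀ i, 0 < w i) (x : ℝ) :
    ∏ j, w j ≤ mm (toR A * Hm m w x) := by
  obtain ⟨f, hf⟩ := exists_minor A hA
  have h1 : (toR A * Hm m w x).submatrix id id = toR A * Hm m w x := Matrix.submatrix_id_id _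
  refine le_trans ?_ (le_mm _ id)
  rw [h1, Matrix.det_mul, det_Hm, abs_mul]
  have hA' : A.det ≠ 0 := by
    intro h
    apply hf
    have hinj : Function.Injective f := by
      intro l l' hll
      by_contra hne
      exact hf (Matrix.det_zero_of_column_eq hne (fun r => by simp [hll]))
    have hbij := (Finite.injective_iff_bijective).1 hinj
    have := Matrix.det_permute' (Equiv.ofBijective f hbij) A
    have h2 : (A.submatrix id (Equiv.ofBijective f hbij)) = A.submatrix id f := rfl
    rw [h2, h, mul_zero] at this
    exact this
  have h3 : (toR A).det = ((A.det : ℤ) : ℝ) := by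
    have := toR_det A id
    simpa using this
  have h4 : 1 ≤ |(toR A).det| := by
    rw [h3, ← Int.cast_abs]
    exact_mod_cast Int.one_le_abs hA'
  have h5 : 0 < ∏ j, w j := Finset.prod_pos fun j _ => hw j
  rw [abs_of_pos h5]
  nlinarith

/-- The family of covolume functions. -/
noncomputable def psi (m : ℕ) (w : Fin (m + 2) → ℝ) (W : Submodule ℚ (Fin (m + 2) → ℚ)) (x : ℝ) : ℝ :=
  mm (toR (AA W) * Hm m w x)

/-- Polynomial version of `Tm`. -/
noncomputable def TX (m : ℕ) : Matrix (Fin (m + 2)) (Fin (m + 2)) ℝ[X] :=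
  fun i j => if j = 0 then X ^ (i : ℕ) else if j = 1 then C ((i : ℕ) : ℝ) * X ^ ((i : ℕ) - 1)
    else if i = j then 1 else 0

lemma TX_eval (m : ℕ) (x : ℝ) (i j : Fin (m + 2)) : (TX m i j).eval x = Tm m x i j := by
  unfold TX Tm
  split_ifs <;> simp

lemma TX_deg (m : ℕ) (i j : Fin (m + 2)) : (TX m i j).natDegree ≤ m + 1 := by
  have := i.2
  unfold TX
  split_ifs
  · rw [natDegree_X_pow]; omega
  · refine (natDegree_C_mul_X_pow_le _ _).trans (by omega)
  · simp
  · simp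

lemma psi_good (m : ℕ) (w : Fin (m + 2) → ℝ) : GoodFam (sfun ((m + 2) * (m + 1))) (psi m w) := by
  apply goodFam_of_poly
  intro W
  have hk : kk W ≤ m + 2 := by
    have := (AA_adm W).1.fintype_card_le_finrank
    simpa using this
  set MP : (Fin (kk W) → Fin (m + 2)) → Matrix (Fin (kk W)) (Fin (kk W)) ℝ[X] := fun f =>
    Matrix.of fun i l => ∑ a, C (toR (AA W) i a * w (f l)) * TX m a (f l) with hMP
  refine ⟨Fin (kk W) → Fin (m + 2), inferInstance, fun f => (MP f).det, ?_, ?_⟩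
  · intro f
    show (MP f).det.natDegree ≤ (m + 2) * (m + 1)
    rw [Matrix.det_apply]
    apply natDegree_sum_le_of_forall_le
    intro σ _
    refine (natDegree_smul_le _ _).trans ?_
    refine (natDegree_prod_le _ _).trans ?_
    have h1 : ∀ i ∈ (Finset.univ : Finset (Fin (kk W))), (MP f (σ i) i).natDegree ≤ m + 1 := by
      intro i _
      simp only [hMP, Matrix.of_apply]
      apply natDegree_sum_le_of_forall_le
      intro a _
      exact (natDegree_C_mul_le _ _).trans (TX_deg m _ _)
    refine (Finset.sum_le_card_nsmul _ _ _ h1).trans ?_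
    simp
    exact hk
  · intro x
    unfold psi mm
    congr 1
    funext f
    rw [← coe_evalRingHom, RingHom.map_det]
    congr 1
    ext i l
    rw [RingHom.mapMatrix_apply, Matrix.map_apply, Matrix.submatrix_apply, Matrix.mul_apply]
    simp only [hMP, Matrix.of_apply, coe_evalRingHom, eval_finsetSum, eval_mul, eval_C, TX_eval,
      Hm, id]
    refine Finset.sum_congr rfl fun a _ => ?_
    ring

lemma chain_card (n : ℕ) (F : Finset (Submodule ℚ (Fin n → ℚ)))
    (hF : IsChain (· ≤ ·) (F : Set (Submodule ℚ (Fin n → ℚ)))) : F.card ≤ n + 1 := by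
  have h := Finset.card_le_card_of_injOn (s := F) (t := Finset.range (n + 1))
    (fun W => Module.finrank ℚ W) ?_ ?_
  · simpa using h
  · intro W _
    have h1 := Submodule.finrank_le W
    simp only [Module.finrank_fin_fun] at h1
    simp only [Finset.coe_range, mem_Iio]
    omega
  · intro W hW Z hZ hWZ
    rcases hF.total hW hZ with h | h
    · exact Submodule.eq_of_le_of_finrank_eq h hWZ
    · exact (Submodule.eq_of_le_of_finrank_eq h hWZ.symm).symm

lemma mm_zero {n k : ℕ} (hk : k = 0) (M : Matrix (Fin k) (Fin n) ℝ) : mm M = 1 := by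
  subst hk
  apply le_antisymm
  · unfold mm
    rw [pi_norm_le_iff_of_nonneg zero_le_one]
    intro f
    simp
  · have h := le_mm M Fin.elim0
    simpa using h

lemma psi_bot (m : ℕ) (w : Fin (m + 2) → ℝ) (x : ℝ) : psi m w ⊥ x = 1 := by
  apply mm_zero
  rw [← (AA_adm (⊥ : Submodule ℚ (Fin (m + 2) → ℚ))).finrank]
  simp

/-- The weights. -/
noncomputable def wt (m : ℕ) (Q τ δ : ℝ) (j : Fin (m + 2)) : ℝ :=
  if j = 0 then τ * Q ^ (m + 1) else if j = 1 then τ / (δ * Q) else τ / Q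

lemma wt_pos (m : ℕ) (Q τ δ : ℝ) (hQ : 0 < Q) (hτ : 0 < τ) (hδ : 0 < δ) (j : Fin (m + 2)) :
    0 < wt m Q τ δ j := by
  unfold wt
  split_ifs <;> positivity

lemma wt_inv (m : ℕ) (Q τ δ : ℝ) (hQ : 1 ≤ Q) (hτ : 0 < τ) (hδ : 0 < δ) (hδ1 : δ ≤ 1)
    (j : Fin (m + 2)) : (wt m Q τ δ j)⁻¹ ≤ Q / τ := by
  have hQ0 : 0 < Q := by linarith
  unfold wt
  split_ifs
  · rw [inv_eq_one_div, div_le_div_iff₀ (by positivity) hτ]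
    have : 1 ≤ Q ^ (m + 1) := one_le_pow₀ hQ
    have h2 : 1 ≤ Q * Q ^ (m + 1) := by nlinarith
    nlinarith
  · rw [inv_div]
    apply div_le_div_of_nonneg_right _ hτ.le
    nlinarith
  · rw [inv_div]

lemma wt_prod (m : ℕ) (Q τ δ : ℝ) (hQ : 0 < Q) (hτ : 0 < τ) (hδ : δ = τ ^ (m + 2)) :
    ∏ j, wt m Q τ δ j = 1 := by
  rw [Fin.prod_univ_succ, Fin.prod_univ_succ]
  have h : ∀ i : Fin m, wt m Q τ δ i.succ.succ = τ / Q := by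
    intro i
    unfold wt
    rw [if_neg (Fin.succ_ne_zero _), if_neg]
    intro h
    have := congrArg Fin.val h
    simp at this
  simp only [h]
  rw [Finset.prod_const, Finset.card_univ, Fintype.card_fin]
  have h0 : wt m Q τ δ 0 = τ * Q ^ (m + 1) := by simp [wt]
  have h1 : wt m Q τ δ (Fin.succ 0) = τ / (δ * Q) := by simp [wt]
  rw [h0, h1, hδ, div_pow]
  field_simp
  ring

/-- The constant controlling the length of intervals. -/
noncomputable def cc (m : ℕ) (τ : ℝ) : ℝ := 4 * (m + 2) * (2 * (((m : ℝ) + 2) ^ 2 / τ) ^ (m + 2))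

lemma psi_lower (m : ℕ) (Q τ δ : ℝ) (hQ : 1 ≤ Q) (hτ : 0 < τ) (hτ1 : τ ≤ 1)
    (hδ : δ = τ ^ (m + 2)) (a b : ℝ) (ha : -1 ≤ a) (hb : b ≤ 1) (hab : a < b) (hab1 : b - a ≤ 1)
    (hc : cc m τ / Q ≤ b - a) (W : Submodule ℚ (Fin (m + 2) → ℚ)) :
    ∃ y ∈ Icc a b, 1 ≤ psi m (wt m Q τ δ) W y := by
  have hQ0 : 0 < Q := by linarith
  have hδ0 : 0 < δ := by rw [hδ]; positivity
  have hδ1 : δ ≤ 1 := by rw [hδ]; exact pow_le_one₀ hτ.le hτ1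
  have hw := wt_pos m Q τ δ hQ0 hτ hδ0
  have hadm := AA_adm W
  have hk : kk W ≤ m + 2 := by
    have := hadm.1.fintype_card_le_finrank
    simpa using this
  suffices key : ∀ (k : ℕ) (A : Matrix (Fin k) (Fin (m + 2)) ℤ), LinearIndependent ℚ (qrows A) →
      k ≤ m + 2 → ∃ y ∈ Icc a b, 1 ≤ mm (toR A * Hm m (wt m Q τ δ) y) from key _ _ hadm.1 hk
  clear hadm hk
  intro k A hadm hk
  rcases Nat.eq_zero_or_pos k with h0 | hkpos
  · exact ⟨a, ⟨le_rfl, hab.le⟩, (mm_zero h0 _).ge⟩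
  rcases Nat.lt_or_ge k (m + 2) with hlt | hge
  · obtain ⟨x, hx, h⟩ := lower_proper A hadm hkpos _ hw (Q / τ)
      (wt_inv m Q τ δ hQ hτ hδ0 hδ1) a b hab ha hb hab1
    refine ⟨x, hx, ?_⟩
    by_contra hcon
    push Not at hcon
    generalize mm (toR A * Hm m (wt m Q τ δ) x) = ψ at *
    obtain ⟨j, rfl⟩ : ∃ j, k = j + 1 := ⟨k - 1, by omega⟩
    obtain ⟨i, hi⟩ : ∃ i, m = j + i := ⟨m - j, by omega⟩
    have e1 : m + 2 - (j + 1) = i + 1 := by omega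
    rw [e1, Nat.add_sub_cancel] at h
    have hM : (1 : ℝ) ≤ (m : ℝ) + 1 := by have : (0 : ℝ) ≤ m := Nat.cast_nonneg m; linarith
    set M : ℝ := (m : ℝ) + 2 with hMdef
    have hM0 : 0 < M := by linarith
    have hw0 : wt m Q τ δ 0 = τ * Q ^ (m + 1) := by simp [wt]
    rw [hw0] at h
    set R : ℝ := (M ^ 2 / τ) ^ (m + 2) with hR
    have hb1 : 1 ≤ M ^ 2 / τ := by
      rw [le_div_iff₀ hτ]; nlinarith
    have hR1 : 1 ≤ R := one_le_pow₀ hb1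
    have hX : 2 * R ≤ Q * ((b - a) / (4 * M)) := by
      unfold cc at hc
      rw [div_le_iff₀ hQ0] at hc
      rw [← mul_div_assoc, le_div_iff₀ (by positivity)]
      linarith
    have h1 : 2 * R ≤ (Q * ((b - a) / (4 * M))) ^ (i + 1) := by
      refine hX.trans ?_
      exact le_self_pow₀ (by linarith) (by omega)
    have h2 : (Q * ((b - a) / (4 * M))) ^ (i + 1) ≤ R := by
      rw [mul_pow]
      have h3 : M ^ (j + 1) * ((τ * Q ^ (m + 1))⁻¹ * (((m : ℝ) + 1) * (Q / τ)) ^ j) * ψ ≤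
          M ^ (j + 1) * ((τ * Q ^ (m + 1))⁻¹ * (((m : ℝ) + 1) * (Q / τ)) ^ j) := by
        apply mul_le_of_le_one_right (by positivity) hcon.le
      have h4 := mul_le_mul_of_nonneg_left (h.trans h3) (show 0 ≤ Q ^ (i + 1) by positivity)
      refine h4.trans ?_
      have h5 : Q ^ (i + 1) * (M ^ (j + 1) * ((τ * Q ^ (m + 1))⁻¹ * (((m : ℝ) + 1) * (Q / τ)) ^ j))
          = (M / τ) ^ (j + 1) * ((m : ℝ) + 1) ^ j := by
        have : Q ^ (m + 1) = Q ^ (i + 1) * Q ^ j := by rw [hi]; ring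
        rw [this, mul_pow, div_pow, div_pow, pow_succ τ]
        field_simp
      rw [h5]
      have h6 : ((m : ℝ) + 1) ^ j ≤ M ^ (j + 1) := by
        calc ((m : ℝ) + 1) ^ j ≤ M ^ j := pow_le_pow_left₀ (by linarith) (by linarith) _
          _ ≤ M ^ (j + 1) := pow_le_pow_right₀ (by linarith) (by omega)
      calc (M / τ) ^ (j + 1) * ((m : ℝ) + 1) ^ j ≤ (M / τ) ^ (j + 1) * M ^ (j + 1) :=
            mul_le_mul_of_nonneg_left h6 (by positivity)
        _ = (M ^ 2 / τ) ^ (j + 1) := by rw [← mul_pow]; congr 1; ring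
        _ ≤ R := pow_le_pow_right₀ hb1 (by omega)
    linarith
  · have : k = m + 2 := by omega
    subst this
    exact ⟨a, ⟨le_rfl, hab.le⟩, (wt_prod m Q τ δ hQ0 hτ hδ).ge.trans (lower_top A hadm _ hw a)⟩

lemma marked_no_small (m : ℕ) (w : Fin (m + 2) → ℝ) (x ε τ : ℝ) (hτ : 0 < τ)
    (hτε : (m + 2) * τ < ε) (hx : Marked (psi m w) ε ∅ x) (v : Fin (m + 2) → ℤ) (hv : v ≠ 0)
    (hsmall : ∀ j, |∑ i, (v i : ℝ) * Hm m w x i j| ≤ τ) : False := by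
  classical
  obtain ⟨F, -, hF, hF1, hF2⟩ := hx
  set q : Fin (m + 2) → ℚ := fun j => (v j : ℚ) with hq
  have hq0 : q ≠ 0 := by
    intro h
    apply hv
    funext j
    have := congrFun h j
    simpa [hq] using this
  -- the predecessor
  obtain ⟨W, hqW, hW1, hWc⟩ : ∃ W : Submodule ℚ (Fin (m + 2) → ℚ), q ∉ W ∧ psi m w W x ≤ 1 ∧
      ∀ Z ∈ F, (Z ≤ W) ∨ (q ∈ Z ∧ W ≤ Z) := by
    by_cases hne : (F.filter fun W => q ∉ W).Nonempty
    · obtain ⟨W, hW, hmax⟩ := Finset.exists_max_image _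
        (fun W : Submodule ℚ (Fin (m + 2) → ℚ) => Module.finrank ℚ W) hne
      rw [Finset.mem_filter] at hW
      refine ⟨W, hW.2, (hF1 W hW.1 (by simp)).2, ?_⟩
      intro Z hZ
      rcases hF.total hZ hW.1 with h | h
      · exact Or.inl h
      · by_cases hqZ : q ∈ Z
        · exact Or.inr ⟨hqZ, h⟩
        · left
          have h1 := hmax Z (Finset.mem_filter.2 ⟨hZ, hqZ⟩)
          exact (Submodule.eq_of_le_of_finrank_le h h1).ge
    · refine ⟨⊥, by simpa using hq0, (psi_bot m w x).le, ?_⟩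
      intro Z hZ
      right
      refine ⟨?_, bot_le⟩
      by_contra hqZ
      exact hne ⟨Z, Finset.mem_filter.2 ⟨hZ, hqZ⟩⟩
  have hup := AA_sup W v hqW (Hm m w x) τ hsmall hτ.le
  change psi m w _ x ≤ ((m + 2 : ℕ) : ℝ) * τ * psi m w W x at hup
  have hlow : ε ≤ psi m w (W ⊔ Submodule.span ℚ {q}) x := by
    by_cases hmem : W ⊔ Submodule.span ℚ {q} ∈ F
    · exact (hF1 _ hmem (by simp)).1
    · apply hF2
      refine ⟨hmem, fun Z hZ => ?_⟩
      rcases hWc Z hZ with h | ⟨h1, h2⟩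
      · right; exact h.trans le_sup_left
      · left; exact sup_le h2 (by rw [Submodule.span_singleton_le_iff_mem]; exact h1)
  push_cast at hup
  have : (m + 2) * τ * psi m w W x ≤ (m + 2) * τ := mul_le_of_le_one_right (by positivity) hW1
  linarith

lemma sum_coords (m : ℕ) (w : Fin (m + 2) → ℝ) (x : ℝ) (P : ℤ[X]) (hP : P.natDegree ≤ m + 1)
    (j : Fin (m + 2)) : ∑ i : Fin (m + 2), ((P.coeff i : ℤ) : ℝ) * Hm m w x i j =
      (if j = 0 then aeval x P else if j = 1 then aeval x (derivative P) else (P.coeff j : ℝ)) *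
        w j := by
  unfold Hm Tm
  simp only [← mul_assoc]
  rw [← Finset.sum_mul]
  congr 1
  split_ifs with h0 h1
  · rw [aeval_eq_sum_range' (show P.natDegree < m + 2 by omega), Finset.sum_range]
    refine Finset.sum_congr rfl fun i _ => ?_
    simp
  · rw [aeval_def, eval₂_eq_eval_map, ← derivative_map, derivative_eval, Polynomial.sum_over_range' _ _ (m+2)]
    · rw [Finset.sum_range]
      refine Finset.sum_congr rfl fun i _ => ?_
      simp [mul_assoc]
    · exact lt_of_le_of_lt natDegree_map_le (by omega)
    · simp
  · simp

/-- The quantitative nondivergence estimate for polynomials. -/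
lemma km (m : ℕ) : ∃ δ > (0 : ℝ), ∃ c > (0 : ℝ), ∀ Q : ℝ, 1 ≤ Q → ∀ a b : ℝ,
    -(1 / 2) ≤ a → b ≤ 1 / 2 → c / Q ≤ b - a →
    volume ({x : ℝ | ∃ P : ℤ[X], P ≠ 0 ∧ P.natDegree ≤ m + 1 ∧
            (∀ j, |(P.coeff j : ℝ)| ≤ Q) ∧
            |aeval x P| < (Q ^ (m + 1))⁻¹ ∧
            |aeval x (derivative P)| < δ * Q} ∩ Icc a b) ≤ ENNReal.ofReal ((1 / 16) * (b - a)) := by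
  obtain ⟨ε, hε, hε1, H⟩ := nondiv (S := Submodule ℚ (Fin (m + 2) → ℚ))
    (sfun ((m + 2) * (m + 1))) (fun η hη => sfun_pos _ η hη) (m + 3)
    (fun F hF => chain_card (m + 2) F hF) (m + 3) (1 / 16) (by norm_num) 1 one_pos le_rfl
  have hm0 : (0 : ℝ) ≤ m := Nat.cast_nonneg m
  set τ : ℝ := ε / (2 * (m + 2)) with hτ
  have hτ0 : 0 < τ := by positivity
  have hτε : ((m : ℝ) + 2) * τ = ε / 2 := by rw [hτ]; field_simp
  have hτ1 : τ ≤ 1 := by nlinarith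
  set δ : ℝ := τ ^ (m + 2) with hδ
  have hδ0 : 0 < δ := by positivity
  have hcc : 0 < cc m τ := by unfold cc; positivity
  refine ⟨δ, hδ0, cc m τ, hcc, ?_⟩
  intro Q hQ a b ha hb hc
  have hQ0 : 0 < Q := by linarith
  have hab : a < b := by
    have : 0 < cc m τ / Q := by positivity
    linarith
  refine (measure_mono ?_).trans (H (psi m (wt m Q τ δ)) (psi_good m _) ∅ (by simp) (by simp) a b hab
    (fun W _ => psi_lower m Q τ δ hQ hτ0 hτ1 hδ a b (by linarith) (by linarith) hab (by linarith) hc W))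
  rintro x ⟨⟨P, hP0, hPd, hPh, hPx, hPx'⟩, hx⟩
  refine ⟨?_, hx⟩
  intro hmark
  apply marked_no_small m _ x ε τ hτ0 (by linarith) hmark (fun i => P.coeff i)
  · intro h
    apply hP0
    ext t
    by_cases ht : t < m + 2
    · exact congrFun h ⟨t, ht⟩
    · rw [coeff_eq_zero_of_natDegree_lt (by omega)]; simp
  · intro j
    rw [sum_coords m _ x P hPd j, abs_mul, abs_of_pos (wt_pos m Q τ δ hQ0 hτ0 hδ0 j)]
    unfold wt
    split_ifs
    · calc _ ≤ (Q ^ (m + 1))⁻¹ * (τ * Q ^ (m + 1)) :=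
          mul_le_mul_of_nonneg_right hPx.le (by positivity)
        _ = τ := by field_simp
    · calc _ ≤ (δ * Q) * (τ / (δ * Q)) :=
          mul_le_mul_of_nonneg_right hPx'.le (by positivity)
        _ = τ := by field_simp
    · calc _ ≤ Q * (τ / Q) :=
          mul_le_mul_of_nonneg_right (hPh _) (by positivity)
        _ = τ := by field_simp

lemma cover_int (T : Set ℤ) (s : ℤ → Set ℝ) (L K : ℝ) (hL : 0 ≤ L) (hK : 0 ≤ K)
    (hT : ∀ a ∈ T, ∀ b ∈ T, (a : ℝ) - b ≤ L) (hs : ∀ a ∈ T, volume (s a) ≤ ENNReal.ofReal K) :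
    volume (⋃ a ∈ T, s a) ≤ ENNReal.ofReal ((L + 1) * K) := by
  rcases T.eq_empty_or_nonempty with rfl | ⟨t, ht⟩
  · simp
  have hfl : ∀ a ∈ T, ∀ b ∈ T, a - b ≤ ⌊L⌋ := by
    intro a ha b hb
    rw [Int.le_floor]
    push_cast
    exact hT a ha b hb
  have hfin : T.Finite := by
    apply (Set.finite_Icc (t - ⌊L⌋) (t + ⌊L⌋)).subset
    intro a ha
    have h1 := hfl a ha t ht
    have h2 := hfl t ht a ha
    exact ⟨by linarith, by linarith⟩
  obtain ⟨z, hz, hmin⟩ := Set.exists_min_image T id hfin ⟨t, ht⟩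
  have hsub : T ⊆ ((Finset.Icc z (z + ⌊L⌋) : Finset ℤ) : Set ℤ) := by
    intro a ha
    have h1 := hfl a ha z hz
    have h2 := hmin a ha
    simp only [id] at h2
    simp only [Finset.coe_Icc, mem_Icc]
    exact ⟨h2, by linarith⟩
  have hcard : hfin.toFinset.card ≤ (⌊L⌋ + 1).toNat := by
    have h := Finset.card_le_card (s := hfin.toFinset) (t := Finset.Icc z (z + ⌊L⌋)) (by
      intro a ha
      have := hsub (hfin.mem_toFinset.1 ha)
      exact_mod_cast this)
    rw [Int.card_Icc] at h
    convert h using 2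
    ring
  have hcardR : (hfin.toFinset.card : ℝ) ≤ L + 1 := by
    have h0 : 0 ≤ ⌊L⌋ := Int.floor_nonneg.2 hL
    have h1 : (hfin.toFinset.card : ℤ) ≤ ⌊L⌋ + 1 := by omega
    have h2 : ((hfin.toFinset.card : ℤ) : ℝ) ≤ ((⌊L⌋ + 1 : ℤ) : ℝ) := by exact_mod_cast h1
    push_cast at h2
    have := Int.floor_le L
    linarith
  have hU : (⋃ a ∈ T, s a) = ⋃ a ∈ hfin.toFinset, s a := by simp
  rw [hU]
  refine (measure_biUnion_finset_le _ _).trans ?_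
  refine (Finset.sum_le_sum (fun a ha => hs a (hfin.mem_toFinset.1 ha))).trans ?_
  rw [Finset.sum_const, nsmul_eq_mul, ← ENNReal.ofReal_natCast, ← ENNReal.ofReal_mul (by positivity)]
  apply ENNReal.ofReal_le_ofReal
  exact mul_le_mul_of_nonneg_right hcardR hK

lemma pmvt (f : ℝ[X]) (a b x y : ℝ) (hx : x ∈ Icc a b) (hy : y ∈ Icc a b) :
    ∃ c ∈ Icc a b, f.eval x - f.eval y = f.derivative.eval c * (x - y) := by
  have key : ∀ u v, u ∈ Icc a b → v ∈ Icc a b → u < v →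
      ∃ c ∈ Icc a b, f.eval v - f.eval u = f.derivative.eval c * (v - u) := by
    intro u v hu hv huv
    obtain ⟨c, hc, h⟩ := exists_deriv_eq_slope (fun t => f.eval t) huv f.continuous.continuousOn
      f.differentiable.differentiableOn
    refine ⟨c, ⟨hu.1.trans hc.1.le, hc.2.le.trans hv.2⟩, ?_⟩
    rw [Polynomial.deriv] at h
    rw [h]
    have : v - u ≠ 0 := by linarith
    field_simp
  rcases lt_trichotomy x y with h | h | h
  · obtain ⟨c, hc, h⟩ := key x y hx hy h
    exact ⟨c, hc, by linarith⟩
  · subst h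
    exact ⟨x, hx, by simp⟩
  · exact key y x hy hx h

lemma inner_count (f : ℝ[X]) (a b κ D r : ℝ) (hD : 0 < D) (hr : 0 < r) (hr1 : r ≤ 1)
    (hκ : κ ≤ D / 4) (hDab : 12 ≤ D * (b - a))
    (hf : ∀ x ∈ Icc a b, ∀ y ∈ Icc a b, |f.derivative.eval x - f.derivative.eval y| ≤ κ) :
    volume ({x | ∃ z : ℤ, |f.eval x + z| < r ∧ D ≤ |f.derivative.eval x|} ∩ Icc a b) ≤
      ENNReal.ofReal (4 * r * (b - a)) := by
  rcases ({x | ∃ z : ℤ, |f.eval x + z| < r ∧ D ≤ |f.derivative.eval x|} ∩ Icc a b).eq_empty_or_nonempty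
    with h | ⟨y, ⟨z₀, -, hy⟩, hyI⟩
  · rw [h]; simp
  have hab : 0 < b - a := by
    by_contra h
    push Not at h
    nlinarith
  set Y := |f.derivative.eval y| with hY
  have hY0 : 0 < Y := by linarith
  have hlo : ∀ x ∈ Icc a b, 3 * Y / 4 ≤ |f.derivative.eval x| := by
    intro x hx
    have h1 := hf y hyI x hx
    have h2 := abs_sub_abs_le_abs_sub (f.derivative.eval y) (f.derivative.eval x)
    linarith
  have hhi : ∀ x ∈ Icc a b, |f.derivative.eval x| ≤ 5 * Y / 4 := by
    intro x hx
    have h1 := hf x hx y hyI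
    have h2 := abs_sub_abs_le_abs_sub (f.derivative.eval x) (f.derivative.eval y)
    linarith
  set s : ℤ → Set ℝ := fun z => {x | x ∈ Icc a b ∧ |f.eval x + z| < r} with hs
  set T : Set ℤ := {z | (s z).Nonempty} with hT
  have hsub : ({x | ∃ z : ℤ, |f.eval x + z| < r ∧ D ≤ |f.derivative.eval x|} ∩ Icc a b) ⊆
      ⋃ z ∈ T, s z := by
    rintro x ⟨⟨z, h1, h2⟩, h3⟩
    have : x ∈ s z := ⟨h3, h1⟩
    exact Set.mem_biUnion (show z ∈ T from ⟨x, this⟩) this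
  refine (measure_mono hsub).trans ?_
  refine (cover_int T s (5 * Y / 4 * (b - a) + 2 * r) (8 * r / (3 * Y)) (by positivity)
    (by positivity) ?_ ?_).trans ?_
  · rintro z ⟨x, hx, hxz⟩ z' ⟨x', hx', hxz'⟩
    obtain ⟨c, hc, h⟩ := pmvt f a b x' x hx' hx
    have h1 : |f.eval x' - f.eval x| ≤ 5 * Y / 4 * (b - a) := by
      rw [h, abs_mul]
      apply mul_le_mul (hhi c hc) _ (abs_nonneg _) (by positivity)
      rw [abs_le]
      constructor <;> linarith [hx.1, hx.2, hx'.1, hx'.2]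
    have h2 := (abs_lt.1 hxz).2
    have h3 := (abs_lt.1 hxz').1
    have h4 := (abs_le.1 h1).2
    linarith
  · intro z _
    refine (Real.volume_le_diam _).trans ?_
    apply Metric.ediam_le
    rintro x ⟨hx, hxz⟩ x' ⟨hx', hxz'⟩
    rw [edist_dist, Real.dist_eq]
    apply ENNReal.ofReal_le_ofReal
    obtain ⟨c, hc, h⟩ := pmvt f a b x x' hx hx'
    have h1 : |f.eval x - f.eval x'| ≤ 2 * r := by
      have := abs_lt.1 hxz
      have := abs_lt.1 hxz'
      rw [abs_le]; constructor <;> linarith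
    rw [h, abs_mul] at h1
    have h2 := hlo c hc
    rw [le_div_iff₀ (by positivity)]
    have h3 : 3 * Y / 4 * |x - x'| ≤ 2 * r :=
      (mul_le_mul_of_nonneg_right h2 (abs_nonneg _)).trans h1
    linarith
  · apply ENNReal.ofReal_le_ofReal
    have h1 : 12 ≤ Y * (b - a) := hDab.trans (mul_le_mul_of_nonneg_right hy hab.le)
    have h2 : 5 * Y / 4 * (b - a) + 2 * r + 1 ≤ 3 / 2 * (Y * (b - a)) := by linarith
    refine (mul_le_mul_of_nonneg_right h2 (by positivity)).trans ?_
    apply le_of_eq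
    field_simp
    ring

lemma outer_count (g : ℝ[X]) (a b κ D E r : ℝ) (hD : 0 < D) (hE : 0 < E) (hr : 0 < r) (hr1 : r ≤ 1)
    (hκ0 : 0 ≤ κ) (hκ : κ ≤ D / 4) (hDab : 12 ≤ D * (b - a))
    (hg : ∀ x ∈ Icc a b, ∀ y ∈ Icc a b, |g.derivative.eval x - g.derivative.eval y| ≤ κ) :
    volume ({x | ∃ y z : ℤ, |g.eval x + y * x + z| < r ∧ D ≤ |g.derivative.eval x + y| ∧
      |g.derivative.eval x + y| < E} ∩ Icc a b) ≤
      ENNReal.ofReal ((2 * E + κ + 1) * (4 * r * (b - a))) := by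
  have hab : 0 < b - a := by
    by_contra h
    push Not at h
    nlinarith
  set s : ℤ → Set ℝ := fun y => {x | ∃ z : ℤ, |g.eval x + y * x + z| < r ∧
    D ≤ |g.derivative.eval x + y| ∧ |g.derivative.eval x + y| < E} ∩ Icc a b with hs
  set T : Set ℤ := {y | (s y).Nonempty} with hT
  have hsub : ({x | ∃ y z : ℤ, |g.eval x + y * x + z| < r ∧ D ≤ |g.derivative.eval x + y| ∧
      |g.derivative.eval x + y| < E} ∩ Icc a b) ⊆ ⋃ y ∈ T, s y := by
    rintro x ⟨⟨y, z, h⟩, h3⟩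
    have : x ∈ s y := ⟨⟨z, h⟩, h3⟩
    exact Set.mem_biUnion (show y ∈ T from ⟨x, this⟩) this
  refine (measure_mono hsub).trans ?_
  apply cover_int T s _ _ (by positivity) (by positivity)
  · rintro y ⟨x, ⟨z, -, -, h⟩, hx⟩ y' ⟨x', ⟨z', -, -, h'⟩, hx'⟩
    have h1 := (abs_le.1 (hg x' hx' x hx)).2
    have h2 := (abs_lt.1 h).2
    have h3 := (abs_lt.1 h').1
    linarith
  · intro y _
    have hd : ∀ x, (g + C (y : ℝ) * X).derivative.eval x = g.derivative.eval x + y := by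
      intro x; simp
    have he : ∀ x, (g + C (y : ℝ) * X).eval x = g.eval x + y * x := by
      intro x; simp
    refine (measure_mono ?_).trans (inner_count (g + C (y : ℝ) * X) a b κ D r hD hr hr1 hκ hDab ?_)
    · rintro x ⟨⟨z, h1, h2, -⟩, hx⟩
      refine ⟨⟨z, ?_, ?_⟩, hx⟩
      · rw [he]; exact h1
      · rw [hd]; exact h2
    · intro x hx x' hx'
      rw [hd, hd]
      have := hg x hx x' hx'
      convert this using 2
      ring

lemma abs_pow_sub_le (x y : ℝ) (hx : |x| ≤ 1) (hy : |y| ≤ 1) (k : ℕ) :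
    |x ^ k - y ^ k| ≤ k * |x - y| := by
  induction k with
  | zero => simp
  | succ k ih =>
    have : x ^ (k + 1) - y ^ (k + 1) = x * (x ^ k - y ^ k) + (x - y) * y ^ k := by ring
    rw [this]
    refine (abs_add_le _ _).trans ?_
    rw [abs_mul, abs_mul, abs_pow]
    have h1 : |x| * |x ^ k - y ^ k| ≤ |x ^ k - y ^ k| :=
      mul_le_of_le_one_left (abs_nonneg _) hx
    have h2 : |x - y| * |y| ^ k ≤ |x - y| :=
      mul_le_of_le_one_right (abs_nonneg _) (pow_le_one₀ (abs_nonneg _) hy)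
    push_cast
    linarith

/-- The part of a polynomial of degree at least two. -/
noncomputable def gp {m : ℕ} (u : Fin m → ℤ) : ℝ[X] :=
  ∑ i : Fin m, C (u i : ℝ) * X ^ ((i : ℕ) + 2)

lemma gp_eval {m : ℕ} (u : Fin m → ℤ) (x : ℝ) :
    (gp u).eval x = ∑ i : Fin m, (u i : ℝ) * x ^ ((i : ℕ) + 2) := by
  unfold gp
  rw [eval_finsetSum]
  refine Finset.sum_congr rfl fun i _ => ?_
  rw [eval_mul, eval_C, eval_pow, eval_X]

lemma gp_deriv {m : ℕ} (u : Fin m → ℤ) (x : ℝ) :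
    (gp u).derivative.eval x = ∑ i : Fin m, (u i : ℝ) * (((i : ℕ) + 2 : ℕ) * x ^ ((i : ℕ) + 1)) := by
  unfold gp
  rw [derivative_sum, eval_finsetSum]
  refine Finset.sum_congr rfl fun i _ => ?_
  rw [derivative_C_mul, eval_mul, eval_C, derivative_X_pow, eval_mul, eval_C, eval_pow, eval_X]
  congr 2

lemma gp_osc {m : ℕ} (u : Fin m → ℤ) (Q : ℝ) (hu : ∀ i, |(u i : ℝ)| ≤ Q) (hQ : 0 ≤ Q) (x y : ℝ)
    (hx : |x| ≤ 1) (hy : |y| ≤ 1) :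
    |(gp u).derivative.eval x - (gp u).derivative.eval y| ≤ ((m : ℝ) + 1) ^ 3 * Q * |x - y| := by
  rw [gp_deriv, gp_deriv, ← Finset.sum_sub_distrib]
  refine (Finset.abs_sum_le_sum_abs _ _).trans ?_
  have hm0 : (0 : ℝ) ≤ m := Nat.cast_nonneg m
  have h : ∀ i ∈ (Finset.univ : Finset (Fin m)), |(u i : ℝ) * (((i : ℕ) + 2 : ℕ) * x ^ ((i : ℕ) + 1)) -
      (u i : ℝ) * (((i : ℕ) + 2 : ℕ) * y ^ ((i : ℕ) + 1))| ≤ Q * (((m : ℝ) + 1) * (((m : ℝ) + 1) * |x - y|)) := by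
    intro i _
    rw [← mul_sub, ← mul_sub, abs_mul, abs_mul, Nat.abs_cast]
    have hi : (((i : ℕ) + 2 : ℕ) : ℝ) ≤ m + 1 := by
      have := i.2
      have h : (i : ℕ) + 2 ≤ m + 1 := by omega
      exact_mod_cast h
    have hi' : (((i : ℕ) + 1 : ℕ) : ℝ) ≤ m + 1 := by
      have := i.2
      have h : (i : ℕ) + 1 ≤ m + 1 := by omega
      exact_mod_cast h
    have h1 := (abs_pow_sub_le x y hx hy ((i : ℕ) + 1)).trans
      (mul_le_mul_of_nonneg_right hi' (abs_nonneg _))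
    apply mul_le_mul (hu i) _ (by positivity) hQ
    exact mul_le_mul hi h1 (abs_nonneg _) (by positivity)
  refine (Finset.sum_le_card_nsmul _ _ _ h).trans ?_
  rw [Finset.card_univ, Fintype.card_fin, nsmul_eq_mul]
  have : 0 ≤ Q * (((m : ℝ) + 1) * (((m : ℝ) + 1) * |x - y|)) := by positivity
  nlinarith

lemma pow_count (m : ℕ) (Q : ℝ) (hQ : 1 ≤ Q) (hm : (m : ℝ) ≤ Q) :
    (2 * Q + 1) ^ m ≤ 2 * (2 * Q) ^ m := by
  have h := one_add_mul_le_pow (a := -(1 / (2 * Q + 1))) (by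
    have : 1 / (2 * Q + 1) ≤ 1 := by rw [div_le_one (by linarith)]; linarith
    linarith) m
  have e : 1 + -(1 / (2 * Q + 1)) = 2 * Q / (2 * Q + 1) := by
    have : 2 * Q + 1 ≠ 0 := by linarith
    field_simp
    ring
  rw [e, div_pow] at h
  have h2 : (m : ℝ) * (1 / (2 * Q + 1)) ≤ 1 / 2 := by
    rw [mul_one_div, div_le_iff₀ (by linarith)]; linarith
  have h3 : 1 / 2 ≤ (2 * Q) ^ m / (2 * Q + 1) ^ m := by linarith
  rw [le_div_iff₀ (by positivity)] at h3
  linarith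

lemma poly_split (m : ℕ) (P : ℤ[X]) (hP : P.natDegree ≤ m + 1) (x : ℝ) :
    aeval x P = (gp fun i : Fin m => P.coeff ((i : ℕ) + 2)).eval x + (P.coeff 1 : ℝ) * x +
      (P.coeff 0 : ℝ) ∧
    aeval x (derivative P) = (gp fun i : Fin m => P.coeff ((i : ℕ) + 2)).derivative.eval x +
      (P.coeff 1 : ℝ) := by
  have h0 := sum_coords m (fun _ => 1) x P hP 0
  have h1 := sum_coords m (fun _ => 1) x P hP 1
  rw [Fin.sum_univ_succ, Fin.sum_univ_succ] at h0 h1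
  simp [Hm, Tm] at h0 h1
  rw [gp_eval, gp_deriv]
  constructor
  · rw [← h0]
    push_cast
    ring
  · rw [← h1]
    push_cast
    rw [add_comm]
    congr 1
    refine Finset.sum_congr rfl fun i _ => ?_
    ring

/-- The count for polynomials whose derivative is neither too small nor too large. -/
lemma trivial_count (m Q : ℕ) (δ c : ℝ) (hδ : 0 < δ) (hc : 0 < c) (hδc : 12 ≤ δ * c)
    (hQ1 : 1 ≤ Q) (hQm : m ≤ Q) (hQ2 : 2 * c * ((m : ℝ) + 1) ^ 3 ≤ δ * Q / 4)
    (E : ℝ) (hE : E = ((2 : ℝ) ^ (m + 1 + 8) * ((m + 1 : ℕ) : ℝ) ^ 2)⁻¹ * (Q : ℝ))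
    (hQ3 : 2 * c * ((m : ℝ) + 1) ^ 3 + 1 ≤ 2 * E)
    (a b : ℝ) (ha : -(1 / 2) ≤ a) (hb : b ≤ 1 / 2) (h1 : c / Q ≤ b - a) (h2 : b - a ≤ 2 * (c / Q)) :
    volume ({x : ℝ | ∃ P : ℤ[X], P.natDegree ≤ m + 1 ∧
            (∀ j, |P.coeff j| ≤ (Q : ℤ)) ∧
            |aeval x P| < ((Q : ℝ) ^ (m + 1))⁻¹ ∧
            δ * Q ≤ |aeval x (derivative P)| ∧
            |aeval x (derivative P)| < E} ∩ Icc a b) ≤ ENNReal.ofReal ((1 / 16) * (b - a)) := by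
  have hQR : (1 : ℝ) ≤ Q := by exact_mod_cast hQ1
  have hQ0 : (0 : ℝ) < Q := by linarith
  have hm0 : (0 : ℝ) ≤ m := Nat.cast_nonneg m
  have hE0 : 0 < E := by rw [hE]; positivity
  have hab : 0 < b - a := lt_of_lt_of_le (by positivity) h1
  set r : ℝ := ((Q : ℝ) ^ (m + 1))⁻¹ with hr
  have hr0 : 0 < r := by positivity
  have hr1 : r ≤ 1 := inv_le_one_of_one_le₀ (one_le_pow₀ hQR)
  set κ : ℝ := 2 * c * ((m : ℝ) + 1) ^ 3 with hκ
  set U : Finset (Fin m → ℤ) := Fintype.piFinset fun _ => Finset.Icc (-(Q : ℤ)) Q with hU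
  set s : (Fin m → ℤ) → Set ℝ := fun u => {x | ∃ y z : ℤ, |(gp u).eval x + y * x + z| < r ∧
    δ * Q ≤ |(gp u).derivative.eval x + y| ∧ |(gp u).derivative.eval x + y| < E} ∩ Icc a b with hs
  have hsub : ({x : ℝ | ∃ P : ℤ[X], P.natDegree ≤ m + 1 ∧ (∀ j, |P.coeff j| ≤ (Q : ℤ)) ∧
            |aeval x P| < r ∧ δ * Q ≤ |aeval x (derivative P)| ∧
            |aeval x (derivative P)| < E} ∩ Icc a b) ⊆ ⋃ u ∈ U, s u := by
    rintro x ⟨⟨P, hPd, hPh, h3, h4, h5⟩, hx⟩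
    obtain ⟨e1, e2⟩ := poly_split m P hPd x
    rw [e1] at h3
    rw [e2] at h4 h5
    refine Set.mem_biUnion (x := fun i : Fin m => P.coeff ((i : ℕ) + 2)) ?_
      ⟨⟨P.coeff 1, P.coeff 0, h3, h4, h5⟩, hx⟩
    simp only [hU, Finset.mem_coe, Fintype.mem_piFinset, Finset.mem_Icc]
    intro i
    exact abs_le.1 (hPh _)
  refine (measure_mono hsub).trans ((measure_biUnion_finset_le _ _).trans ?_)
  have hbound : ∀ u ∈ U, volume (s u) ≤ ENNReal.ofReal ((2 * E + κ + 1) * (4 * r * (b - a))) := by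
    intro u hu
    simp only [hU, Fintype.mem_piFinset, Finset.mem_Icc] at hu
    have huR : ∀ i, |(u i : ℝ)| ≤ Q := by
      intro i
      have := abs_le.2 (hu i)
      exact_mod_cast this
    refine outer_count (gp u) a b κ (δ * Q) E r (by positivity) hE0 hr0 hr1 (by positivity) hQ2 ?_ ?_
    · have h3 : δ * Q * (c / Q) ≤ δ * Q * (b - a) := mul_le_mul_of_nonneg_left h1 (by positivity)
      have h4 : δ * Q * (c / Q) = δ * c := by field_simp
      linarith
    · intro x hx y hy
      have hx1 : |x| ≤ 1 := abs_le.2 ⟨by linarith [hx.1], by linarith [hx.2]⟩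
      have hy1 : |y| ≤ 1 := abs_le.2 ⟨by linarith [hy.1], by linarith [hy.2]⟩
      refine (gp_osc u Q huR hQ0.le x y hx1 hy1).trans ?_
      have h3 : |x - y| ≤ 2 * (c / Q) :=
        (abs_le.2 ⟨by linarith [hx.1, hy.2], by linarith [hx.2, hy.1]⟩ : |x - y| ≤ b - a).trans h2
      refine (mul_le_mul_of_nonneg_left h3 (by positivity)).trans ?_
      apply le_of_eq
      rw [hκ]
      field_simp
  refine (Finset.sum_le_sum hbound).trans ?_
  rw [Finset.sum_const, nsmul_eq_mul, ← ENNReal.ofReal_natCast, ← ENNReal.ofReal_mul (by positivity)]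
  apply ENNReal.ofReal_le_ofReal
  have hcard : (U.card : ℝ) = (2 * Q + 1) ^ m := by
    rw [hU, Fintype.card_piFinset]
    simp only [Int.card_Icc, Finset.prod_const, Finset.card_univ, Fintype.card_fin]
    have : ((Q : ℤ) + 1 - -(Q : ℤ)).toNat = 2 * Q + 1 := by omega
    rw [this]
    push_cast
    ring
  rw [hcard]
  have hp := pow_count m Q hQR (by exact_mod_cast hQm)
  calc (2 * (Q : ℝ) + 1) ^ m * ((2 * E + κ + 1) * (4 * r * (b - a)))
      ≤ (2 * (2 * (Q : ℝ)) ^ m) * ((4 * E) * (4 * r * (b - a))) := by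
        apply mul_le_mul hp _ (by positivity) (by positivity)
        apply mul_le_mul_of_nonneg_right _ (by positivity)
        linarith
    _ = (1 / 16) * (b - a) * (((m + 1 : ℕ) : ℝ) ^ 2)⁻¹ := by
        rw [hE, hr, mul_pow, pow_add, pow_succ (2 : ℝ) m, pow_succ (Q : ℝ) m]
        field_simp
        norm_num
    _ ≤ (1 / 16) * (b - a) := by
        apply mul_le_of_le_one_right (by positivity)
        apply inv_le_one_of_one_le₀
        apply one_le_pow₀
        exact_mod_cast Nat.le_add_left 1 m

end SmallPoly

theorem measure_of_small_polynomial_small_derivative_set (n : ℕ) (hn : 1 ≤ n) :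
    ∃ c₁₃ > (0 : ℝ), ∃ Q₀ : ℕ, ∀ Q : ℕ, Q₀ < Q →
      ∀ a b : ℝ, Set.Icc a b ⊆ Set.Icc (-(1/2) : ℝ) (1/2) →
        c₁₃ / (Q : ℝ) < b - a →
        MeasureTheory.volume
          {x : ℝ | x ∈ Set.Icc a b ∧ ∃ P : ℤ[X], P ≠ 0 ∧ P.natDegree ≤ n ∧
            (∀ j, |P.coeff j| ≤ (Q : ℤ)) ∧
            |Polynomial.aeval x P| < ((Q : ℝ) ^ n)⁻¹ ∧
            |Polynomial.aeval x (derivative P)| < ((2 : ℝ) ^ (n + 8) * (n : ℝ) ^ 2)⁻¹ * (Q : ℝ)}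
        < ENNReal.ofReal ((b - a) / 4) := by
  obtain ⟨m, rfl⟩ : ∃ m, n = m + 1 := ⟨n - 1, by omega⟩
  obtain ⟨δ, hδ, c₀, hc₀, hkm⟩ := SmallPoly.km m
  set c : ℝ := max c₀ (12 / δ) with hc
  have hc0 : 0 < c := lt_of_lt_of_le hc₀ (le_max_left _ _)
  have hδc : 12 ≤ δ * c := by
    have h : 12 / δ ≤ c := le_max_right _ _
    rw [div_le_iff₀ hδ] at h
    linarith
  set e : ℝ := ((2 : ℝ) ^ (m + 1 + 8) * ((m + 1 : ℕ) : ℝ) ^ 2)⁻¹ with he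
  have he0 : 0 < e := by positivity
  set κ : ℝ := 2 * c * ((m : ℝ) + 1) ^ 3 with hκ
  obtain ⟨N₁, hN₁⟩ := exists_nat_ge (4 * κ / δ)
  obtain ⟨N₂, hN₂⟩ := exists_nat_ge ((κ + 1) / (2 * e))
  refine ⟨c, hc0, max (max N₁ N₂) (m + 1), ?_⟩
  intro Q hQ a b hI hab
  have hQa : N₁ < Q := lt_of_le_of_lt ((le_max_left _ _).trans (le_max_left _ _)) hQ
  have hQb : N₂ < Q := lt_of_le_of_lt ((le_max_right _ _).trans (le_max_left _ _)) hQ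
  have hQc : m + 1 < Q := lt_of_le_of_lt (le_max_right _ _) hQ
  have hQ1 : 1 ≤ Q := by omega
  have hQR : (1 : ℝ) ≤ Q := by exact_mod_cast hQ1
  have hQ0 : (0 : ℝ) < Q := by linarith
  have hcQ : 0 < c / Q := by positivity
  have hlt : a < b := by linarith
  have haI := hI (Set.left_mem_Icc.2 hlt.le)
  have hbI := hI (Set.right_mem_Icc.2 hlt.le)
  have hQ2 : κ ≤ δ * Q / 4 := by
    have h : 4 * κ / δ ≤ Q := hN₁.trans (by exact_mod_cast hQa.le)
    rw [div_le_iff₀ hδ] at h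
    linarith
  have hQ3 : κ + 1 ≤ 2 * (e * Q) := by
    have h : (κ + 1) / (2 * e) ≤ Q := hN₂.trans (by exact_mod_cast hQb.le)
    rw [div_le_iff₀ (by positivity)] at h
    linarith
  set E₁ : Set ℝ := {x : ℝ | ∃ P : ℤ[X], P ≠ 0 ∧ P.natDegree ≤ m + 1 ∧
            (∀ j, |(P.coeff j : ℝ)| ≤ Q) ∧
            |aeval x P| < ((Q : ℝ) ^ (m + 1))⁻¹ ∧
            |aeval x (derivative P)| < δ * Q} with hE₁
  set E₂ : Set ℝ := {x : ℝ | ∃ P : ℤ[X], P.natDegree ≤ m + 1 ∧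
            (∀ j, |P.coeff j| ≤ (Q : ℤ)) ∧
            |aeval x P| < ((Q : ℝ) ^ (m + 1))⁻¹ ∧
            δ * Q ≤ |aeval x (derivative P)| ∧
            |aeval x (derivative P)| < e * Q} with hE₂
  have hmain : MeasureTheory.volume ((E₁ ∪ E₂) ∩ Set.Icc a b) ≤ ENNReal.ofReal (1 / 8 * (b - a)) := by
    apply SmallPoly.subdivide (E₁ ∪ E₂) (1 / 8) (c / Q) (by norm_num) hcQ a b
    · intro a' b' ha' hb' h1 h2
      rw [Set.union_inter_distrib_right]
      refine (MeasureTheory.measure_union_le _ _).trans ?_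
      have k1 := hkm Q hQR a' b' (by linarith [haI.1]) (by linarith [hbI.2])
        ((div_le_div_of_nonneg_right (le_max_left _ _) hQ0.le).trans h1)
      have k2 := SmallPoly.trivial_count m Q δ c hδ hc0 hδc hQ1 (by omega) hQ2 (e * Q) rfl hQ3 a' b'
        (by linarith [haI.1]) (by linarith [hbI.2]) h1 h2
      refine (add_le_add k1 k2).trans ?_
      rw [← ENNReal.ofReal_add (by nlinarith) (by nlinarith)]
      apply ENNReal.ofReal_le_ofReal
      linarith
    · exact hab.le
  refine lt_of_le_of_lt ((MeasureTheory.measure_mono ?_).trans hmain) ?_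
  · rintro x ⟨hx, P, hP0, hPd, hPh, h1, h2⟩
    refine ⟨?_, hx⟩
    by_cases h : |aeval x (derivative P)| < δ * Q
    · left
      refine ⟨P, hP0, hPd, ?_, h1, h⟩
      intro j
      exact_mod_cast hPh j
    · right
      exact ⟨P, hPd, hPh, h1, not_lt.1 h, h2⟩
  · rw [ENNReal.ofReal_lt_ofReal_iff (by linarith)]
    linarith
end
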